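/- arXiv:1909.07322 — 4 statements merged into one kernel-verified Lean document; each statement's English description precedes it below -/
import Mathlib

section
/- There exist constants C < ∞ and ζ < ∞, depending only on β, g₀ and the (compact) support of the law of ω_x² — and in particular independent of g, of L, and of the disorder realization — such that, almost surely, for any two polynomials u, v on ℝ^{2L} with ⟨u⟩_β = ⟨v⟩_β = 0, one has |⟨u v⟩_β| ≤ C e^{−d(u,v)/ζ} ⟨∇u·∇u⟩_β^{1/2} ⟨∇v·∇v⟩_β^{1/2}. -/
/-!
The Gibbs measure of the chain is log-concave, uniformly in the size, the anharmonicity and the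
disorder, and its variables `q_0, …, q_{L-1}, p_0, …, p_{L-1}`, taken in this order, form a chain
with nearest-neighbour bilinear couplings `c_k z_k z_{k+1}`, where `c_k = β g₀` between successive
positions and `c_k = 0` elsewhere. The one-variable potential of each variable is strongly convex
with a constant that exceeds the sum of its couplings by `δ = β min(ω_-², 1)`; the quartic terms
only help.

The variables are integrated out one at a time. Let `U` and `V` be the conditional expectations of
`u` and `v` given all variables but the first, `x`. Then
`Cov(u, v) = E[Cov_x(u, v)] + Cov(U, V)`. The inner covariance is bounded by the one-dimensional
Poincaré inequality (`NiceV.poincare`) with constant `δ + c_0`. The law of the remaining variables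
is again a chain of the same kind with the same margin `δ` (`ChainOK.marg_ok`), because the
marginalisation costs the next variable a convexity `c_0² Var(x) ≤ c_0² / (δ + c_0) ≤ c_0`.
The gradient of `U` is the conditional expectation of that of `u`, except that the next variable
receives the extra term `c_0 Cov_x(u, x)`, whose square is at most
`(c_0 / (δ + c_0))² E_x[(∂_x u)²]` (`CD.condD_sq`).

Thus a gradient is transported to the next site with a factor `r = c / (δ + c) < 1`, and induction
on the length gives (`ChainOK.cov_le`)
`|Cov(u, v)| ≤ (K / 2) ∑_k (W_k E[(∂_k u)²] + W_k⁻¹ E[(∂_k v)²])` for every family of positive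
weights whose ratios between coupled neighbours are at most `r⁻¹`. Choosing
`W_k = w r^{-dist(k, S)}`, with `S` the support of `u`, and optimising over `w > 0` gives the
decay rate `r^{d/2}`.
-/

open MeasureTheory Finset

/-- Coordinate access (sites relabelled `0,…,L−1`), `0` out of range. -/
noncomputable def cval {L : ℕ} (v : Fin L → ℝ) (y : ℕ) : ℝ :=
  if h : y < L then v ⟨y, h⟩ else 0

/-- The classical disordered chain Hamiltonian with free (Neumann) boundary
conditions. -/
noncomputable def chainH (L : ℕ) (g g₀ : ℝ) (ω τ : ℕ → ℝ)
    (z : (Fin L → ℝ) × (Fin L → ℝ)) : ℝ :=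
  (∑ y ∈ Finset.range L,
      ((cval z.2 y) ^ 2 / 2 + (ω y) ^ 2 * (cval z.1 y) ^ 2 / 2
        + g * τ y * (cval z.1 y) ^ 4 / 4))
    + ∑ y ∈ Finset.range (L - 1), g₀ * (cval z.1 (y + 1) - cval z.1 y) ^ 2 / 2

/-- Expectation of `f` in the Gibbs probability measure with density `∝ e^{−βH}`
relative to Lebesgue measure on `ℝ^{2L}`. -/
noncomputable def gibbsExp (L : ℕ) (β : ℝ)
    (H f : (Fin L → ℝ) × (Fin L → ℝ) → ℝ) : ℝ :=
  (∫ z, f z * Real.exp (-β * H z)) / ∫ z, Real.exp (-β * H z)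

/-- Evaluation of a polynomial in the `2L` variables `q_x, p_x` at a phase point. -/
noncomputable def polyEval {L : ℕ} (u : MvPolynomial (Fin L ⊕ Fin L) ℝ)
    (z : (Fin L → ℝ) × (Fin L → ℝ)) : ℝ :=
  MvPolynomial.eval (Sum.elim z.1 z.2) u

/-- `∇u·∇u = Σ_x ((∂_{q_x} u)² + (∂_{p_x} u)²)`, evaluated at a phase point. -/
noncomputable def gradSq {L : ℕ} (u : MvPolynomial (Fin L ⊕ Fin L) ℝ)
    (z : (Fin L → ℝ) × (Fin L → ℝ)) : ℝ :=
  ∑ i : Fin L ⊕ Fin L, (polyEval (MvPolynomial.pderiv i u) z) ^ 2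

/-! ### Exponentially bounded functions and Gibbs measures -/

/-- `f` grows at most exponentially in the norm. -/
def EB {X : Type*} [NormedAddCommGroup X] (f : X → ℝ) : Prop :=
  ∃ C a : ℝ, 0 ≤ C ∧ 0 ≤ a ∧ ∀ x, |f x| ≤ C * Real.exp (a * ‖x‖)

section EB
variable {X : Type*} [NormedAddCommGroup X] {f g : X → ℝ}

lemma EB.mono (hf : EB f) (h : ∀ x, |g x| ≤ |f x|) : EB g := by
  obtain ⟨C, a, hC, ha, hb⟩ := hf
  exact ⟨C, a, hC, ha, fun x => (h x).trans (hb x)⟩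

lemma EB.add (hf : EB f) (hg : EB g) : EB (fun x => f x + g x) := by
  obtain ⟨C, a, hC, ha, hb⟩ := hf
  obtain ⟨D, b, hD, hb', hd⟩ := hg
  refine ⟨C + D, a + b, by positivity, by positivity, fun x => ?_⟩
  have h1 : Real.exp (a * ‖x‖) ≤ Real.exp ((a + b) * ‖x‖) :=
    Real.exp_le_exp.2 (by nlinarith [norm_nonneg x])
  have h2 : Real.exp (b * ‖x‖) ≤ Real.exp ((a + b) * ‖x‖) :=
    Real.exp_le_exp.2 (by nlinarith [norm_nonneg x])
  calc |f x + g x| ≤ |f x| + |g x| := abs_add_le _ _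
    _ ≤ C * Real.exp (a * ‖x‖) + D * Real.exp (b * ‖x‖) := add_le_add (hb x) (hd x)
    _ ≤ C * Real.exp ((a + b) * ‖x‖) + D * Real.exp ((a + b) * ‖x‖) := by gcongr
    _ = _ := by ring

lemma EB.mul (hf : EB f) (hg : EB g) : EB (fun x => f x * g x) := by
  obtain ⟨C, a, hC, ha, hb⟩ := hf
  obtain ⟨D, b, hD, hb', hd⟩ := hg
  refine ⟨C * D, a + b, by positivity, by positivity, fun x => ?_⟩
  calc |f x * g x| = |f x| * |g x| := abs_mul _ _
    _ ≤ (C * Real.exp (a * ‖x‖)) * (D * Real.exp (b * ‖x‖)) :=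
      mul_le_mul (hb x) (hd x) (abs_nonneg _) (by positivity)
    _ = C * D * (Real.exp (a * ‖x‖) * Real.exp (b * ‖x‖)) := by ring
    _ = _ := by rw [← Real.exp_add]; ring_nf

lemma EB.const (c : ℝ) : EB (fun _ : X => c) :=
  ⟨|c|, 0, abs_nonneg _, le_rfl, fun x => by simp⟩

lemma EB.sq (hf : EB f) : EB (fun x => f x ^ 2) := by
  simpa [_root_.sq] using hf.mul hf

lemma EB.neg (hf : EB f) : EB (fun x => - f x) := hf.mono fun x => by simp

lemma EB.sub (hf : EB f) (hg : EB g) : EB (fun x => f x - g x) := by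
  simpa [sub_eq_add_neg] using hf.add hg.neg

lemma EB.norm : EB (fun x : X => ‖x‖) :=
  ⟨1, 1, by norm_num, by norm_num, fun x => by
    rw [abs_of_nonneg (norm_nonneg _)]
    rw [one_mul, one_mul]
    linarith [Real.add_one_le_exp ‖x‖]⟩

lemma EB.id : EB (fun x : ℝ => x) := EB.norm.mono fun x => by simp

end EB

/-- The Gibbs probability measure with density proportional to `e^{-V}` (the zero measure if
`e^{-V}` is not integrable). -/
noncomputable def gib {X : Type*} [MeasureSpace X] (V : X → ℝ) : Measure X :=
  (volume : Measure X).tilted (fun x => - V x)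

section gib
variable {X : Type*} [MeasureSpace X] {V f : X → ℝ}

lemma gib_integral (V f : X → ℝ) :
    ∫ x, f x ∂gib V = (∫ x, f x * Real.exp (- V x)) / ∫ x, Real.exp (- V x) := by
  rw [gib, integral_tilted, ← integral_div]
  congr 1; ext x; simp only [smul_eq_mul]; ring

lemma gib_integrable (hV : Integrable (fun x => Real.exp (- V x)))
    (hf : Integrable (fun x => f x * Real.exp (- V x))) : Integrable f (gib V) := by
  rw [gib, integrable_tilted_iff hV]
  simpa [mul_comm] using hf

end gib

section Prob
variable {Ω : Type*} [MeasurableSpace Ω] {μ : Measure Ω} [IsProbabilityMeasure μ] {f g : Ω → ℝ}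

lemma integral_sub_const_sq (i0 : Integrable f μ) (i1 : Integrable (fun x => f x ^ 2) μ) (c : ℝ) :
    ∫ x, (f x - c) ^ 2 ∂μ = (∫ x, f x ^ 2 ∂μ) - 2 * c * (∫ x, f x ∂μ) + c ^ 2 := by
  have h : ∀ x, (f x - c) ^ 2 = f x ^ 2 - 2 * c * f x + c ^ 2 := fun x => by ring
  have i2 : Integrable (fun x => 2 * c * f x) μ := i0.const_mul _
  have i3 : Integrable (fun x => f x ^ 2 - 2 * c * f x) μ := i1.sub i2
  simp_rw [h]
  rw [integral_add i3 (integrable_const _), integral_sub i1 i2, integral_const_mul]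
  simp

lemma sq_integral_le (i0 : Integrable f μ) (i1 : Integrable (fun x => f x ^ 2) μ) :
    (∫ x, f x ∂μ) ^ 2 ≤ ∫ x, f x ^ 2 ∂μ := by
  have h : 0 ≤ ∫ x, (f x - ∫ y, f y ∂μ) ^ 2 ∂μ := integral_nonneg fun _ => sq_nonneg _
  rw [integral_sub_const_sq i0 i1] at h
  linarith

/-- Positivity of the variance of `a f + b g`, expanded. -/
lemma var_comb_nonneg (hf : Integrable f μ) (hg : Integrable g μ)
    (hff : Integrable (fun x => f x ^ 2) μ) (hgg : Integrable (fun x => g x ^ 2) μ)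
    (hfg : Integrable (fun x => f x * g x) μ) (a b : ℝ) :
    0 ≤ a ^ 2 * ((∫ x, f x ^ 2 ∂μ) - (∫ x, f x ∂μ) ^ 2)
      + 2 * a * b * ((∫ x, f x * g x ∂μ) - (∫ x, f x ∂μ) * ∫ x, g x ∂μ)
      + b ^ 2 * ((∫ x, g x ^ 2 ∂μ) - (∫ x, g x ∂μ) ^ 2) := by
  have e : ∀ x, (a * f x + b * g x) ^ 2
      = a ^ 2 * f x ^ 2 + 2 * a * b * (f x * g x) + b ^ 2 * g x ^ 2 := fun x => by ring
  have j1 : Integrable (fun x => a ^ 2 * f x ^ 2) μ := hff.const_mul _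
  have j2 : Integrable (fun x => 2 * a * b * (f x * g x)) μ := hfg.const_mul _
  have j3 : Integrable (fun x => b ^ 2 * g x ^ 2) μ := hgg.const_mul _
  have j12 : Integrable (fun x => a ^ 2 * f x ^ 2 + 2 * a * b * (f x * g x)) μ := j1.add j2
  have h := sq_integral_le (μ := μ) (f := fun x => a * f x + b * g x)
    ((hf.const_mul a).add (hg.const_mul b)) (by simp_rw [e]; exact j12.add j3)
  simp_rw [e] at h
  rw [integral_add j12 j3, integral_add j1 j2, integral_add (hf.const_mul a) (hg.const_mul b)] at h
  simp only [integral_const_mul] at h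
  linarith

end Prob

/-! ### Strongly convex potentials on the line -/

/-- One-site potentials: `V` is `C¹`, its derivative grows at most exponentially and
`V' - ρ x` is nondecreasing, i.e. `V` is `ρ`-strongly convex. -/
def NiceV (V : ℝ → ℝ) (ρ : ℝ) : Prop :=
  ∃ V' : ℝ → ℝ, Continuous V' ∧ EB V' ∧ (∀ x, HasDerivAt V (V' x) x) ∧
    ∀ x y, x ≤ y → ρ * (y - x) ≤ V' y - V' x

section Nice
variable {V : ℝ → ℝ} {ρ : ℝ}

lemma NiceV.continuous (h : NiceV V ρ) : Continuous V := by
  obtain ⟨V', _, _, hd, _⟩ := h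
  exact continuous_iff_continuousAt.2 fun x => (hd x).continuousAt

lemma NiceV.mono (h : NiceV V ρ) {ρ' : ℝ} (hρ : ρ' ≤ ρ) : NiceV V ρ' := by
  obtain ⟨V', hc, he, hd, hm⟩ := h
  exact ⟨V', hc, he, hd, fun x y hxy => by nlinarith [hm x y hxy]⟩

lemma NiceV.tilt (h : NiceV V ρ) (t : ℝ) : NiceV (fun x => V x - t * x) ρ := by
  obtain ⟨V', hc, he, hd, hm⟩ := h
  refine ⟨fun x => V' x - t, by fun_prop, he.sub (EB.const t), fun x => ?_, fun x y hxy => ?_⟩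
  · exact ((hd x).sub ((hasDerivAt_id x).const_mul t)).congr_deriv (by simp)
  · have := hm x y hxy
    linarith

/-- The quadratic lower bound that strong convexity gives through the tangent line at `0`. -/
lemma NiceV.lower (h : NiceV V ρ) : ∃ b : ℝ, 0 ≤ b ∧ ∀ x, V 0 + ρ / 2 * x ^ 2 - b * |x| ≤ V x := by
  obtain ⟨V', hc, he, hd, hm⟩ := h
  refine ⟨|V' 0|, abs_nonneg _, fun x => ?_⟩
  let G : ℝ → ℝ := fun x => V x - ρ / 2 * x ^ 2 - V' 0 * x
  have hG : ∀ x, HasDerivAt G (V' x - ρ * x - V' 0) x := fun x => by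
    have := ((hd x).sub (((hasDerivAt_id x).pow 2).const_mul (ρ / 2))).sub
      ((hasDerivAt_id x).const_mul (V' 0))
    refine this.congr_deriv ?_
    simp; ring
  have hGd : Differentiable ℝ G := fun x => (hG x).differentiableAt
  have key : G 0 ≤ G x := by
    rcases le_total 0 x with hx | hx
    · refine monotoneOn_of_deriv_nonneg (convex_Ici 0) hGd.continuous.continuousOn
        hGd.differentiableOn (fun y hy => ?_) (Set.mem_Ici.2 le_rfl) (Set.mem_Ici.2 hx) hx
      rw [interior_Ici, Set.mem_Ioi] at hy
      rw [(hG y).deriv]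
      linarith [hm 0 y hy.le]
    · refine antitoneOn_of_deriv_nonpos (convex_Iic 0) hGd.continuous.continuousOn
        hGd.differentiableOn (fun y hy => ?_) (Set.mem_Iic.2 hx) (Set.mem_Iic.2 le_rfl) hx
      rw [interior_Iic, Set.mem_Iio] at hy
      rw [(hG y).deriv]
      linarith [hm y 0 hy.le]
  simp only [G] at key
  have h1 : -(|V' 0| * |x|) ≤ V' 0 * x := by rw [← abs_mul]; exact neg_abs_le _
  nlinarith

lemma exp_quad_integrable {ρ : ℝ} (hρ : 0 < ρ) (a b : ℝ) :
    Integrable (fun x : ℝ => Real.exp (a + b * |x| - ρ / 2 * x ^ 2)) := by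
  refine Integrable.mono' ((integrable_exp_neg_mul_sq (b := ρ / 4) (by positivity)).const_mul
    (Real.exp (a + b ^ 2 / ρ))) (by fun_prop) (Filter.Eventually.of_forall fun x => ?_)
  rw [Real.norm_eq_abs, Real.abs_exp, ← Real.exp_add, Real.exp_le_exp]
  have h : 0 ≤ (ρ / 2 * |x| - b) ^ 2 / ρ := by positivity
  have h2 : (ρ / 2 * |x| - b) ^ 2 / ρ = ρ / 4 * x ^ 2 - b * |x| + b ^ 2 / ρ := by
    field_simp
    rw [← sq_abs x]; ring
  linarith

lemma NiceV.integrable (h : NiceV V ρ) (hρ : 0 < ρ) {f : ℝ → ℝ} (hf : EB f) (hc : Continuous f) :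
    Integrable (fun x => f x * Real.exp (- V x)) := by
  obtain ⟨b, hb, hl⟩ := h.lower
  obtain ⟨C, a, hC, ha, hf⟩ := hf
  refine Integrable.mono' ((exp_quad_integrable hρ (- V 0) (a + b)).const_mul C)
    ((hc.mul (Real.continuous_exp.comp h.continuous.neg)).aestronglyMeasurable)
    (Filter.Eventually.of_forall fun x => ?_)
  rw [norm_mul, Real.norm_eq_abs, Real.norm_eq_abs, Real.abs_exp]
  calc |f x| * Real.exp (- V x)
      ≤ (C * Real.exp (a * ‖x‖)) * Real.exp (- (V 0 + ρ / 2 * x ^ 2 - b * |x|)) := by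
        gcongr
        · exact hf x
        · exact hl x
    _ = _ := by
        rw [mul_assoc, ← Real.exp_add, Real.norm_eq_abs]; ring_nf

lemma NiceV.integrable_exp (h : NiceV V ρ) (hρ : 0 < ρ) :
    Integrable (fun x => Real.exp (- V x)) := by
  simpa using h.integrable hρ (EB.const 1) continuous_const

lemma NiceV.gib_int (h : NiceV V ρ) (hρ : 0 < ρ) {f : ℝ → ℝ} (hf : EB f) (hc : Continuous f) :
    Integrable f (gib V) :=
  gib_integrable (h.integrable_exp hρ) (h.integrable hρ hf hc)

lemma NiceV.isProb (h : NiceV V ρ) (hρ : 0 < ρ) : IsProbabilityMeasure (gib V) :=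
  isProbabilityMeasure_tilted (h.integrable_exp hρ)

/-- A differentiable function with an exponentially bounded derivative is exponentially bounded. -/
lemma EB.of_deriv {f f' : ℝ → ℝ} (hf : ∀ x, HasDerivAt f (f' x) x) (he : EB f') : EB f := by
  obtain ⟨C, a, hC, ha, hb⟩ := he
  have key : EB (fun x : ℝ => |f 0| + C * Real.exp (a * ‖x‖) * ‖x‖) :=
    (EB.const |f 0|).add (EB.mul (f := fun x : ℝ => C * Real.exp (a * ‖x‖)) ⟨C, a, hC, ha, fun x => by
      rw [abs_of_nonneg (by positivity)]⟩ EB.norm)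
  refine key.mono fun x => ?_
  have h1 := (convex_closedBall (0 : ℝ) |x|).norm_image_sub_le_of_norm_hasDerivWithin_le
    (f := f) (f' := f') (C := C * Real.exp (a * ‖x‖)) (x := 0) (y := x)
    (fun y _ => (hf y).hasDerivWithinAt) (fun y hy => ?_) (by simp) (by simp)
  · rw [abs_of_nonneg (by positivity : 0 ≤ |f 0| + C * Real.exp (a * ‖x‖) * ‖x‖)]
    rw [sub_zero, Real.norm_eq_abs] at h1
    have := abs_sub_abs_le_abs_sub (f x) (f 0)
    linarith
  · refine (hb y).trans ?_
    have : ‖y‖ ≤ ‖x‖ := by simpa using hy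
    gcongr

/-- Poincaré inequality for a `ρ`-strongly convex potential on the line. With `y₀` the minimizer
of `V` and `Φ(x) = ∫_{y₀}^x f'²`, Cauchy–Schwarz gives
`(f x - f y₀)² ≤ (x - y₀) Φ x ≤ V' x Φ x / ρ`, and `∫ Φ V' e^{-V} = ∫ Φ' e^{-V}`. -/
lemma NiceV.poincare (h : NiceV V ρ) (hρ : 0 < ρ) {f f' : ℝ → ℝ}
    (hf : ∀ x, HasDerivAt f (f' x) x) (hc : Continuous f') (he : EB f') :
    ρ * ((∫ x, f x ^ 2 ∂gib V) - (∫ x, f x ∂gib V) ^ 2) ≤ ∫ x, f' x ^ 2 ∂gib V := by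
  have hnice := h
  have := h.isProb hρ
  obtain ⟨V', hVc, hVe, hd, hm⟩ := h
  have hfc : Continuous f := continuous_iff_continuousAt.2 fun x => (hf x).continuousAt
  have hfe : EB f := EB.of_deriv hf he
  obtain ⟨y₀, hy₀⟩ : ∃ y₀, V' y₀ = 0 := by
    have hl : V' (-(|V' 0| / ρ)) ≤ 0 := by
      have := hm (-(|V' 0| / ρ)) 0 (by simp; positivity)
      have e : ρ * (0 - -(|V' 0| / ρ)) = |V' 0| := by field_simp; ring
      linarith [le_abs_self (V' 0)]
    have hr : 0 ≤ V' (|V' 0| / ρ) := by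
      have := hm 0 (|V' 0| / ρ) (by positivity)
      have e : ρ * (|V' 0| / ρ - 0) = |V' 0| := by field_simp; ring
      linarith [neg_abs_le (V' 0)]
    exact mem_range_of_exists_le_of_exists_ge hVc ⟨_, hl⟩ ⟨_, hr⟩
  let Φ : ℝ → ℝ := fun x => ∫ y in y₀..x, f' y ^ 2
  have hΦ : ∀ x, HasDerivAt Φ (f' x ^ 2) x := fun x =>
    intervalIntegral.integral_hasDerivAt_right ((hc.pow 2).intervalIntegrable _ _)
      ((hc.pow 2).stronglyMeasurableAtFilter _ _) (hc.pow 2).continuousAt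
  have hΦc : Continuous Φ := continuous_iff_continuousAt.2 fun x => (hΦ x).continuousAt
  have hΦe : EB Φ := EB.of_deriv hΦ he.sq
  -- the derivative of `Φ e^{-V}` integrates to zero
  have ibp : ∫ x, Φ x * V' x ∂gib V = ∫ x, f' x ^ 2 ∂gib V := by
    have i1 := hnice.integrable hρ (hΦe.mul hVe) (hΦc.mul hVc)
    have i2 := hnice.integrable hρ he.sq (hc.pow 2)
    have := integral_eq_zero_of_hasDerivAt_of_integrable
      (f := fun x => Φ x * Real.exp (- V x))
      (f' := fun x => f' x ^ 2 * Real.exp (- V x) - Φ x * V' x * Real.exp (- V x))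
      (fun x => by
        refine ((hΦ x).mul (hd x).neg.exp).congr_deriv ?_
        simp; ring) (i2.sub i1) (hnice.integrable hρ hΦe hΦc)
    rw [integral_sub i2 i1] at this
    rw [gib_integral, gib_integral]
    congr 1
    linarith
  have cs0 : ∀ a b, a ≤ b → (f b - f a) ^ 2 ≤ (b - a) * ∫ y in a..b, f' y ^ 2 := by
    intro a b hab
    rcases hab.eq_or_lt with rfl | hab'
    · simp
    have hint : ∫ y in a..b, f' y = f b - f a :=
      intervalIntegral.integral_eq_sub_of_hasDerivAt (fun x _ => hf x) (hc.intervalIntegrable _ _)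
    set s := (f b - f a) / (b - a) with hs
    have hpos : 0 < b - a := sub_pos.2 hab'
    have h0 : 0 ≤ ∫ y in a..b, (f' y - s) ^ 2 :=
      intervalIntegral.integral_nonneg hab fun _ _ => sq_nonneg _
    have h1 : ∫ y in a..b, (f' y - s) ^ 2
        = (∫ y in a..b, f' y ^ 2) - 2 * s * (f b - f a) + s ^ 2 * (b - a) := by
      have : ∀ y, (f' y - s) ^ 2 = f' y ^ 2 - 2 * s * f' y + s ^ 2 := fun y => by ring
      simp_rw [this]
      rw [intervalIntegral.integral_add, intervalIntegral.integral_sub,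
        intervalIntegral.integral_const_mul, hint, intervalIntegral.integral_const]
      · simp; ring
      all_goals exact Continuous.intervalIntegrable (by fun_prop) _ _
    rw [h1] at h0
    have h2 : s * (b - a) = f b - f a := by rw [hs]; field_simp
    nlinarith
  have cs : ∀ x, ρ * (f x - f y₀) ^ 2 ≤ Φ x * V' x := by
    intro x
    rcases le_total y₀ x with hx | hx
    · have h1 := cs0 _ _ hx
      have h2 := hm _ _ hx
      have h3 : 0 ≤ Φ x := intervalIntegral.integral_nonneg hx fun _ _ => sq_nonneg _
      rw [hy₀, sub_zero] at h2
      calc ρ * (f x - f y₀) ^ 2 ≤ ρ * ((x - y₀) * Φ x) := by gcongr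
        _ = Φ x * (ρ * (x - y₀)) := by ring
        _ ≤ _ := by gcongr
    · have h1 := cs0 _ _ hx
      have h2 := hm _ _ hx
      have h3 : 0 ≤ - Φ x := by
        simp only [Φ]
        rw [← intervalIntegral.integral_symm]
        exact intervalIntegral.integral_nonneg hx fun _ _ => sq_nonneg _
      rw [hy₀] at h2
      have h4 : ∫ y in x..y₀, f' y ^ 2 = - Φ x := intervalIntegral.integral_symm _ _
      rw [h4] at h1
      calc ρ * (f x - f y₀) ^ 2 = ρ * (f y₀ - f x) ^ 2 := by ring
        _ ≤ ρ * ((y₀ - x) * - Φ x) := by gcongr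
        _ = (- Φ x) * (ρ * (y₀ - x)) := by ring
        _ ≤ (- Φ x) * (0 - V' x) := by gcongr
        _ = _ := by ring
  have i0 := hnice.gib_int hρ hfe hfc
  have i1 := hnice.gib_int hρ hfe.sq (hfc.pow 2)
  have hI : ∫ x, ρ * (f x - f y₀) ^ 2 ∂gib V ≤ ∫ x, Φ x * V' x ∂gib V :=
    integral_mono ((hnice.gib_int hρ (hfe.sub (EB.const _)).sq (by fun_prop)).const_mul ρ)
      (hnice.gib_int hρ (hΦe.mul hVe) (hΦc.mul hVc)) cs
  rw [integral_const_mul, ibp] at hI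
  refine le_trans ?_ hI
  have hexp : ∫ x, (f x - f y₀) ^ 2 ∂gib V
      = (∫ x, f x ^ 2 ∂gib V) - 2 * f y₀ * (∫ x, f x ∂gib V) + f y₀ ^ 2 := by
    exact integral_sub_const_sq i0 i1 _
  rw [hexp]
  gcongr
  nlinarith [sq_nonneg ((∫ x, f x ∂gib V) - f y₀)]

end Nice

/-! ### Tilted one-site measures -/

section Param
variable {V : ℝ → ℝ} {ρ : ℝ}

lemma exp_tilt (V : ℝ → ℝ) (t x : ℝ) :
    Real.exp (-(V x - t * x)) = Real.exp (t * x) * Real.exp (- V x) := by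
  rw [← Real.exp_add]; ring_nf

lemma exp_tilt_le {t R : ℝ} (ht : |t| ≤ R) (x : ℝ) : Real.exp (t * x) ≤ Real.exp (R * |x|) := by
  refine Real.exp_le_exp.2 ((le_abs_self _).trans ?_)
  rw [abs_mul]
  gcongr

lemma tilt_bound {A C a t R x : ℝ} (V : ℝ → ℝ) (hA : |A| ≤ C * Real.exp (a * |x|))
    (ht : |t| ≤ R) :
    ‖A * Real.exp (-(V x - t * x))‖ ≤ C * Real.exp ((a + R) * |x|) * Real.exp (- V x) := by
  rw [norm_mul, Real.norm_eq_abs, Real.norm_eq_abs, Real.abs_exp, exp_tilt]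
  have h1 := exp_tilt_le ht x
  calc |A| * (Real.exp (t * x) * Real.exp (- V x))
      ≤ (C * Real.exp (a * |x|)) * (Real.exp (R * |x|) * Real.exp (- V x)) :=
        mul_le_mul hA (mul_le_mul_of_nonneg_right h1 (Real.exp_pos _).le) (by positivity)
          ((abs_nonneg _).trans hA)
    _ = _ := by rw [add_mul a R, Real.exp_add]; ring

lemma norm_pair_le {X Y : Type*} [NormedAddCommGroup X] [NormedAddCommGroup Y] (p : X × Y) :
    ‖p‖ ≤ ‖p.1‖ + ‖p.2‖ :=
  max_le (le_add_of_nonneg_right (norm_nonneg _)) (le_add_of_nonneg_left (norm_nonneg _))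

/-- A slice of an exponentially bounded function of two variables, with the parameter in a
ball of radius `R`, is bounded uniformly in the parameter. -/
lemma EB.slice {Y : Type*} [NormedAddCommGroup Y] {u : Y × ℝ → ℝ} (hu : EB u) (R : ℝ) :
    ∃ C a : ℝ, 0 ≤ C ∧ 0 ≤ a ∧ ∀ y, ‖y‖ ≤ R → ∀ x, |u (y, x)| ≤ C * Real.exp (a * |x|) := by
  obtain ⟨C, a, hC, ha, hb⟩ := hu
  refine ⟨C * Real.exp (a * R), a, by positivity, ha, fun y hy x => (hb _).trans ?_⟩
  rw [mul_assoc, ← Real.exp_add]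
  have := norm_pair_le (y, x)
  simp only [Real.norm_eq_abs] at this
  gcongr
  nlinarith

lemma EB.slice' {Y : Type*} [NormedAddCommGroup Y] {u : Y × ℝ → ℝ} (hu : EB u) (y : Y) :
    EB (fun x => u (y, x)) := by
  obtain ⟨C, a, hC, ha, h⟩ := hu.slice ‖y‖
  exact ⟨C, a, hC, ha, fun x => h y le_rfl x⟩

lemma NiceV.integrable_bound (h : NiceV V ρ) (hρ : 0 < ρ) (C a : ℝ) (hC : 0 ≤ C) (ha : 0 ≤ a) :
    Integrable (fun x => C * Real.exp (a * |x|) * Real.exp (- V x)) :=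
  h.integrable hρ ⟨C, a, hC, ha, fun x => by
    rw [abs_of_nonneg (by positivity), Real.norm_eq_abs]⟩ (by fun_prop)

/-- Differentiation under the integral, with the tilt `p + q t` affine in the parameter. -/
lemma NiceV.hasDerivAt_num (h : NiceV V ρ) (hρ : 0 < ρ) {u u' : ℝ × ℝ → ℝ}
    (hd : ∀ t x, HasDerivAt (fun s => u (s, x)) (u' (t, x)) t)
    (hc : ∀ t, Continuous fun x => u (t, x)) (hc' : ∀ t, Continuous fun x => u' (t, x))
    (he : EB u) (he' : EB u') (p q t₀ : ℝ) :
    HasDerivAt (fun t => ∫ x, u (t, x) * Real.exp (-(V x - (p + q * t) * x)))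
      (∫ x, (u' (t₀, x) + q * (u (t₀, x) * x)) * Real.exp (-(V x - (p + q * t₀) * x))) t₀ := by
  set w : ℝ × ℝ → ℝ := fun z => u' z + q * (u z * z.2) with hw
  have hwe : EB w := he'.add ((EB.const q).mul (he.mul (EB.norm.mono fun z => by
    rw [abs_of_nonneg (norm_nonneg z)]; exact norm_snd_le z)))
  obtain ⟨C, a, hC, ha, hb⟩ := hwe.slice (|t₀| + 1)
  set R := |p| + |q| * (|t₀| + 1)
  have hR : 0 ≤ R := by positivity
  have habs : ∀ t ∈ Metric.ball t₀ 1, |t| ≤ |t₀| + 1 := fun t ht => by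
    rw [Metric.mem_ball, Real.dist_eq] at ht
    have := abs_sub_abs_le_abs_sub t t₀
    linarith
  have htilt : ∀ t ∈ Metric.ball t₀ 1, |p + q * t| ≤ R := fun t ht => by
    refine (abs_add_le _ _).trans ?_
    rw [abs_mul]
    have := mul_le_mul_of_nonneg_left (habs t ht) (abs_nonneg q)
    simp only [R]
    linarith
  have hVc := h.continuous
  refine (hasDerivAt_integral_of_dominated_loc_of_deriv_le
    (F := fun t x => u (t, x) * Real.exp (-(V x - (p + q * t) * x)))
    (F' := fun t x => w (t, x) * Real.exp (-(V x - (p + q * t) * x)))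
    (bound := fun x => C * Real.exp ((a + R) * |x|) * Real.exp (- V x))
    (Metric.ball_mem_nhds t₀ one_pos) ?_ ?_ ?_ ?_ ?_ ?_).2
  · refine Filter.Eventually.of_forall fun t => Continuous.aestronglyMeasurable ?_
    exact (hc t).mul (by fun_prop)
  · exact (h.tilt _).integrable hρ (he.slice' t₀) (hc t₀)
  · refine Continuous.aestronglyMeasurable ?_
    exact ((hc' t₀).add (continuous_const.mul ((hc t₀).mul continuous_id))).mul (by fun_prop)
  · refine Filter.Eventually.of_forall fun x t ht => ?_
    exact tilt_bound V (hb t (by simpa using habs t ht) x) (htilt t ht)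
  · exact h.integrable_bound hρ C _ hC (by positivity)
  · refine Filter.Eventually.of_forall fun x t _ => ?_
    have h1 : HasDerivAt (fun t => -(V x - (p + q * t) * x)) (q * x) t := by
      have := ((((hasDerivAt_id t).const_mul q).const_add p).mul_const x).const_sub (V x) |>.neg
      refine this.congr_deriv (by simp)
    refine ((hd t x).mul h1.exp).congr_deriv ?_
    simp only [hw]; ring

lemma NiceV.pos (h : NiceV V ρ) (hρ : 0 < ρ) : 0 < ∫ x, Real.exp (- V x) :=
  integral_exp_pos (h.integrable_exp hρ)

/-- Derivative of a conditional expectation: `∂_t E_t[u_t] = E_t[∂_t u_t] + q Cov_t(u_t, x)`. -/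
lemma NiceV.hasDerivAt_mean (h : NiceV V ρ) (hρ : 0 < ρ) {u u' : ℝ × ℝ → ℝ}
    (hd : ∀ t x, HasDerivAt (fun s => u (s, x)) (u' (t, x)) t)
    (hc : ∀ t, Continuous fun x => u (t, x)) (hc' : ∀ t, Continuous fun x => u' (t, x))
    (he : EB u) (he' : EB u') (p q t₀ : ℝ) :
    HasDerivAt (fun t => ∫ x, u (t, x) ∂gib (fun x => V x - (p + q * t) * x))
      ((∫ x, u' (t₀, x) ∂gib (fun x => V x - (p + q * t₀) * x))
        + q * ((∫ x, u (t₀, x) * x ∂gib (fun x => V x - (p + q * t₀) * x))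
          - (∫ x, u (t₀, x) ∂gib (fun x => V x - (p + q * t₀) * x))
            * ∫ x, x ∂gib (fun x => V x - (p + q * t₀) * x))) t₀ := by
  have h1 := h.hasDerivAt_num hρ hd hc hc' he he' p q t₀
  have h2 := h.hasDerivAt_num hρ (u := fun _ => 1) (u' := fun _ => 0)
    (fun t x => hasDerivAt_const t 1) (fun _ => continuous_const) (fun _ => continuous_const)
    (EB.const 1) (EB.const 0) p q t₀
  have ht := h.tilt (p + q * t₀)
  have hp := (ht.pos hρ).ne'
  simp only [gib_integral]
  have i1 := ht.integrable hρ (he'.slice' t₀) (hc' t₀)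
  have i2 := ht.integrable hρ ((he.slice' t₀).mul EB.id) ((hc t₀).mul continuous_id)
  simp only [one_mul, zero_add] at h2
  refine (h1.div h2 hp).congr_deriv ?_
  have e1 : ∫ x, (u' (t₀, x) + q * (u (t₀, x) * x)) * Real.exp (-(V x - (p + q * t₀) * x))
      = (∫ x, u' (t₀, x) * Real.exp (-(V x - (p + q * t₀) * x)))
        + q * ∫ x, u (t₀, x) * x * Real.exp (-(V x - (p + q * t₀) * x)) := by
    rw [← integral_const_mul, ← integral_add i1 (i2.const_mul q)]
    congr 1; ext x; ring
  have e2 : ∫ x, q * x * Real.exp (-(V x - (p + q * t₀) * x))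
      = q * ∫ x, x * Real.exp (-(V x - (p + q * t₀) * x)) := by
    rw [← integral_const_mul]
    congr 1; ext x; ring
  rw [e1, e2]
  field_simp
  ring

/-- Mean of the coordinate under the potential tilted by `t`. -/
noncomputable def tmean (V : ℝ → ℝ) (t : ℝ) : ℝ := ∫ x, x ∂gib (fun x => V x - t * x)

/-- Logarithm of the partition function of the potential tilted by `t`. -/
noncomputable def logZ (V : ℝ → ℝ) (t : ℝ) : ℝ := Real.log (∫ x, Real.exp (-(V x - t * x)))

lemma NiceV.exp_logZ (h : NiceV V ρ) (hρ : 0 < ρ) (t : ℝ) :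
    Real.exp (logZ V t) = ∫ x, Real.exp (-(V x - t * x)) :=
  Real.exp_log ((h.tilt t).pos hρ)

lemma NiceV.hasDerivAt_logZ (h : NiceV V ρ) (hρ : 0 < ρ) (t : ℝ) :
    HasDerivAt (logZ V) (tmean V t) t := by
  have h2 := h.hasDerivAt_num hρ (u := fun _ => 1) (u' := fun _ => 0)
    (fun t x => hasDerivAt_const t 1) (fun _ => continuous_const) (fun _ => continuous_const)
    (EB.const 1) (EB.const 0) 0 1 t
  simp only [one_mul, zero_add] at h2
  refine (h2.log ((h.tilt t).pos hρ).ne').congr_deriv ?_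
  rw [tmean, gib_integral]

/-- The derivative of the mean in the tilt is the variance, which the Poincaré inequality bounds
by `1 / ρ`. -/
lemma NiceV.hasDerivAt_tmean (h : NiceV V ρ) (hρ : 0 < ρ) (t : ℝ) :
    ∃ d, HasDerivAt (tmean V) d t ∧ 0 ≤ d ∧ ρ * d ≤ 1 := by
  have h1 := h.hasDerivAt_mean hρ (u := fun z => z.2) (u' := fun _ => 0)
    (fun t x => hasDerivAt_const t x) (fun _ => continuous_id) (fun _ => continuous_const)
    (EB.norm.mono fun z => by
      rw [abs_of_nonneg (norm_nonneg z)]; exact norm_snd_le z) (EB.const 0) 0 1 t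
  simp only [zero_add, one_mul, integral_zero] at h1
  have ht := h.tilt t
  have := ht.isProb hρ
  refine ⟨_, h1, ?_, ?_⟩
  · have := sq_integral_le (ht.gib_int hρ EB.id continuous_id)
      (ht.gib_int hρ EB.id.sq (continuous_id.pow 2))
    simp only [← sq]
    linarith
  · have := ht.poincare hρ (f := fun x => x) (f' := fun _ => 1) (fun x => hasDerivAt_id x)
      continuous_const (EB.const 1)
    simpa [← sq] using this

lemma NiceV.continuous_tmean (h : NiceV V ρ) (hρ : 0 < ρ) : Continuous (tmean V) :=
  continuous_iff_continuousAt.2 fun t => (h.hasDerivAt_tmean hρ t).choose_spec.1.continuousAt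

lemma NiceV.tmean_lip (h : NiceV V ρ) (hρ : 0 < ρ) {s t : ℝ} (hst : s ≤ t) :
    tmean V t - tmean V s ≤ (t - s) / ρ := by
  choose d hd _ hd1 using h.hasDerivAt_tmean hρ
  have hdiff : Differentiable ℝ (tmean V) := fun x => (hd x).differentiableAt
  have := image_sub_le_mul_sub_of_deriv_le (f := tmean V) (C := 1 / ρ) hdiff (fun x => by
    rw [(hd x).deriv, le_div_iff₀ hρ]; linarith [hd1 x]) hst
  calc _ ≤ _ := this
    _ = _ := by ring

lemma NiceV.abs_tmean_le (h : NiceV V ρ) (hρ : 0 < ρ) (t : ℝ) :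
    |tmean V t| ≤ |tmean V 0| + |t| / ρ := by
  choose d hd hd0 hd1 using h.hasDerivAt_tmean hρ
  have := convex_univ.norm_image_sub_le_of_norm_hasDerivWithin_le (f := tmean V) (f' := d)
    (C := 1 / ρ) (x := 0) (y := t) (fun y _ => (hd y).hasDerivWithinAt) (fun y _ => by
      rw [Real.norm_eq_abs, abs_of_nonneg (hd0 y), le_div_iff₀ hρ]; linarith [hd1 y])
      (Set.mem_univ _) (Set.mem_univ _)
  simp only [Real.norm_eq_abs, sub_zero] at this
  have h2 := abs_sub_abs_le_abs_sub (tmean V t) (tmean V 0)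
  have : 1 / ρ * |t| = |t| / ρ := by ring
  linarith

/-- Exponential moments of the tilted measure grow at most exponentially in the tilt, since
`E_t[e^{ax}] = Z(t + a) / Z(t)` and `(log Z)'` has linear growth. -/
lemma NiceV.exp_moment (h : NiceV V ρ) (hρ : 0 < ρ) (a : ℝ) (ha : 0 ≤ a) :
    ∃ C b : ℝ, 0 ≤ C ∧ 0 ≤ b ∧
      ∀ t, ∫ x, Real.exp (a * |x|) ∂gib (fun x => V x - t * x) ≤ C * Real.exp (b * |t|) := by
  have key : ∀ t s, |s| ≤ a → ∫ x, Real.exp (s * x) ∂gib (fun x => V x - t * x)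
      ≤ Real.exp ((|tmean V 0| + (|t| + a) / ρ) * a) := by
    intro t s hs
    have e : ∫ x, Real.exp (s * x) ∂gib (fun x => V x - t * x)
        = Real.exp (logZ V (t + s) - logZ V t) := by
      rw [gib_integral, Real.exp_sub, h.exp_logZ hρ, h.exp_logZ hρ]
      congr 1
      congr 1; ext x
      rw [← Real.exp_add]; ring_nf
    rw [e, Real.exp_le_exp]
    have := (convex_closedBall (0 : ℝ) (|t| + a)).norm_image_sub_le_of_norm_hasDerivWithin_le
      (f := logZ V) (f' := tmean V) (C := |tmean V 0| + (|t| + a) / ρ) (x := t) (y := t + s)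
      (fun y _ => (h.hasDerivAt_logZ hρ y).hasDerivWithinAt) (fun y hy => by
        refine (h.abs_tmean_le hρ y).trans ?_
        have : |y| ≤ |t| + a := by simpa using hy
        gcongr) (by simpa using ha)
      (by simpa using (abs_add_le t s).trans (by linarith))
    rw [add_sub_cancel_left] at this
    calc _ ≤ ‖logZ V (t + s) - logZ V t‖ := le_abs_self _
      _ ≤ _ := this
      _ ≤ _ := by gcongr; exact hs
  refine ⟨2 * Real.exp ((|tmean V 0| + a / ρ) * a), a / ρ, by positivity, by positivity,
    fun t => ?_⟩
  have ht := h.tilt t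
  have hE : ∀ s : ℝ, EB (fun x : ℝ => Real.exp (s * x)) := fun s =>
    ⟨1, |s|, by norm_num, abs_nonneg _, fun x => by
      rw [Real.abs_exp, one_mul]; exact exp_tilt_le le_rfl x⟩
  have hA : EB (fun x : ℝ => Real.exp (a * |x|)) :=
    ⟨1, a, by norm_num, ha, fun x => by rw [Real.abs_exp, one_mul, Real.norm_eq_abs]⟩
  have i1 := ht.gib_int hρ (hE a) (by fun_prop)
  have i2 := ht.gib_int hρ (hE (-a)) (by fun_prop)
  calc ∫ x, Real.exp (a * |x|) ∂gib (fun x => V x - t * x)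
      ≤ ∫ x, (Real.exp (a * x) + Real.exp (-a * x)) ∂gib (fun x => V x - t * x) := by
        refine integral_mono (ht.gib_int hρ hA (by fun_prop)) (i1.add i2) fun x => ?_
        rcases abs_cases x with ⟨hx, _⟩ | ⟨hx, _⟩ <;> simp only [hx]
        · linarith [Real.exp_pos (-a * x)]
        · rw [neg_mul, mul_neg]; linarith [Real.exp_pos (a * x)]
    _ ≤ Real.exp ((|tmean V 0| + (|t| + a) / ρ) * a)
        + Real.exp ((|tmean V 0| + (|t| + a) / ρ) * a) := by
        rw [integral_add i1 i2]
        exact add_le_add (key t a (abs_of_nonneg ha).le) (key t (-a) (by simp [abs_of_nonneg ha]))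
    _ = _ := by
        rw [← two_mul, mul_assoc, ← Real.exp_add]
        congr 2; ring

/-- Conditional expectations of exponentially bounded functions are exponentially bounded. -/
lemma NiceV.mean_EB (h : NiceV V ρ) (hρ : 0 < ρ) {Y : Type*} [NormedAddCommGroup Y]
    {u : Y × ℝ → ℝ} (hu : EB u) {τ : Y → ℝ} {K : ℝ} (hK : 0 ≤ K) (hτ : ∀ y, |τ y| ≤ K * ‖y‖) :
    EB (fun y => ∫ x, u (y, x) ∂gib (fun x => V x - τ y * x)) := by
  obtain ⟨C, a, hC, ha, hb⟩ := hu
  obtain ⟨D, b, hD, hb', hd⟩ := h.exp_moment hρ a ha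
  refine ⟨C * D, a + b * K, by positivity, by positivity, fun y => ?_⟩
  have ht := h.tilt (τ y)
  have hA : EB (fun x : ℝ => Real.exp (a * |x|)) :=
    ⟨1, a, by norm_num, ha, fun x => by rw [Real.abs_exp, one_mul, Real.norm_eq_abs]⟩
  have i1 := (ht.gib_int hρ hA (by fun_prop)).const_mul (C * Real.exp (a * ‖y‖))
  calc |∫ x, u (y, x) ∂gib (fun x => V x - τ y * x)|
      ≤ ∫ x, (C * Real.exp (a * ‖y‖)) * Real.exp (a * |x|) ∂gib (fun x => V x - τ y * x) := by
        rw [← Real.norm_eq_abs]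
        refine norm_integral_le_of_norm_le i1 (Filter.Eventually.of_forall fun x => ?_)
        refine (hb _).trans ?_
        rw [mul_assoc, ← Real.exp_add, ← mul_add]
        have := norm_pair_le (y, x)
        simp only [Real.norm_eq_abs] at this
        gcongr
    _ ≤ (C * Real.exp (a * ‖y‖)) * (D * Real.exp (b * (K * ‖y‖))) := by
        rw [integral_const_mul]
        have := hd (τ y)
        have := hτ y
        gcongr
        exact (hd (τ y)).trans (by gcongr)
    _ = C * D * (Real.exp (a * ‖y‖) * Real.exp (b * (K * ‖y‖))) := by ring
    _ = _ := by rw [← Real.exp_add]; ring_nf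

/-- Conditional expectations of continuous exponentially bounded functions are continuous. -/
lemma NiceV.mean_continuous (h : NiceV V ρ) (hρ : 0 < ρ) {Y : Type*} [NormedAddCommGroup Y]
    {u : Y × ℝ → ℝ} (hu : EB u) (huc : Continuous u) {τ : Y → ℝ} (hτ : Continuous τ) :
    Continuous (fun y => ∫ x, u (y, x) ∂gib (fun x => V x - τ y * x)) := by
  have hVc := h.continuous
  have num : ∀ {w : Y × ℝ → ℝ}, EB w → Continuous w →
      Continuous fun y => ∫ x, w (y, x) * Real.exp (-(V x - τ y * x)) := by
    intro w hw hwc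
    refine continuous_iff_continuousAt.2 fun y₀ => ?_
    obtain ⟨C, a, hC, ha, hb⟩ := hw.slice (‖y₀‖ + 1)
    set R := |τ y₀| + 1
    have hR : 0 ≤ R := by positivity
    refine continuousAt_of_dominated
      (bound := fun x => C * Real.exp ((a + R) * |x|) * Real.exp (- V x)) ?_ ?_
      (h.integrable_bound hρ C _ hC (by positivity)) ?_
    · exact Filter.Eventually.of_forall fun y => Continuous.aestronglyMeasurable (by fun_prop)
    · have n1 : ∀ᶠ y in nhds y₀, ‖y‖ < ‖y₀‖ + 1 :=
        continuous_norm.continuousAt.eventually_lt continuousAt_const (by simp)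
      have n2 : ∀ᶠ y in nhds y₀, |τ y| < R :=
        hτ.abs.continuousAt.eventually_lt continuousAt_const (by simp [R])
      filter_upwards [n1, n2] with y h1 h2
      refine Filter.Eventually.of_forall fun x => ?_
      exact tilt_bound V (hb y h1.le x) h2.le
    · exact Filter.Eventually.of_forall fun x => Continuous.continuousAt (by fun_prop)
  have hden := num (EB.const 1) continuous_const
  simp only [one_mul] at hden
  simp only [gib_integral]
  exact (num hu huc).div hden fun y => ((h.tilt _).pos hρ).ne'

end Param

/-! ### Marginals -/

/-- Integrating out a site with potential `V` coupled by `c` to its neighbour removes at most the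
convexity `c` from the neighbour's potential: the loss is `c² Var ≤ c² / (δ + c) ≤ c`. -/
lemma NiceV.marginal {V V₁ : ℝ → ℝ} {δ c c₁ : ℝ} (hδ : 0 < δ) (hc : 0 ≤ c)
    (h : NiceV V (δ + c)) (h₁ : NiceV V₁ (δ + c + c₁)) :
    NiceV (fun s => V₁ s - logZ V (c * s)) (δ + c₁) := by
  have hρ : 0 < δ + c := by positivity
  obtain ⟨V', hVc, hVe, hd, hm⟩ := h₁
  have htc := h.continuous_tmean hρ
  refine ⟨fun s => V' s - c * tmean V (c * s), by fun_prop, hVe.sub ?_, fun s => ?_,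
    fun x y hxy => ?_⟩
  · have hE : EB (fun s : ℝ => |c| * (|tmean V 0| + |c| / (δ + c) * ‖s‖)) :=
      (EB.const _).mul ((EB.const _).add ((EB.const _).mul EB.norm))
    refine hE.mono fun s => ?_
    rw [abs_of_nonneg (by positivity : 0 ≤ |c| * (|tmean V 0| + |c| / (δ + c) * ‖s‖)), abs_mul]
    refine mul_le_mul_of_nonneg_left ((h.abs_tmean_le hρ _).trans (le_of_eq ?_)) (abs_nonneg c)
    rw [abs_mul, Real.norm_eq_abs]; ring
  · have h1 : HasDerivAt (fun s => c * s) c s := by simpa using (hasDerivAt_id s).const_mul c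
    refine ((hd s).sub ((h.hasDerivAt_logZ hρ (c * s)).comp s h1)).congr_deriv (by ring)
  · have h1 := hm x y hxy
    have h2 := h.tmean_lip hρ (mul_le_mul_of_nonneg_left hxy hc)
    have h3 : c * ((c * y - c * x) / (δ + c)) ≤ c * (y - x) := by
      refine mul_le_mul_of_nonneg_left ?_ hc
      rw [div_le_iff₀ hρ]
      nlinarith
    have h4 := mul_le_mul_of_nonneg_left h2 hc
    nlinarith

/-! ### Chains with nearest-neighbour bilinear coupling -/

/-- First coordinate of a vector, `0` for the empty one. -/
def hd {n : ℕ} (y : Fin n → ℝ) : ℝ := if h : 0 < n then y ⟨0, h⟩ else 0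

/-- Energy `∑ V_k(z_k) - ∑ c_k z_k z_{k+1}` of a chain of `n` sites. -/
def chE : (n : ℕ) → (ℕ → ℝ → ℝ) → (ℕ → ℝ) → (Fin n → ℝ) → ℝ
  | 0, _, _, _ => 0
  | n + 1, V, c, z => (V 0 (z 0) - (c 0 * hd (Fin.tail z)) * z 0)
      + chE n (fun k => V (k + 1)) (fun k => c (k + 1)) (Fin.tail z)

/-- Convexity hypotheses on a chain whose first site has no left neighbour: each potential
dominates its couplings with a margin `δ`. -/
structure ChainOK (V : ℕ → ℝ → ℝ) (c : ℕ → ℝ) (δ : ℝ) : Prop where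
  c_nonneg : ∀ k, 0 ≤ c k
  head : NiceV (V 0) (δ + c 0)
  tail : ∀ k, NiceV (V (k + 1)) (δ + c k + c (k + 1))

/-- Potentials of the chain obtained by integrating out the first site. -/
noncomputable def marg (V : ℕ → ℝ → ℝ) (c : ℕ → ℝ) : ℕ → ℝ → ℝ
  | 0 => fun s => V 1 s - logZ (V 0) (c 0 * s)
  | k + 1 => V (k + 2)

/-- The margin `δ` survives the integration of the first site. -/
lemma ChainOK.marg_ok {V : ℕ → ℝ → ℝ} {c : ℕ → ℝ} {δ : ℝ} (h : ChainOK V c δ) (hδ : 0 < δ) :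
    ChainOK (marg V c) (fun k => c (k + 1)) δ where
  c_nonneg _ := h.c_nonneg _
  head := NiceV.marginal hδ (h.c_nonneg 0) h.head (h.tail 0)
  tail k := h.tail (k + 1)

/-- The constant only occurs for the empty chain and does not affect the Gibbs measure. -/
lemma chE_marg (n : ℕ) (V : ℕ → ℝ → ℝ) (c : ℕ → ℝ) : ∃ K : ℝ, ∀ y : Fin n → ℝ,
    chE n (fun k => V (k + 1)) (fun k => c (k + 1)) y - logZ (V 0) (c 0 * hd y)
      = chE n (marg V c) (fun k => c (k + 1)) y + K := by
  cases n with
  | zero => exact ⟨- logZ (V 0) 0, fun y => by simp [chE, hd]⟩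
  | succ n =>
    refine ⟨0, fun y => ?_⟩
    simp only [chE, marg, hd]
    simp
    ring

lemma continuous_hd {n : ℕ} : Continuous (hd : (Fin n → ℝ) → ℝ) := by
  unfold hd
  split_ifs <;> fun_prop

lemma abs_hd_le {n : ℕ} (y : Fin n → ℝ) : |hd y| ≤ ‖y‖ := by
  unfold hd
  split_ifs
  · exact norm_le_pi_norm y _
  · simp

lemma continuous_tail {n : ℕ} : Continuous (Fin.tail : (Fin (n + 1) → ℝ) → (Fin n → ℝ)) := by
  unfold Fin.tail; fun_prop

lemma continuous_chE (n : ℕ) : ∀ (V : ℕ → ℝ → ℝ) (c : ℕ → ℝ), (∀ k, Continuous (V k)) →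
    Continuous (chE n V c) := by
  induction n with
  | zero => intro V c _; exact continuous_const
  | succ n ih =>
    intro V c hV
    have h1 := hV 0
    have h2 := (ih (fun k => V (k + 1)) (fun k => c (k + 1)) fun k => hV _).comp continuous_tail
    have h3 : Continuous fun z : Fin (n + 1) → ℝ => hd (Fin.tail z) :=
      continuous_hd.comp continuous_tail
    have h4 : Continuous fun z : Fin (n + 1) → ℝ => V 0 (z 0) - c 0 * hd (Fin.tail z) * z 0 := by
      fun_prop
    exact h4.add h2

lemma ChainOK.continuous {V : ℕ → ℝ → ℝ} {c : ℕ → ℝ} {δ : ℝ} (h : ChainOK V c δ) (n : ℕ) :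
    Continuous (chE n V c) :=
  continuous_chE n V c fun k => by
    cases k with
    | zero => exact h.head.continuous
    | succ k => exact (h.tail k).continuous

/-- Quadratic lower bound for the energy; the surplus `e` is what the first site keeps for an
additional left neighbour. -/
lemma chE_lower {δ : ℝ} (n : ℕ) : ∀ (V : ℕ → ℝ → ℝ) (c : ℕ → ℝ) (e : ℝ),
    (∀ k, 0 ≤ c k) → NiceV (V 0) (δ + e + c 0) →
    (∀ k, NiceV (V (k + 1)) (δ + c k + c (k + 1))) →
    ∃ A b : ℝ, 0 ≤ b ∧ ∀ z : Fin n → ℝ,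
      e / 2 * hd z ^ 2 + ∑ i, (δ / 2 * z i ^ 2 - b * |z i|) - A ≤ chE n V c z := by
  induction n with
  | zero => intro V c e _ _ _; exact ⟨0, 0, le_rfl, fun z => by simp [chE, hd]⟩
  | succ n ih =>
    intro V c e hc h0 ht
    obtain ⟨A, b, hb, hl⟩ := ih (fun k => V (k + 1)) (fun k => c (k + 1)) (c 0) (fun k => hc _)
      (ht 0) (fun k => ht _)
    obtain ⟨b', hb', hl'⟩ := h0.lower
    refine ⟨A - V 0 0, b + b', by positivity, fun z => ?_⟩
    have h1 := hl (Fin.tail z)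
    have h2 := hl' (z 0)
    have h3 : ∑ i, (δ / 2 * Fin.tail z i ^ 2 - (b + b') * |Fin.tail z i|)
        ≤ ∑ i, (δ / 2 * Fin.tail z i ^ 2 - b * |Fin.tail z i|) :=
      Finset.sum_le_sum fun i _ => by nlinarith [abs_nonneg (Fin.tail z i)]
    have h4 : hd z = z 0 := by simp [hd]
    have h5 : (c 0 * hd (Fin.tail z)) * z 0 ≤ c 0 / 2 * hd (Fin.tail z) ^ 2 + c 0 / 2 * z 0 ^ 2 := by
      nlinarith [mul_nonneg (hc 0) (sq_nonneg (hd (Fin.tail z) - z 0))]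
    rw [Fin.sum_univ_succ, h4, chE]
    change _ + (_ + ∑ i, (δ / 2 * Fin.tail z i ^ 2 - (b + b') * |Fin.tail z i|)) - _ ≤ _
    nlinarith [abs_nonneg (z 0), mul_nonneg hb (abs_nonneg (z 0))]

section chain
variable {V : ℕ → ℝ → ℝ} {c : ℕ → ℝ} {δ : ℝ} {n : ℕ}

lemma ChainOK.integrable (h : ChainOK V c δ) (hδ : 0 < δ) {f : (Fin n → ℝ) → ℝ}
    (hf : EB f) (hfc : Continuous f) : Integrable (fun z => f z * Real.exp (- chE n V c z)) := by
  obtain ⟨A, b, hb, hl⟩ := chE_lower (δ := δ) n V c 0 h.c_nonneg (by simpa using h.head) h.tail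
  obtain ⟨C, a, hC, ha, hf⟩ := hf
  have hprod : Integrable (fun z : Fin n → ℝ =>
      ∏ i, Real.exp (0 + (a + b) * |z i| - δ / 2 * z i ^ 2)) :=
    Integrable.fintype_prod (f := fun (_ : Fin n) x => Real.exp (0 + (a + b) * |x| - δ / 2 * x ^ 2))
      fun _ => exp_quad_integrable hδ 0 (a + b)
  refine Integrable.mono' (hprod.const_mul (C * Real.exp A))
    (hfc.mul (Real.continuous_exp.comp (h.continuous n).neg)).aestronglyMeasurable
    (Filter.Eventually.of_forall fun z => ?_)
  have hn : ‖z‖ ≤ ∑ i, |z i| := by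
    refine (pi_norm_le_iff_of_nonneg (Finset.sum_nonneg fun i _ => abs_nonneg _)).2 fun i => ?_
    exact Finset.single_le_sum (f := fun i => |z i|) (fun i _ => abs_nonneg _) (Finset.mem_univ i)
  have hz := hl z
  rw [norm_mul, Real.norm_eq_abs, Real.norm_eq_abs, Real.abs_exp]
  calc |f z| * Real.exp (- chE n V c z)
      ≤ (C * Real.exp (a * ∑ i, |z i|))
        * Real.exp (A - ∑ i, (δ / 2 * z i ^ 2 - b * |z i|)) := by
        gcongr
        · exact (hf z).trans (by gcongr)
        · linarith
    _ = _ := by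
        rw [← Real.exp_sum, mul_assoc, mul_assoc, ← Real.exp_add, ← Real.exp_add]
        congr 2
        have hs : ∑ i, (0 + (a + b) * |z i| - δ / 2 * z i ^ 2)
            = a * ∑ i, |z i| - ∑ i, (δ / 2 * z i ^ 2 - b * |z i|) := by
          rw [Finset.mul_sum, ← Finset.sum_sub_distrib]
          exact Finset.sum_congr rfl fun i _ => by ring
        rw [hs]; ring

lemma ChainOK.integrable_exp (h : ChainOK V c δ) (hδ : 0 < δ) :
    Integrable (fun z => Real.exp (- chE n V c z)) := by
  simpa using h.integrable hδ (n := n) (EB.const 1) continuous_const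

lemma ChainOK.gib_int (h : ChainOK V c δ) (hδ : 0 < δ) {f : (Fin n → ℝ) → ℝ}
    (hf : EB f) (hfc : Continuous f) : Integrable f (gib (chE n V c)) :=
  gib_integrable (h.integrable_exp hδ) (h.integrable hδ hf hfc)

lemma ChainOK.isProb (h : ChainOK V c δ) (hδ : 0 < δ) (n : ℕ) :
    IsProbabilityMeasure (gib (chE n V c)) :=
  isProbabilityMeasure_tilted (h.integrable_exp hδ)

/-- Conditional law of the first coordinate given the others. -/
noncomputable def cond1 (V : ℕ → ℝ → ℝ) (c : ℕ → ℝ) (y : Fin n → ℝ) : Measure ℝ :=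
  gib (fun x => V 0 x - (c 0 * hd y) * x)

/-- Conditional expectation given all coordinates but the first. -/
noncomputable def condE (V : ℕ → ℝ → ℝ) (c : ℕ → ℝ) (g : (Fin (n + 1) → ℝ) → ℝ)
    (y : Fin n → ℝ) : ℝ :=
  ∫ x, g (Fin.cons x y : Fin (n + 1) → ℝ) ∂cond1 V c y

lemma EB.comp {X Y : Type*} [NormedAddCommGroup X] [NormedAddCommGroup Y] {f : X → ℝ}
    (hf : EB f) {φ : Y → X} {A : ℝ} (h : ∀ y, ‖φ y‖ ≤ A + ‖y‖) : EB (fun y => f (φ y)) := by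
  obtain ⟨C, a, hC, ha, hb⟩ := hf
  refine ⟨C * Real.exp (a * A), a, by positivity, ha, fun y => (hb _).trans ?_⟩
  rw [mul_assoc, ← Real.exp_add, ← mul_add]
  gcongr
  exact h y

lemma norm_cons_le (x : ℝ) (y : Fin n → ℝ) :
    ‖(Fin.cons x y : Fin (n + 1) → ℝ)‖ ≤ ‖(y, x)‖ := by
  refine (pi_norm_le_iff_of_nonneg (norm_nonneg _)).2 fun i => ?_
  refine Fin.cases ?_ (fun j => ?_) i
  · exact norm_snd_le (y, x)
  · exact (norm_le_pi_norm y j).trans (norm_fst_le (y, x))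

lemma continuous_cons :
    Continuous fun p : (Fin n → ℝ) × ℝ => (Fin.cons p.2 p.1 : Fin (n + 1) → ℝ) := by
  refine continuous_pi fun i => ?_
  refine Fin.cases ?_ (fun j => ?_) i
  · exact continuous_snd
  · exact (continuous_apply j).comp continuous_fst

lemma EB.cons {g : (Fin (n + 1) → ℝ) → ℝ} (hg : EB g) :
    EB (fun p : (Fin n → ℝ) × ℝ => g (Fin.cons p.2 p.1)) :=
  hg.comp (A := 0) fun p => by rw [zero_add]; exact norm_cons_le p.2 p.1

lemma ChainOK.head_pos (h : ChainOK V c δ) (hδ : 0 < δ) : 0 < δ + c 0 :=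
  add_pos_of_pos_of_nonneg hδ (h.c_nonneg 0)

lemma ChainOK.condE_EB (h : ChainOK V c δ) (hδ : 0 < δ) {g : (Fin (n + 1) → ℝ) → ℝ}
    (hg : EB g) : EB (condE V c g) :=
  h.head.mean_EB (h.head_pos hδ) hg.cons (h.c_nonneg 0) fun y => by
    rw [abs_mul, abs_of_nonneg (h.c_nonneg 0)]
    exact mul_le_mul_of_nonneg_left (abs_hd_le y) (h.c_nonneg 0)

lemma ChainOK.condE_continuous (h : ChainOK V c δ) (hδ : 0 < δ) {g : (Fin (n + 1) → ℝ) → ℝ}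
    (hg : EB g) (hgc : Continuous g) : Continuous (condE V c g) :=
  h.head.mean_continuous (h.head_pos hδ) hg.cons (hgc.comp continuous_cons)
    (continuous_const.mul continuous_hd)

lemma integral_fin_succ (G : (Fin (n + 1) → ℝ) → ℝ) (hG : Integrable G) :
    ∫ z, G z = ∫ y : Fin n → ℝ, ∫ x : ℝ, G (Fin.cons x y) := by
  have hmp := (volume_preserving_piFinSuccAbove (fun _ : Fin (n + 1) => ℝ) 0).symm
  have e : ∀ p : ℝ × (Fin n → ℝ),
      (MeasurableEquiv.piFinSuccAbove (fun _ : Fin (n + 1) => ℝ) 0).symm p = Fin.cons p.1 p.2 := by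
    intro p
    simp [MeasurableEquiv.piFinSuccAbove_symm_apply]
    rfl
  rw [← hmp.integral_comp' G]
  have hi := (hmp.integrable_comp_emb (MeasurableEquiv.measurableEmbedding _) (g := G)).2 hG
  simp only [e]
  have hi' : Integrable (fun p : ℝ × (Fin n → ℝ) => G (Fin.cons p.1 p.2)) := by
    refine hi.congr (Filter.Eventually.of_forall fun p => ?_)
    simp only [Function.comp, e]
  exact integral_prod_symm _ hi'

/-- Disintegration of the Gibbs measure of a chain along its first site. -/
lemma ChainOK.disintegrate (h : ChainOK V c δ) (hδ : 0 < δ) {g : (Fin (n + 1) → ℝ) → ℝ}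
    (hg : EB g) (hgc : Continuous g) :
    ∫ z, g z ∂gib (chE (n + 1) V c)
      = ∫ y, condE V c g y ∂gib (chE n (marg V c) (fun k => c (k + 1))) := by
  have hρ := h.head_pos hδ
  obtain ⟨K, hK⟩ := chE_marg n V c
  have key : ∀ {g : (Fin (n + 1) → ℝ) → ℝ}, EB g → Continuous g →
      ∫ z, g z * Real.exp (- chE (n + 1) V c z) = Real.exp (- K) *
        ∫ y, condE V c g y * Real.exp (- chE n (marg V c) (fun k => c (k + 1)) y) := by
    intro g hg hgc
    rw [integral_fin_succ _ (h.integrable hδ hg hgc), ← integral_const_mul]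
    congr 1; ext y
    have hZ := h.head.exp_logZ hρ (c 0 * hd y)
    rw [condE, cond1, gib_integral, ← hZ, div_eq_mul_inv, ← Real.exp_neg, ← integral_mul_const,
      ← integral_mul_const, ← integral_const_mul]
    congr 1; ext x
    have hKy := hK y
    have e1 : chE (n + 1) V c (Fin.cons x y) = (V 0 x - (c 0 * hd y) * x)
        + chE n (fun k => V (k + 1)) (fun k => c (k + 1)) y := by
      simp [chE]
    have e2 : - chE (n + 1) V c (Fin.cons x y) = (-(V 0 x - (c 0 * hd y) * x))
        + (- logZ (V 0) (c 0 * hd y)) + (- chE n (marg V c) (fun k => c (k + 1)) y) + (- K) := by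
      rw [e1]; linarith
    rw [e2, Real.exp_add, Real.exp_add, Real.exp_add]
    ring
  have k1 := key hg hgc
  have k2 := key (EB.const 1) continuous_const
  have one : ∀ y : Fin n → ℝ, condE V c (fun _ => 1) y = 1 := fun y => by
    have := (h.head.tilt (c 0 * hd y)).isProb hρ
    simp [condE, cond1]
  simp only [one, one_mul] at k2
  rw [gib_integral, gib_integral, k1, k2, mul_div_mul_left _ _ (Real.exp_pos _).ne']

end chain

/-! ### Covariance bound by induction on the length of the chain -/

/-- `u` is a function of `n` real variables with partial derivatives `du k`, all of them continuous
and at most exponentially growing. -/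
structure CD {n : ℕ} (u : (Fin n → ℝ) → ℝ) (du : Fin n → (Fin n → ℝ) → ℝ) : Prop where
  cont : Continuous u
  eb : EB u
  dcont : ∀ k, Continuous (du k)
  deb : ∀ k, EB (du k)
  deriv : ∀ k z t, HasDerivAt (fun s => u (Function.update z k s)) (du k (Function.update z k t)) t

section main
variable {V : ℕ → ℝ → ℝ} {c : ℕ → ℝ} {δ : ℝ} {n : ℕ}

/-- Partial derivatives of `condE V c u`. The covariance term comes from the dependence of the
conditional law on the first remaining coordinate. -/
noncomputable def condD (V : ℕ → ℝ → ℝ) (c : ℕ → ℝ) (u : (Fin (n + 1) → ℝ) → ℝ)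
    (du : Fin (n + 1) → (Fin (n + 1) → ℝ) → ℝ) (k : Fin n) (y : Fin n → ℝ) : ℝ :=
  condE V c (du k.succ) y + (if (k : ℕ) = 0 then c 0 else 0) *
    (condE V c (fun z => u z * z 0) y - condE V c u y * condE V c (fun z => z 0) y)

lemma EB.coord {n : ℕ} (k : Fin n) : EB (fun z : Fin n → ℝ => z k) :=
  EB.norm.mono fun z => by rw [abs_of_nonneg (norm_nonneg z)]; exact norm_le_pi_norm z k

lemma norm_update_le {n : ℕ} (y : Fin n → ℝ) (k : Fin n) (s : ℝ) :
    ‖Function.update y k s‖ ≤ ‖y‖ + |s| := by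
  refine (pi_norm_le_iff_of_nonneg (by positivity)).2 fun i => ?_
  by_cases h : i = k
  · subst h; simp
  · rw [Function.update_of_ne h]
    exact (norm_le_pi_norm y i).trans (by simp)

lemma hd_update {n : ℕ} (y : Fin n → ℝ) (k : Fin n) (t : ℝ) :
    hd (Function.update y k t) = if (k : ℕ) = 0 then t else hd y := by
  have hn : 0 < n := lt_of_le_of_lt (Nat.zero_le _) k.2
  unfold hd
  simp only [hn, dif_pos]
  split_ifs with h
  · have : k = ⟨0, hn⟩ := Fin.ext h
    subst this; simp
  · rw [Function.update_of_ne]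
    intro h'; exact h (by rw [← h'])

lemma CD.condE_cd (h : ChainOK V c δ) (hδ : 0 < δ) {u : (Fin (n + 1) → ℝ) → ℝ}
    {du : Fin (n + 1) → (Fin (n + 1) → ℝ) → ℝ} (hu : CD u du) :
    CD (condE V c u) (condD V c u du) where
  cont := h.condE_continuous hδ hu.eb hu.cont
  eb := h.condE_EB hδ hu.eb
  dcont k := by
    have h1 := h.condE_continuous hδ (hu.deb k.succ) (hu.dcont k.succ)
    have h2 := h.condE_continuous hδ hu.eb hu.cont
    have h3 := h.condE_continuous hδ (hu.eb.mul (EB.coord 0)) (hu.cont.mul (continuous_apply 0))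
    have h4 := h.condE_continuous (n := n) hδ (EB.coord 0) (continuous_apply 0)
    exact h1.add (continuous_const.mul (h3.sub (h2.mul h4)))
  deb k := (h.condE_EB hδ (hu.deb k.succ)).add ((EB.const _).mul
    ((h.condE_EB hδ (hu.eb.mul (EB.coord 0))).sub
      ((h.condE_EB hδ hu.eb).mul (h.condE_EB hδ (EB.coord 0)))))
  deriv k y t := by
    have hρ := h.head_pos hδ
    -- the tilt `c 0 * hd` is affine in the `k`-th coordinate, with these coefficients
    set q : ℝ := if (k : ℕ) = 0 then c 0 else 0 with hq
    set p : ℝ := if (k : ℕ) = 0 then 0 else c 0 * hd y with hp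
    have hpq : ∀ s, c 0 * hd (Function.update y k s) = p + q * s := fun s => by
      rw [hd_update, hp, hq]; split_ifs <;> ring
    have hb : ∀ z : ℝ × ℝ,
        ‖(Fin.cons z.2 (Function.update y k z.1) : Fin (n + 1) → ℝ)‖ ≤ ‖y‖ + ‖z‖ := fun z => by
      refine (norm_cons_le _ _).trans (max_le ?_ ?_)
      · exact (norm_update_le y k z.1).trans (by gcongr; exact norm_fst_le z)
      · exact (norm_snd_le z).trans (by linarith [norm_nonneg y])
    have hcx : ∀ s, Continuous fun x : ℝ =>
        (Fin.cons x (Function.update y k s) : Fin (n + 1) → ℝ) := fun s =>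
      continuous_cons.comp (continuous_const.prodMk continuous_id)
    have key := h.head.hasDerivAt_mean hρ
      (u := fun z => u (Fin.cons z.2 (Function.update y k z.1)))
      (u' := fun z => du k.succ (Fin.cons z.2 (Function.update y k z.1)))
      (fun t x => by
        have := hu.deriv k.succ (Fin.cons x y) t
        simpa only [← Fin.cons_update] using this)
      (fun s => hu.cont.comp (hcx s)) (fun s => (hu.dcont k.succ).comp (hcx s))
      (hu.eb.comp hb) ((hu.deb k.succ).comp hb) p q t
    simp only [← hpq] at key
    simp only [condD, condE, cond1, Fin.cons_zero]
    exact key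

/-- Poincaré inequality for the conditional law of the first site. -/
lemma CD.cond_var (h : ChainOK V c δ) (hδ : 0 < δ) {u : (Fin (n + 1) → ℝ) → ℝ}
    {du : Fin (n + 1) → (Fin (n + 1) → ℝ) → ℝ} (hu : CD u du) (y : Fin n → ℝ) :
    (δ + c 0) * (condE V c (fun z => u z ^ 2) y - condE V c u y ^ 2)
      ≤ condE V c (fun z => du 0 z ^ 2) y := by
  have hcx : Continuous fun x : ℝ => (Fin.cons x y : Fin (n + 1) → ℝ) :=
    continuous_cons.comp (continuous_const.prodMk continuous_id)
  exact (h.head.tilt (c 0 * hd y)).poincare (h.head_pos hδ)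
    (f := fun x => u (Fin.cons x y)) (f' := fun x => du 0 (Fin.cons x y))
    (fun x => by simpa using hu.deriv 0 (Fin.cons 0 y) x) ((hu.dcont 0).comp hcx)
    ((hu.deb 0).comp (A := ‖y‖) fun x => (norm_cons_le x y).trans
      (max_le (by simp) (by simp)))

lemma ChainOK.cond_int (h : ChainOK V c δ) (hδ : 0 < δ) {g : (Fin (n + 1) → ℝ) → ℝ}
    (hg : EB g) (hgc : Continuous g) (y : Fin n → ℝ) :
    Integrable (fun x => g (Fin.cons x y)) (cond1 V c y) :=
  (h.head.tilt (c 0 * hd y)).gib_int (h.head_pos hδ)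
    (hg.comp (A := ‖y‖) fun x => (norm_cons_le x y).trans (max_le (by simp) (by simp)))
    (hgc.comp (continuous_cons.comp (continuous_const.prodMk continuous_id)))

lemma ChainOK.cond_prob (h : ChainOK V c δ) (hδ : 0 < δ) (y : Fin n → ℝ) :
    IsProbabilityMeasure (cond1 V c y) :=
  (h.head.tilt (c 0 * hd y)).isProb (h.head_pos hδ)

lemma ChainOK.cond_comb (h : ChainOK V c δ) (hδ : 0 < δ) {u v : (Fin (n + 1) → ℝ) → ℝ}
    (hu : EB u) (huc : Continuous u) (hv : EB v) (hvc : Continuous v) (y : Fin n → ℝ) (a b : ℝ) :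
    0 ≤ a ^ 2 * (condE V c (fun z => u z ^ 2) y - condE V c u y ^ 2)
      + 2 * a * b * (condE V c (fun z => u z * v z) y - condE V c u y * condE V c v y)
      + b ^ 2 * (condE V c (fun z => v z ^ 2) y - condE V c v y ^ 2) := by
  have := h.cond_prob hδ y
  exact var_comb_nonneg (h.cond_int hδ hu huc y) (h.cond_int hδ hv hvc y)
    (h.cond_int hδ hu.sq (huc.pow 2) y) (h.cond_int hδ hv.sq (hvc.pow 2) y)
    (h.cond_int hδ (hu.mul hv) (huc.mul hvc) y) a b

lemma ChainOK.cond_sq_le (h : ChainOK V c δ) (hδ : 0 < δ) {u : (Fin (n + 1) → ℝ) → ℝ}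
    (hu : EB u) (huc : Continuous u) (y : Fin n → ℝ) :
    condE V c u y ^ 2 ≤ condE V c (fun z => u z ^ 2) y := by
  have := h.cond_prob hδ y
  exact sq_integral_le (h.cond_int hδ hu huc y) (h.cond_int hδ hu.sq (huc.pow 2) y)

lemma cond_nonneg {u : (Fin (n + 1) → ℝ) → ℝ} (hu : ∀ z, 0 ≤ u z) (y : Fin n → ℝ) :
    0 ≤ condE V c u y := integral_nonneg fun _ => hu _

lemma CD.cond_cov (h : ChainOK V c δ) (hδ : 0 < δ) {u v : (Fin (n + 1) → ℝ) → ℝ}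
    {du dv : Fin (n + 1) → (Fin (n + 1) → ℝ) → ℝ} (hu : CD u du) (hv : CD v dv) {w : ℝ}
    (hw : 0 < w) (y : Fin n → ℝ) :
    |condE V c (fun z => u z * v z) y - condE V c u y * condE V c v y|
      ≤ (δ + c 0)⁻¹ * (w * condE V c (fun z => du 0 z ^ 2) y
        + w⁻¹ * condE V c (fun z => dv 0 z ^ 2) y) / 2 := by
  have hρ := h.head_pos hδ
  have h1 := hu.cond_var h hδ y
  have h2 := hv.cond_var h hδ y
  have h3 := h.cond_comb hδ hu.eb hu.cont hv.eb hv.cont y w 1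
  have h4 := h.cond_comb hδ hu.eb hu.cont hv.eb hv.cont y w (-1)
  set A := condE V c (fun z => du 0 z ^ 2) y
  set B := condE V c (fun z => dv 0 z ^ 2) y
  set X := condE V c (fun z => u z ^ 2) y - condE V c u y ^ 2
  set Y := condE V c (fun z => v z ^ 2) y - condE V c v y ^ 2
  set Z := condE V c (fun z => u z * v z) y - condE V c u y * condE V c v y
  have e : (δ + c 0)⁻¹ * (w * A + w⁻¹ * B) / 2 = (w ^ 2 * A + B) / (2 * w * (δ + c 0)) := by
    field_simp
  rw [e, le_div_iff₀ (by positivity)]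
  have h5 : (δ + c 0) * (w ^ 2 * X + Y) ≤ w ^ 2 * A + B := by nlinarith [sq_nonneg w]
  have h6 : 2 * w * |Z| ≤ w ^ 2 * X + Y := by
    rcases abs_cases Z with ⟨h, _⟩ | ⟨h, _⟩ <;> rw [h] <;> nlinarith
  nlinarith

/-- The squared covariance of `u` with the integrated-out coordinate, from Cauchy–Schwarz and the
Poincaré inequality applied to both factors. -/
lemma CD.cond_cov_coord (h : ChainOK V c δ) (hδ : 0 < δ) {u : (Fin (n + 1) → ℝ) → ℝ}
    {du : Fin (n + 1) → (Fin (n + 1) → ℝ) → ℝ} (hu : CD u du) (y : Fin n → ℝ) :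
    (δ + c 0) ^ 2 * (condE V c (fun z => u z * z 0) y
        - condE V c u y * condE V c (fun z => z 0) y) ^ 2
      ≤ condE V c (fun z => du 0 z ^ 2) y := by
  have hρ := h.head_pos hδ
  have h1 := hu.cond_var h hδ y
  have h2 : (δ + c 0) * (condE V c (fun z => z 0 ^ 2) y
      - condE V c (fun z => z 0) y ^ 2) ≤ 1 := by
    have := h.cond_prob hδ y
    have := (h.head.tilt (c 0 * hd y)).poincare hρ (f := fun x => x) (f' := fun _ => 1)
      (fun x => hasDerivAt_id x) continuous_const (EB.const 1)
    have h1 := (h.head.tilt (c 0 * hd y)).isProb hρ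
    simpa [condE, cond1] using this
  set A := condE V c (fun z => du 0 z ^ 2) y
  set Z := condE V c (fun z => u z * z 0) y
        - condE V c u y * condE V c (fun z => z 0) y with hZ
  have h3 := h.cond_comb hδ hu.eb hu.cont (EB.coord 0) (continuous_apply 0) y 1 (-((δ + c 0) * Z))
  rw [← hZ] at h3
  have h4 := mul_le_mul_of_nonneg_left h2 (mul_nonneg hρ.le (sq_nonneg Z))
  nlinarith

/-- Gradient estimate for a conditional expectation. -/
lemma CD.condD_sq (h : ChainOK V c δ) (hδ : 0 < δ) {u : (Fin (n + 1) → ℝ) → ℝ}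
    {du : Fin (n + 1) → (Fin (n + 1) → ℝ) → ℝ} (hu : CD u du) {s : ℝ} (hs : 0 < s) (hs1 : s < 1)
    (k : Fin n) (y : Fin n → ℝ) :
    condD V c u du k y ^ 2 ≤ if (k : ℕ) = 0 then
        (1 - s)⁻¹ * condE V c (fun z => du k.succ z ^ 2) y
          + s⁻¹ * (c 0 / (δ + c 0)) ^ 2 * condE V c (fun z => du 0 z ^ 2) y
      else condE V c (fun z => du k.succ z ^ 2) y := by
  have hρ := h.head_pos hδ
  have h1 := h.cond_sq_le hδ (hu.deb k.succ) (hu.dcont k.succ) y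
  unfold condD
  split_ifs with hk
  · have h2 := hu.cond_cov_coord h hδ y
    set A := condE V c (fun z => du 0 z ^ 2) y
    set B := condE V c (fun z => du k.succ z ^ 2) y
    set b := condE V c (du k.succ) y
    set Z := condE V c (fun z => u z * z 0) y
        - condE V c u y * condE V c (fun z => z 0) y
    have hs' : 0 < 1 - s := by linarith
    have h3 : Z ^ 2 ≤ A / (δ + c 0) ^ 2 := by
      rw [le_div_iff₀ (by positivity)]; linarith
    have e : (1 - s)⁻¹ * b ^ 2 + s⁻¹ * (c 0 * Z) ^ 2 - (b + c 0 * Z) ^ 2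
        = (1 - s)⁻¹ * s⁻¹ * (s * b - (1 - s) * (c 0 * Z)) ^ 2 := by
      field_simp; ring
    have e' : 0 ≤ (1 - s)⁻¹ * s⁻¹ * (s * b - (1 - s) * (c 0 * Z)) ^ 2 := by positivity
    have e2 : s⁻¹ * (c 0 * Z) ^ 2 ≤ s⁻¹ * (c 0 / (δ + c 0)) ^ 2 * A := by
      calc s⁻¹ * (c 0 * Z) ^ 2 = s⁻¹ * c 0 ^ 2 * Z ^ 2 := by ring
        _ ≤ s⁻¹ * c 0 ^ 2 * (A / (δ + c 0) ^ 2) := by gcongr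
        _ = _ := by field_simp
    have e3 : (1 - s)⁻¹ * b ^ 2 ≤ (1 - s)⁻¹ * B := by gcongr
    linarith
  · simpa using h1

/-- Coefficients of the covariance bound; the first site has the smaller one. -/
noncomputable def kap (δ s : ℝ) (k : ℕ) : ℝ :=
  if k = 0 then (δ * (1 - s))⁻¹ else (δ * (1 - s))⁻¹ * (1 - s)⁻¹

/-- The weighted gradient energy pays for one step of the induction: the energy of `condE V c u`
plus the conditional Poincaré term at the first site is at most the energy of `u`. -/
lemma CD.energy_step (h : ChainOK V c δ) (hδ : 0 < δ) {u : (Fin (n + 1) → ℝ) → ℝ}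
    {du : Fin (n + 1) → (Fin (n + 1) → ℝ) → ℝ} (hu : CD u du) {s : ℝ} (hs : 0 < s) (hs1 : s < 1)
    {W : ℕ → ℝ} (hW : ∀ k, 0 < W k) (hW0 : (c 0 / (δ + c 0)) ^ 2 * W 1 ≤ s ^ 2 * W 0) :
    (δ + c 0)⁻¹ * (W 0 * ∫ z, du 0 z ^ 2 ∂gib (chE (n + 1) V c))
      + ∑ k : Fin n, kap δ s k * (W (k + 1) *
          ∫ y, condD V c u du k y ^ 2 ∂gib (chE n (marg V c) (fun k => c (k + 1))))
      ≤ ∑ k : Fin (n + 1), kap δ s k * (W k * ∫ z, du k z ^ 2 ∂gib (chE (n + 1) V c)) := by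
  have hρ := h.head_pos hδ
  have hm := h.marg_ok hδ
  have hs' : 0 < 1 - s := by linarith
  have hU := hu.condE_cd h hδ
  set A : Fin (n + 1) → ℝ := fun k => ∫ z, du k z ^ 2 ∂gib (chE (n + 1) V c) with hA
  have hA0 : 0 ≤ A 0 := integral_nonneg fun _ => sq_nonneg _
  have hc2 : ∀ k, Continuous fun z => du k z ^ 2 := fun k => (hu.dcont k).pow 2
  have hdis : ∀ k, ∫ y, condE V c (fun z => du k z ^ 2) y
      ∂gib (chE n (marg V c) (fun k => c (k + 1))) = A k := fun k =>
    (h.disintegrate hδ (hu.deb k).sq (hc2 k)).symm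
  have hint : ∀ k, Integrable (condE V c (fun z => du k z ^ 2))
      (gib (chE n (marg V c) (fun k => c (k + 1)))) := fun k =>
    hm.gib_int hδ (h.condE_EB hδ (hu.deb k).sq) (h.condE_continuous hδ (hu.deb k).sq (hc2 k))
  have hterm : ∀ k : Fin n, kap δ s k * (W (k + 1) *
      ∫ y, condD V c u du k y ^ 2 ∂gib (chE n (marg V c) (fun k => c (k + 1))))
      ≤ kap δ s (k + 1) * (W (k + 1) * A k.succ)
        + if (k : ℕ) = 0 then (δ * (1 - s))⁻¹ * s * (W 0 * A 0) else 0 := fun k => by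
    have hi := hm.gib_int hδ (hU.deb k).sq ((hU.dcont k).pow 2)
    have hle := hu.condD_sq h hδ hs hs1 k
    by_cases hk : (k : ℕ) = 0
    · simp only [hk, if_true] at hle ⊢
      have h1 := integral_mono hi (((hint k.succ).const_mul _).add ((hint 0).const_mul _)) hle
      simp only [Pi.add_apply] at h1
      rw [integral_add ((hint k.succ).const_mul _) ((hint 0).const_mul _), integral_const_mul,
        integral_const_mul, hdis, hdis] at h1
      have hK : kap δ s 0 = (δ * (1 - s))⁻¹ := by simp [kap]
      have hK1 : kap δ s (0 + 1) = (δ * (1 - s))⁻¹ * (1 - s)⁻¹ := by simp [kap]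
      rw [hK, hK1]
      have hW1 := hW (0 + 1)
      calc (δ * (1 - s))⁻¹ * (W (0 + 1) * _)
          ≤ (δ * (1 - s))⁻¹ * (W (0 + 1) * ((1 - s)⁻¹ * A k.succ
            + s⁻¹ * (c 0 / (δ + c 0)) ^ 2 * A 0)) := by gcongr
        _ = (δ * (1 - s))⁻¹ * (1 - s)⁻¹ * (W (0 + 1) * A k.succ)
            + (δ * (1 - s))⁻¹ * s⁻¹ * ((c 0 / (δ + c 0)) ^ 2 * W 1) * A 0 := by
              rw [zero_add]; ring
        _ ≤ (δ * (1 - s))⁻¹ * (1 - s)⁻¹ * (W (0 + 1) * A k.succ)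
            + (δ * (1 - s))⁻¹ * s⁻¹ * (s ^ 2 * W 0) * A 0 := by gcongr
        _ = _ := by field_simp
    · simp only [hk, if_false] at hle ⊢
      have h1 := integral_mono hi (hint k.succ) hle
      rw [hdis] at h1
      have hK : kap δ s (k + 1) = kap δ s k := by simp [kap, hk]
      have hK0 : 0 ≤ kap δ s k := by unfold kap; split_ifs; positivity
      rw [hK, add_zero]
      have hW1 := (hW (k + 1)).le
      gcongr
  have hsum : ∑ k : Fin n, (if (k : ℕ) = 0 then (δ * (1 - s))⁻¹ * s * (W 0 * A 0) else 0)
      ≤ (δ * (1 - s))⁻¹ * s * (W 0 * A 0) := by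
    have hW0 := hW 0
    cases n with
    | zero => simp; positivity
    | succ n => rw [Fin.sum_univ_succ]; simp
  have htot := Finset.sum_le_sum fun k (_ : k ∈ (Finset.univ : Finset (Fin n))) => hterm k
  rw [Finset.sum_add_distrib] at htot
  rw [Fin.sum_univ_succ]
  have hinv : (δ + c 0)⁻¹ ≤ (δ * (1 - s))⁻¹ * (1 - s) := by
    have : (δ * (1 - s))⁻¹ * (1 - s) = δ⁻¹ := by field_simp
    rw [this]
    exact inv_anti₀ hδ (by linarith [h.c_nonneg 0])
  have hfin := mul_le_mul_of_nonneg_right hinv (mul_nonneg (hW 0).le hA0)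
  have hK : kap δ s ((0 : Fin (n + 1)) : ℕ) = (δ * (1 - s))⁻¹ := by simp [kap]
  rw [hK]
  simp only [Fin.val_succ, Fin.val_zero]
  nlinarith

end main

/-- Weighted covariance bound. The weights `W` may vary between neighbouring sites by a factor up to
`(s (δ + c) / c)²`, which is what produces exponential decay. -/
theorem ChainOK.cov_le {δ s : ℝ} (hδ : 0 < δ) (hs : 0 < s) (hs1 : s < 1) (n : ℕ) :
    ∀ (V : ℕ → ℝ → ℝ) (c W : ℕ → ℝ), ChainOK V c δ → (∀ k, 0 < W k) →
      (∀ k, (c k / (δ + c k)) ^ 2 * W (k + 1) ≤ s ^ 2 * W k) →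
      (∀ k, (c k / (δ + c k)) ^ 2 * W k ≤ s ^ 2 * W (k + 1)) →
      ∀ (u v : (Fin n → ℝ) → ℝ) (du dv : Fin n → (Fin n → ℝ) → ℝ), CD u du → CD v dv →
        |(∫ z, u z * v z ∂gib (chE n V c))
            - (∫ z, u z ∂gib (chE n V c)) * ∫ z, v z ∂gib (chE n V c)|
          ≤ ((∑ k : Fin n, kap δ s k * (W k * ∫ z, du k z ^ 2 ∂gib (chE n V c)))
            + ∑ k : Fin n, kap δ s k * ((W k)⁻¹ * ∫ z, dv k z ^ 2 ∂gib (chE n V c))) / 2 := by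
  induction n with
  | zero =>
    intro V c W h _ _ _ u v du dv _ _
    have := h.isProb hδ 0
    have e : ∀ f : (Fin 0 → ℝ) → ℝ, ∫ z, f z ∂gib (chE 0 V c) = f 0 := fun f => by
      have : f = fun _ => f 0 := funext fun z => by rw [Subsingleton.elim z 0]
      rw [this]; simp
    rw [e, e, e]; simp
  | succ n ih =>
    intro V c W h hW hW1 hW2 u v du dv hu hv
    have hρ := h.head_pos hδ
    have hm := h.marg_ok hδ
    have hU := hu.condE_cd h hδ
    have hV := hv.condE_cd h hδ
    have hrec := ih (marg V c) (fun k => c (k + 1)) (fun k => W (k + 1)) hm (fun k => hW _)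
      (fun k => hW1 _) (fun k => hW2 _) _ _ _ _ hU hV
    have s1 := hu.energy_step h hδ hs hs1 hW (hW1 0)
    have s2 := hv.energy_step h hδ hs hs1 (W := fun k => (W k)⁻¹) (fun k => inv_pos.2 (hW k)) (by
      have a := hW2 0
      have p0 := hW 0
      have p1 := hW 1
      rw [zero_add] at a
      rw [← div_eq_mul_inv, ← div_eq_mul_inv, div_le_div_iff₀ p1 p0]
      exact a)
    have hc2 : ∀ k, Continuous fun z => du k z ^ 2 := fun k => (hu.dcont k).pow 2
    have hc2' : ∀ k, Continuous fun z => dv k z ^ 2 := fun k => (hv.dcont k).pow 2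
    have i1 : Integrable (condE V c fun z => u z * v z)
        (gib (chE n (marg V c) (fun k => c (k + 1)))) :=
      hm.gib_int hδ (h.condE_EB hδ (hu.eb.mul hv.eb))
        (h.condE_continuous hδ (hu.eb.mul hv.eb) (hu.cont.mul hv.cont))
    have i2 : Integrable (fun y => condE V c u y * condE V c v y)
        (gib (chE n (marg V c) (fun k => c (k + 1)))) :=
      hm.gib_int hδ (hU.eb.mul hV.eb) (hU.cont.mul hV.cont)
    have i3 := hm.gib_int (n := n) hδ (h.condE_EB hδ (hu.deb 0).sq)
      (h.condE_continuous hδ (hu.deb 0).sq (hc2 0))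
    have i4 := hm.gib_int (n := n) hδ (h.condE_EB hδ (hv.deb 0).sq)
      (h.condE_continuous hδ (hv.deb 0).sq (hc2' 0))
    have first : |∫ y, (condE V c (fun z => u z * v z) y - condE V c u y * condE V c v y)
          ∂gib (chE n (marg V c) (fun k => c (k + 1)))|
        ≤ (δ + c 0)⁻¹ * (W 0 * (∫ z, du 0 z ^ 2 ∂gib (chE (n + 1) V c))
          + (W 0)⁻¹ * ∫ z, dv 0 z ^ 2 ∂gib (chE (n + 1) V c)) / 2 := by
      refine abs_integral_le_integral_abs.trans ?_
      refine (integral_mono (i1.sub i2).abs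
        ((((i3.const_mul (W 0)).add (i4.const_mul (W 0)⁻¹)).const_mul (δ + c 0)⁻¹).div_const 2)
        (fun y => hu.cond_cov h hδ hv (hW 0) y)).trans (le_of_eq ?_)
      simp only [Pi.add_apply]
      rw [integral_div, integral_const_mul,
        integral_add (i3.const_mul (W 0)) (i4.const_mul (W 0)⁻¹), integral_const_mul,
        integral_const_mul, ← h.disintegrate hδ (hu.deb 0).sq (hc2 0),
        ← h.disintegrate hδ (hv.deb 0).sq (hc2' 0)]
    rw [h.disintegrate hδ (hu.eb.mul hv.eb) (hu.cont.mul hv.cont), h.disintegrate hδ hu.eb hu.cont,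
      h.disintegrate hδ hv.eb hv.cont]
    rw [integral_sub i1 i2] at first
    have tri := abs_add_le
      ((∫ y, condE V c (fun z => u z * v z) y ∂gib (chE n (marg V c) (fun k => c (k + 1))))
        - ∫ y, condE V c u y * condE V c v y ∂gib (chE n (marg V c) (fun k => c (k + 1))))
      ((∫ y, condE V c u y * condE V c v y ∂gib (chE n (marg V c) (fun k => c (k + 1))))
        - (∫ y, condE V c u y ∂gib (chE n (marg V c) (fun k => c (k + 1))))
          * ∫ y, condE V c v y ∂gib (chE n (marg V c) (fun k => c (k + 1))))
    rw [sub_add_sub_cancel] at tri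
    linarith

/-! ### The oscillator chain as a chain of `2L` real variables -/

lemma cval_tail {n : ℕ} (z : Fin (n + 1) → ℝ) (k : ℕ) : cval (Fin.tail z) k = cval z (k + 1) := by
  unfold cval Fin.tail
  by_cases h : k < n
  · rw [dif_pos h, dif_pos (by omega)]; rfl
  · rw [dif_neg h, dif_neg (by omega)]

lemma hd_eq_cval {n : ℕ} (z : Fin n → ℝ) : hd z = cval z 0 := rfl

/-- Closed form of the energy; in the last term `cval z n = 0`, so the last coupling is absent. -/
lemma chE_eq (n : ℕ) : ∀ (V : ℕ → ℝ → ℝ) (c : ℕ → ℝ) (z : Fin n → ℝ),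
    chE n V c z = ∑ k ∈ range n, (V k (cval z k) - c k * cval z (k + 1) * cval z k) := by
  induction n with
  | zero => intro V c z; simp [chE]
  | succ n ih =>
    intro V c z
    rw [Finset.sum_range_succ', chE, ih, hd_eq_cval]
    simp only [cval_tail]
    have : cval z 0 = z 0 := by simp [cval]
    rw [this]; ring

/-- Sum of the couplings of site `k` with its two neighbours. -/
def selfC (c : ℕ → ℝ) : ℕ → ℝ
  | 0 => c 0
  | k + 1 => c k + c (k + 1)

/-- Expanding the squares `c_k (x_{k+1} - x_k)²`. -/
lemma coupling_sum (c x : ℕ → ℝ) (m : ℕ) :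
    ∑ k ∈ range (m + 1), (selfC c k * x k ^ 2 / 2 - c k * x (k + 1) * x k)
      = (∑ k ∈ range m, c k * (x (k + 1) - x k) ^ 2 / 2)
        + c m * x m ^ 2 / 2 - c m * x (m + 1) * x m := by
  induction m with
  | zero => simp [selfC]
  | succ m ih => rw [Finset.sum_range_succ, ih, Finset.sum_range_succ, selfC]; ring

/-- Couplings of the variables `q_0, …, q_{L-1}, p_0, …, p_{L-1}` in this order, times `β`. -/
def coup (L : ℕ) (κ : ℝ) (k : ℕ) : ℝ := if k + 1 < L then κ else 0

/-- One-variable potentials, times `β`, of the variables in the same order. -/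
noncomputable def pot (L : ℕ) (β g κ : ℝ) (ω τ : ℕ → ℝ) (k : ℕ) (x : ℝ) : ℝ :=
  (if k < L then β * (ω k ^ 2 * x ^ 2 / 2 + g * τ k * x ^ 4 / 4) else β * (x ^ 2 / 2))
    + selfC (coup L κ) k * x ^ 2 / 2

lemma pot_nice {L : ℕ} {β g κ δ : ℝ} {ω τ : ℕ → ℝ} (hβ : 0 < β) (hg : 0 ≤ g)
    (hω : ∀ y, δ ≤ β * ω y ^ 2) (hδ : δ ≤ β) (hτ : ∀ y, 0 ≤ τ y) (k : ℕ) :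
    NiceV (pot L β g κ ω τ k) (δ + selfC (coup L κ) k) := by
  set e := selfC (coup L κ) k with he
  refine ⟨fun x => (if k < L then β * (ω k ^ 2 * x + g * τ k * x ^ 3) else β * x) + e * x,
    ?_, ?_, fun x => ?_, fun x y hxy => ?_⟩
  · by_cases h : k < L <;> simp only [h, if_true, if_false] <;> fun_prop
  · have h3 : EB (fun x : ℝ => x ^ 3) := by
      simpa [pow_succ, mul_assoc] using EB.id.mul (EB.id.mul EB.id)
    by_cases h : k < L <;> simp only [h, if_true, if_false]
    · exact ((EB.const β).mul (((EB.const _).mul EB.id).add ((EB.const _).mul h3))).add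
        ((EB.const _).mul EB.id)
    · exact ((EB.const _).mul EB.id).add ((EB.const _).mul EB.id)
  · have h2 : HasDerivAt (fun x : ℝ => x ^ 2) (2 * x) x := by simpa using hasDerivAt_pow 2 x
    have h4 : HasDerivAt (fun x : ℝ => x ^ 4) (4 * x ^ 3) x := by simpa using hasDerivAt_pow 4 x
    have h5 : HasDerivAt (fun x : ℝ => e * x ^ 2 / 2) (e * (2 * x) / 2) x :=
      (h2.const_mul e).div_const 2
    unfold pot
    by_cases h : k < L <;> simp only [h, if_true, if_false, ← he]
    · exact (((((h2.const_mul (ω k ^ 2)).div_const 2).add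
        ((h4.const_mul (g * τ k)).div_const 4)).const_mul β).add h5).congr_deriv (by ring)
    · exact (((h2.div_const 2).const_mul β).add h5).congr_deriv (by ring)
  · have hd : 0 ≤ y - x := by linarith
    by_cases h : k < L <;> simp only [h, if_true, if_false]
    · have h1 := mul_le_mul_of_nonneg_right (hω k) hd
      have h3 : 0 ≤ y ^ 3 - x ^ 3 := by
        have : y ^ 3 - x ^ 3 = (y - x) * ((y + x / 2) ^ 2 + 3 / 4 * x ^ 2) := by ring
        rw [this]; positivity
      have h2 : 0 ≤ β * (g * τ k * (y ^ 3 - x ^ 3)) := by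
        have := hτ k
        positivity
      nlinarith
    · have h1 := mul_le_mul_of_nonneg_right hδ hd
      nlinarith

lemma pot_chain {L : ℕ} {β g κ δ : ℝ} {ω τ : ℕ → ℝ} (hβ : 0 < β) (hg : 0 ≤ g) (hκ : 0 ≤ κ)
    (hω : ∀ y, δ ≤ β * ω y ^ 2) (hδ : δ ≤ β) (hτ : ∀ y, 0 ≤ τ y) :
    ChainOK (pot L β g κ ω τ) (coup L κ) δ where
  c_nonneg k := by unfold coup; split_ifs <;> simp [hκ]
  head := pot_nice hβ hg hω hδ hτ 0
  tail k := by
    have := pot_nice (L := L) (κ := κ) hβ hg hω hδ hτ (k + 1)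
    rwa [selfC, ← add_assoc] at this

/-- Splitting of `2L` variables into positions and momenta. -/
def toPhase {L : ℕ} (z : Fin (L + L) → ℝ) : (Fin L → ℝ) × (Fin L → ℝ) :=
  (fun i => z (Fin.castAdd L i), fun i => z (Fin.natAdd L i))

lemma toPhase_preserving (L : ℕ) : ∃ e : (Fin (L + L) → ℝ) ≃ᵐ (Fin L → ℝ) × (Fin L → ℝ),
    MeasurePreserving e ∧ ∀ z, e z = toPhase z := by
  refine ⟨(MeasurableEquiv.piCongrLeft (fun _ : Fin L ⊕ Fin L => ℝ) finSumFinEquiv.symm).trans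
    (MeasurableEquiv.sumPiEquivProdPi fun _ => ℝ), ?_, fun z => ?_⟩
  · exact (volume_measurePreserving_sumPiEquivProdPi (fun _ : Fin L ⊕ Fin L => ℝ)).comp
      (volume_measurePreserving_piCongrLeft (fun _ : Fin L ⊕ Fin L => ℝ) finSumFinEquiv.symm)
  · have h : ∀ j, MeasurableEquiv.piCongrLeft (fun _ : Fin L ⊕ Fin L => ℝ) finSumFinEquiv.symm z
        (finSumFinEquiv.symm j) = z j := fun j =>
      Equiv.piCongrLeft_apply_apply (fun _ : Fin L ⊕ Fin L => ℝ) finSumFinEquiv.symm z j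
    refine Prod.ext (funext fun i => ?_) (funext fun i => ?_)
    · have := h (Fin.castAdd L i)
      rwa [finSumFinEquiv_symm_apply_castAdd] at this
    · have := h (Fin.natAdd L i)
      rwa [finSumFinEquiv_symm_apply_natAdd] at this

lemma cval_left {L : ℕ} (z : Fin (L + L) → ℝ) {k : ℕ} (hk : k < L) :
    cval (toPhase z).1 k = cval z k := by
  unfold cval
  rw [dif_pos hk, dif_pos (by omega)]; rfl

lemma cval_right {L : ℕ} (z : Fin (L + L) → ℝ) {k : ℕ} (hk : k < L) :
    cval (toPhase z).2 k = cval z (L + k) := by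
  unfold cval
  rw [dif_pos hk, dif_pos (by omega)]; rfl

lemma selfC_right (L : ℕ) (κ : ℝ) (k : ℕ) : selfC (coup L κ) (L + k) = 0 := by
  rcases hm : L + k with _ | m
  · simp [selfC, coup]; omega
  · have h1 : ¬ (m + 1 < L) := by omega
    have h2 : ¬ (m + 1 + 1 < L) := by omega
    simp [selfC, coup, h1, h2]

lemma chE_pot (L : ℕ) (β g g₀ : ℝ) (ω τ : ℕ → ℝ) (z : Fin (L + L) → ℝ) :
    chE (L + L) (pot L β g (β * g₀) ω τ) (coup L (β * g₀)) z
      = β * chainH L g g₀ ω τ (toPhase z) := by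
  set κ := β * g₀ with hκ
  have hr : ∑ k ∈ range L, (pot L β g κ ω τ (L + k) (cval z (L + k))
      - coup L κ (L + k) * cval z (L + k + 1) * cval z (L + k))
      = ∑ k ∈ range L, β * ((cval (toPhase z).2 k) ^ 2 / 2) := by
    refine Finset.sum_congr rfl fun k hk => ?_
    have h1 : ¬ (L + k < L) := by omega
    have h2 : ¬ (L + k + 1 < L) := by omega
    rw [cval_right z (Finset.mem_range.1 hk)]
    simp [pot, selfC_right, h1, coup, h2]
  have hl : ∑ k ∈ range L, (pot L β g κ ω τ k (cval z k)
      - coup L κ k * cval z (k + 1) * cval z k)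
      = (∑ k ∈ range L, β * ((ω k) ^ 2 * (cval (toPhase z).1 k) ^ 2 / 2
        + g * τ k * (cval (toPhase z).1 k) ^ 4 / 4))
        + ∑ k ∈ range L, (selfC (coup L κ) k * cval z k ^ 2 / 2
          - coup L κ k * cval z (k + 1) * cval z k) := by
    rw [← Finset.sum_add_distrib]
    refine Finset.sum_congr rfl fun k hk => ?_
    rw [cval_left z (Finset.mem_range.1 hk), pot, if_pos (Finset.mem_range.1 hk)]
    ring
  have hcc : ∑ k ∈ range L, (selfC (coup L κ) k * cval z k ^ 2 / 2
          - coup L κ k * cval z (k + 1) * cval z k)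
      = ∑ y ∈ range (L - 1),
        β * (g₀ * (cval (toPhase z).1 (y + 1) - cval (toPhase z).1 y) ^ 2 / 2) := by
    rcases L with _ | m
    · simp
    · rw [coupling_sum]
      have h0 : coup (m + 1) κ m = 0 := by simp [coup]
      rw [h0]
      simp only [zero_mul, zero_div, add_zero, sub_zero, Nat.add_sub_cancel]
      refine Finset.sum_congr rfl fun k hk => ?_
      have hk := Finset.mem_range.1 hk
      rw [cval_left z (by omega), cval_left z (by omega), coup, if_pos (by omega), hκ]
      ring
  rw [chE_eq, Finset.sum_range_add, hr, hl, hcc, chainH, mul_add, Finset.mul_sum, Finset.mul_sum,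
    add_right_comm, ← Finset.sum_add_distrib]
  congr 1
  exact Finset.sum_congr rfl fun k _ => by ring

lemma gibbsExp_eq (L : ℕ) (β g g₀ : ℝ) (ω τ : ℕ → ℝ) (f : (Fin L → ℝ) × (Fin L → ℝ) → ℝ) :
    gibbsExp L β (chainH L g g₀ ω τ) f
      = ∫ z, f (toPhase z) ∂gib (chE (L + L) (pot L β g (β * g₀) ω τ) (coup L (β * g₀))) := by
  obtain ⟨e, he, hz⟩ := toPhase_preserving L
  rw [gib_integral, gibbsExp, ← he.integral_comp', ← he.integral_comp']
  simp only [hz, chE_pot, neg_mul]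

/-! ### Polynomials -/

lemma hasDerivAt_eval_update {σ : Type*} [DecidableEq σ] (u : MvPolynomial σ ℝ) (x : σ → ℝ) (i : σ)
    (t : ℝ) : HasDerivAt (fun s => MvPolynomial.eval (Function.update x i s) u)
      (MvPolynomial.eval (Function.update x i t) (MvPolynomial.pderiv i u)) t := by
  induction u using MvPolynomial.induction_on with
  | C a => simpa using hasDerivAt_const t a
  | add p q hp hq =>
    simp only [map_add]
    exact hp.add hq
  | mul_X p j hp =>
    have hX : HasDerivAt (fun s => Function.update x i s j) (if j = i then 1 else 0) t := by
      by_cases h : j = i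
      · subst h; simpa using hasDerivAt_id' t
      · simpa [h] using hasDerivAt_const t (x j)
    have := hp.mul hX
    simp only [map_mul, MvPolynomial.eval_X]
    refine this.congr_deriv ?_
    rw [Derivation.leibniz, MvPolynomial.pderiv_X]
    by_cases h : j = i
    · subst h; simp; ring
    · simp [h]; ring

lemma EB_eval {σ : Type*} [Fintype σ] (u : MvPolynomial σ ℝ) :
    EB (fun x : σ → ℝ => MvPolynomial.eval x u) := by
  induction u using MvPolynomial.induction_on with
  | C a => simpa using EB.const a
  | add p q hp hq => simpa using hp.add hq
  | mul_X p j hp =>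
    have hj : EB (fun z : σ → ℝ => z j) :=
      EB.norm.mono fun z => by rw [abs_of_nonneg (norm_nonneg z)]; exact norm_le_pi_norm z j
    simpa using hp.mul hj

lemma polyEval_toPhase {L : ℕ} (u : MvPolynomial (Fin L ⊕ Fin L) ℝ) (z : Fin (L + L) → ℝ) :
    polyEval u (toPhase z) = MvPolynomial.eval (z ∘ finSumFinEquiv) u := by
  unfold polyEval
  congr 2
  funext i
  rcases i with i | i <;> simp [toPhase]

lemma CD_poly {L : ℕ} (u : MvPolynomial (Fin L ⊕ Fin L) ℝ) :
    CD (fun z : Fin (L + L) → ℝ => polyEval u (toPhase z))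
      (fun k z => polyEval (MvPolynomial.pderiv (finSumFinEquiv.symm k) u) (toPhase z)) := by
  have hc : ∀ p : MvPolynomial (Fin L ⊕ Fin L) ℝ,
      Continuous fun z : Fin (L + L) → ℝ => polyEval p (toPhase z) := fun p => by
    simp only [polyEval_toPhase]
    exact (MvPolynomial.continuous_eval p).comp (by fun_prop)
  have he : ∀ p : MvPolynomial (Fin L ⊕ Fin L) ℝ,
      EB fun z : Fin (L + L) → ℝ => polyEval p (toPhase z) := fun p => by
    simp only [polyEval_toPhase]
    refine (EB_eval p).comp (A := 0) fun z => ?_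
    rw [zero_add]
    exact (pi_norm_le_iff_of_nonneg (norm_nonneg _)).2 fun i => norm_le_pi_norm z _
  refine ⟨hc u, he u, fun k => hc _, fun k => he _, fun k z t => ?_⟩
  simp only [polyEval_toPhase, Function.update_comp_equiv]
  exact hasDerivAt_eval_update u _ _ t

/-! ### Choice of weights and conclusion -/

/-- Optimisation of a weighted arithmetic mean over the weight. -/
lemma le_mul_of_forall_weight {X a b : ℝ} (ha : 0 ≤ a) (hb : 0 ≤ b)
    (h : ∀ w : ℝ, 0 < w → X ≤ (w * a ^ 2 + w⁻¹ * b ^ 2) / 2) : X ≤ a * b := by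
  refine le_of_forall_pos_le_add fun ε hε => ?_
  -- the weight `b / a`, regularised so that it makes sense when `a` or `b` vanishes
  set η := ε / (a + b + 1)
  have hη : 0 < η := by positivity
  have h1 := h ((b + η) / (a + η)) (by positivity)
  have h2 : (b + η) / (a + η) * a ^ 2 ≤ (b + η) * a := by
    rw [div_mul_eq_mul_div, div_le_iff₀ (by positivity)]
    have : 0 ≤ (b + η) * a * η := by positivity
    nlinarith
  have h3 : ((b + η) / (a + η))⁻¹ * b ^ 2 ≤ (a + η) * b := by
    rw [inv_div, div_mul_eq_mul_div, div_le_iff₀ (by positivity)]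
    have : 0 ≤ (a + η) * b * η := by positivity
    nlinarith
  have h4 : η * (a + b + 1) = ε := by simp only [η]; field_simp
  nlinarith

/-- Distance from site `x` to the set `S` of sites (`0` if `S` is empty). -/
noncomputable def siteDist {L : ℕ} (S : Finset (Fin L)) (x : ℕ) : ℝ :=
  Metric.infDist (x : ℝ) (Set.image (fun a : Fin L => ((a : ℕ) : ℝ)) (S : Set (Fin L)))

lemma siteDist_succ {L : ℕ} (S : Finset (Fin L)) (x : ℕ) :
    |siteDist S (x + 1) - siteDist S x| ≤ 1 := by
  have h1 := Metric.infDist_le_infDist_add_dist (x := (x : ℝ)) (y := ((x + 1 : ℕ) : ℝ))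
    (s := Set.image (fun a : Fin L => ((a : ℕ) : ℝ)) (S : Set (Fin L)))
  have h2 := Metric.infDist_le_infDist_add_dist (y := (x : ℝ)) (x := ((x + 1 : ℕ) : ℝ))
    (s := Set.image (fun a : Fin L => ((a : ℕ) : ℝ)) (S : Set (Fin L)))
  have h3 : dist ((x + 1 : ℕ) : ℝ) (x : ℝ) = 1 := by simp
  rw [dist_comm, h3] at h1
  rw [h3] at h2
  rw [abs_le]
  unfold siteDist
  constructor <;> linarith

lemma siteDist_mem {L : ℕ} {S : Finset (Fin L)} {a : Fin L} (ha : a ∈ S) : siteDist S a = 0 :=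
  Metric.infDist_zero_of_mem ⟨a, ha, rfl⟩

lemma le_siteDist {L : ℕ} {S T : Finset (Fin L)} {b : Fin L} (hb : b ∈ T) :
    sInf {d : ℝ | ∃ a ∈ S, ∃ b ∈ T, d = |(a : ℝ) - (b : ℝ)|} ≤ siteDist S b := by
  rcases S.eq_empty_or_nonempty with rfl | ⟨a₀, ha₀⟩
  · simp [siteDist]
  · refine (Metric.le_infDist (Set.Nonempty.image _ ⟨a₀, ha₀⟩)).2 ?_
    rintro _ ⟨a, ha, rfl⟩
    refine csInf_le ⟨0, ?_⟩ ⟨a, ha, b, hb, ?_⟩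
    · rintro _ ⟨a, _, b, _, rfl⟩; exact abs_nonneg _
    · rw [Real.dist_eq, abs_sub_comm]

/-- Site carrying the `k`-th of the `2L` variables. -/
def siteOf (L k : ℕ) : ℕ := if k < L then k else k - L

lemma siteOf_sum {L : ℕ} (i : Fin L ⊕ Fin L) :
    siteOf L (finSumFinEquiv i) = ((Sum.elim id id i : Fin L) : ℕ) := by
  rcases i with i | i <;> simp [siteOf]

lemma pderiv_eq_zero_of_site {L : ℕ} {u : MvPolynomial (Fin L ⊕ Fin L) ℝ} {S : Finset (Fin L)}
    (hu : u.vars ⊆ S.image Sum.inl ∪ S.image Sum.inr) {i : Fin L ⊕ Fin L}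
    (hi : (Sum.elim id id i : Fin L) ∉ S) : MvPolynomial.pderiv i u = 0 := by
  refine MvPolynomial.pderiv_eq_zero_of_notMem_vars fun h => hi ?_
  have := hu h
  rcases i with i | i <;> simpa using this

lemma gibbsExp_gradSq {L : ℕ} {β g g₀ δ : ℝ} {ω τ : ℕ → ℝ} (hδ : 0 < δ)
    (hok : ChainOK (pot L β g (β * g₀) ω τ) (coup L (β * g₀)) δ)
    (u : MvPolynomial (Fin L ⊕ Fin L) ℝ) :
    gibbsExp L β (chainH L g g₀ ω τ) (gradSq u)
      = ∑ k : Fin (L + L), ∫ z, polyEval (MvPolynomial.pderiv (finSumFinEquiv.symm k) u)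
          (toPhase z) ^ 2 ∂gib (chE (L + L) (pot L β g (β * g₀) ω τ) (coup L (β * g₀))) := by
  have hu := CD_poly u
  rw [gibbsExp_eq, ← integral_finsetSum _
    fun k _ => hok.gib_int hδ (hu.deb k).sq ((hu.dcont k).pow 2)]
  congr 1; ext z
  exact (Equiv.sum_comp (finSumFinEquiv (m := L) (n := L)).symm
    fun i => polyEval (MvPolynomial.pderiv i u) (toPhase z) ^ 2).symm

/-- Weights `w e^{θ D}` with `D` of increment at most `1` satisfy the hypothesis of the weighted
covariance bound for `s² = r = e^{-θ}`. -/
lemma weight_step {r θ w D D' : ℝ} (hθ : 0 < θ) (hr : r = Real.exp (-θ)) (hw : 0 < w)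
    (h : D' - D ≤ 1) : r ^ 2 * (w * Real.exp (θ * D')) ≤ r * (w * Real.exp (θ * D)) := by
  have h1 : r * Real.exp (θ * D') ≤ Real.exp (θ * D) := by
    rw [hr, ← Real.exp_add, Real.exp_le_exp]; nlinarith
  have h0 : 0 < r := by rw [hr]; exact Real.exp_pos _
  calc r ^ 2 * (w * Real.exp (θ * D')) = r * w * (r * Real.exp (θ * D')) := by ring
    _ ≤ r * w * Real.exp (θ * D) := by gcongr
    _ = _ := by ring

/-- decay of correlations: there are constants `C < ∞` and `ζ < ∞`
depending only on `β`, `g₀` and the (compact) support `[ω_−², ω_+²]` of the law of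
`ω_x²` — in particular independent of `g`, of `L` and of the disorder realization —
such that for any two mean-zero polynomials `u, v` on `ℝ^{2L}`, with supports contained
in the site sets `S` and `T` respectively,
`|⟨u v⟩_β| ≤ C e^{−d(S,T)/ζ} ⟨∇u·∇u⟩_β^{1/2} ⟨∇v·∇v⟩_β^{1/2}`. -/
theorem gibbs_decay_of_correlations (β g₀ : ℝ) (hβ : 0 < β) (hg₀ : 0 < g₀)
    (ωm ωp : ℝ) (hωm : 0 < ωm) (hωmp : ωm ≤ ωp) :
    ∃ C ζ : ℝ, 0 ≤ C ∧ 0 < ζ ∧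
      ∀ ω : ℕ → ℝ, (∀ y, ωm ^ 2 ≤ (ω y) ^ 2 ∧ (ω y) ^ 2 ≤ ωp ^ 2) →
      ∀ g : ℝ, 0 ≤ g → ∀ τ : ℕ → ℝ, (∀ y, τ y = 0 ∨ τ y = 1) →
      ∀ (L : ℕ) (u v : MvPolynomial (Fin L ⊕ Fin L) ℝ) (S T : Finset (Fin L)),
        u.vars ⊆ S.image Sum.inl ∪ S.image Sum.inr →
        v.vars ⊆ T.image Sum.inl ∪ T.image Sum.inr →
        gibbsExp L β (chainH L g g₀ ω τ) (polyEval u) = 0 →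
        gibbsExp L β (chainH L g g₀ ω τ) (polyEval v) = 0 →
        |gibbsExp L β (chainH L g g₀ ω τ) (fun z => polyEval u z * polyEval v z)|
          ≤ C * Real.exp
                (-(sInf {d : ℝ | ∃ a ∈ S, ∃ b ∈ T, d = |(a : ℝ) - (b : ℝ)|}) / ζ)
              * Real.sqrt (gibbsExp L β (chainH L g g₀ ω τ) (gradSq u))
              * Real.sqrt (gibbsExp L β (chainH L g g₀ ω τ) (gradSq v)) := by
  set δ := β * min (ωm ^ 2) 1 with hδdef
  set κ := β * g₀ with hκdef
  have hδ : 0 < δ := by positivity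
  have hκ : 0 < κ := by positivity
  set r := κ / (δ + κ) with hr
  have hr0 : 0 < r := by positivity
  have hr1 : r < 1 := by rw [hr, div_lt_one (by positivity)]; linarith
  set s := Real.sqrt r with hs
  have hs0 : 0 < s := Real.sqrt_pos.2 hr0
  have hs2 : s ^ 2 = r := Real.sq_sqrt hr0.le
  have hs1 : s < 1 := by nlinarith
  set θ := - Real.log r with hθdef
  have hθ : 0 < θ := by rw [hθdef]; linarith [Real.log_neg hr0 hr1]
  have hrθ : r = Real.exp (-θ) := by rw [hθdef, neg_neg, Real.exp_log hr0]
  set K := (δ * (1 - s))⁻¹ * (1 - s)⁻¹ with hK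
  have hs' : 0 < 1 - s := by linarith
  have hK0 : 0 < K := by positivity
  have hkap : ∀ k, 0 ≤ kap δ s k ∧ kap δ s k ≤ K := fun k => by
    have h0 : 0 < (δ * (1 - s))⁻¹ := by positivity
    have h1 : 1 ≤ (1 - s)⁻¹ := (one_le_inv₀ hs').2 (by linarith)
    unfold kap
    split_ifs
    · exact ⟨h0.le, le_mul_of_one_le_right h0.le h1⟩
    · exact ⟨hK0.le, le_rfl⟩
  refine ⟨K, 2 / θ, hK0.le, by positivity, ?_⟩
  intro ω hω g hg τ hτ L u v S T hu hv mu mv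
  have hok : ChainOK (pot L β g κ ω τ) (coup L κ) δ := by
    refine pot_chain hβ hg hκ.le (fun y => ?_) ?_ (fun y => ?_)
    · exact mul_le_mul_of_nonneg_left ((min_le_left _ _).trans (hω y).1) hβ.le
    · exact (mul_le_mul_of_nonneg_left (min_le_right _ _) hβ.le).trans (mul_one β).le
    · rcases hτ y with h | h <;> simp [h]
  rw [gibbsExp_gradSq hδ hok u, gibbsExp_gradSq hδ hok v]
  rw [gibbsExp_eq] at mu mv ⊢
  set μ := gib (chE (L + L) (pot L β g κ ω τ) (coup L κ)) with hμ
  set d := sInf {d : ℝ | ∃ a ∈ S, ∃ b ∈ T, d = |(a : ℝ) - (b : ℝ)|} with hd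
  set A : Fin (L + L) → ℝ := fun k =>
    ∫ z, polyEval (MvPolynomial.pderiv (finSumFinEquiv.symm k) u) (toPhase z) ^ 2 ∂μ with hA
  set B : Fin (L + L) → ℝ := fun k =>
    ∫ z, polyEval (MvPolynomial.pderiv (finSumFinEquiv.symm k) v) (toPhase z) ^ 2 ∂μ with hB
  have hA0 : ∀ k, 0 ≤ A k := fun k => integral_nonneg fun _ => sq_nonneg _
  have hB0 : ∀ k, 0 ≤ B k := fun k => integral_nonneg fun _ => sq_nonneg _
  have hsite : ∀ k : Fin (L + L),
      siteOf L k = ((Sum.elim id id (finSumFinEquiv.symm k) : Fin L) : ℕ) := fun k => by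
    rw [← siteOf_sum, Equiv.apply_symm_apply]
  -- the weights grow like `r⁻¹` to the power of the distance to `S`
  have main : ∀ w : ℝ, 0 < w → |∫ z, polyEval u (toPhase z) * polyEval v (toPhase z) ∂μ|
      ≤ (K * w * (∑ k, A k) + K * w⁻¹ * Real.exp (-(θ * d)) * ∑ k, B k) / 2 := by
    intro w hw
    set D : ℕ → ℝ := fun k => siteDist S (siteOf L k) with hD
    have step : ∀ k, k + 1 < L → |D (k + 1) - D k| ≤ 1 := fun k hk => by
      simp only [hD, siteOf, if_pos hk, if_pos (show k < L by omega)]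
      exact siteDist_succ S k
    have hcov := hok.cov_le hδ hs0 hs1 (L + L) _ _ (fun k => w * Real.exp (θ * D k))
      (fun k => by positivity)
      (fun k => by
        by_cases hk : k + 1 < L
        · simp only [coup, if_pos hk, ← hr, hs2]
          exact weight_step hθ hrθ hw (abs_le.1 (step k hk)).2
        · simp only [coup, if_neg hk]; simp; positivity)
      (fun k => by
        by_cases hk : k + 1 < L
        · simp only [coup, if_pos hk, ← hr, hs2]
          exact weight_step hθ hrθ hw (by linarith [(abs_le.1 (step k hk)).1])
        · simp only [coup, if_neg hk]; simp; positivity)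
      _ _ _ _ (CD_poly u) (CD_poly v)
    rw [← hμ, mu, mv, mul_zero, sub_zero] at hcov
    refine hcov.trans ?_
    have eA : ∀ k : Fin (L + L), kap δ s k * (w * Real.exp (θ * D k) * A k) ≤ K * w * A k := by
      intro k
      by_cases hk : (Sum.elim id id (finSumFinEquiv.symm k) : Fin L) ∈ S
      · have : D k = 0 := by simp only [hD, hsite]; exact siteDist_mem hk
        rw [this, mul_zero, Real.exp_zero, mul_one, mul_assoc]
        exact mul_le_mul_of_nonneg_right (hkap k).2 (mul_nonneg hw.le (hA0 k))
      · have : A k = 0 := by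
          simp only [hA]; rw [pderiv_eq_zero_of_site hu hk]; simp [polyEval]
        simp [this]
    have eB : ∀ k : Fin (L + L), kap δ s k * ((w * Real.exp (θ * D k))⁻¹ * B k)
        ≤ K * w⁻¹ * Real.exp (-(θ * d)) * B k := by
      intro k
      by_cases hk : (Sum.elim id id (finSumFinEquiv.symm k) : Fin L) ∈ T
      · have h1 : d ≤ D k := by simp only [hD, hsite]; exact le_siteDist hk
        have h2 : (Real.exp (θ * D k))⁻¹ ≤ Real.exp (-(θ * d)) := by
          rw [← Real.exp_neg, Real.exp_le_exp]; nlinarith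
        have hk1 := hkap k
        have hBk := hB0 k
        rw [mul_inv]
        calc kap δ s k * (w⁻¹ * (Real.exp (θ * D k))⁻¹ * B k)
            ≤ K * (w⁻¹ * Real.exp (-(θ * d)) * B k) := by
              gcongr
              exact hk1.2
          _ = _ := by ring
      · have : B k = 0 := by
          simp only [hB]; rw [pderiv_eq_zero_of_site hv hk]; simp [polyEval]
        simp [this]
    have tA := Finset.sum_le_sum fun k (_ : k ∈ (Finset.univ : Finset (Fin (L + L)))) => eA k
    have tB := Finset.sum_le_sum fun k (_ : k ∈ (Finset.univ : Finset (Fin (L + L)))) => eB k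
    rw [← Finset.mul_sum] at tA tB
    linarith
  have hSA : 0 ≤ ∑ k, A k := Finset.sum_nonneg fun k _ => hA0 k
  have hSB : 0 ≤ ∑ k, B k := Finset.sum_nonneg fun k _ => hB0 k
  have key := le_mul_of_forall_weight
    (X := |∫ z, polyEval u (toPhase z) * polyEval v (toPhase z) ∂μ| / K)
    (a := Real.sqrt (∑ k, A k)) (b := Real.exp (-d / (2 / θ)) * Real.sqrt (∑ k, B k))
    (Real.sqrt_nonneg _) (by positivity) (fun w hw => by
      rw [div_le_iff₀ hK0, mul_pow, Real.sq_sqrt hSA, Real.sq_sqrt hSB, ← Real.exp_nat_mul]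
      refine (main w hw).trans (le_of_eq ?_)
      have e : ((2 : ℕ) : ℝ) * (-d / (2 / θ)) = -(θ * d) := by
        push_cast; field_simp
      rw [e]; ring)
  rw [div_le_iff₀ hK0] at key
  linarith
end

section
/- For all w, z ∈ B, |γ_{w,z}| ≤ 1. -/
/-!
Summing over `y ∈ S` first gives `2γ = ∑ₖ aₖ ψₖ(w) ψₖ(z) - ε`, where `aₖ = ∑_{y ∈ S} ψₖ(y)²` lies
in `[0, 1]` and `ε ∈ {0, 1}`. By AM-GM the first sum is at most `∑ₖ (ψₖ(w)² + ψₖ(z)²) / 2` in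
absolute value, which is `1` because the columns of an orthogonal matrix are unit vectors. Hence
`|2γ| ≤ 2`.
-/

open Finset

/-- Let `B` be a finite set, `(ψ_k)_{k∈B}` an orthonormal basis of `ℝ^B`,
and `S ⊆ B`.  For `w, z ∈ B` define
`γ_{w,z} = (1/2) Σ_{y∈S} ( Σ_{k∈B} ψ_k(y)² ψ_k(w) ψ_k(z) − δ_{y,z} δ_{z,w} )`.
Then `|γ_{w,z}| ≤ 1` for all `w, z ∈ B`. -/
theorem gamma_le_one {B : Type*} [Fintype B] [DecidableEq B]
    (ψ : B → B → ℝ)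
    (horth : ∀ k k' : B, ∑ y : B, ψ k y * ψ k' y = if k = k' then 1 else 0)
    (S : Finset B) (w z : B) :
    |(1 / 2 : ℝ) * ∑ y ∈ S,
        ((∑ k : B, (ψ k y) ^ 2 * ψ k w * ψ k z)
          - (if y = z ∧ z = w then 1 else 0))| ≤ 1 := by
  have hcol : ∀ x : B, ∑ k : B, ψ k x ^ 2 = 1 := by
    -- A right inverse of a square matrix is also a left inverse.
    have hM : Matrix.of ψ * (Matrix.of ψ).transpose = 1 := by
      ext k k'
      simpa [Matrix.mul_apply, Matrix.one_apply] using horth k k'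
    have hM' := mul_eq_one_comm.mp hM
    intro x
    have h := congrFun (congrFun hM' x) x
    simpa [Matrix.mul_apply, sq] using h
  have ha0 : ∀ k, 0 ≤ ∑ y ∈ S, ψ k y ^ 2 := fun k => Finset.sum_nonneg fun y _ => sq_nonneg _
  have ha1 : ∀ k, ∑ y ∈ S, ψ k y ^ 2 ≤ 1 := by
    intro k
    have h : ∑ y : B, ψ k y ^ 2 = 1 := by simpa [sq] using horth k k
    rw [← h]
    exact Finset.sum_le_sum_of_subset_of_nonneg (Finset.subset_univ S) fun y _ _ => sq_nonneg _
  have hsum : ∑ y ∈ S, ∑ k : B, ψ k y ^ 2 * ψ k w * ψ k z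
      = ∑ k : B, (∑ y ∈ S, ψ k y ^ 2) * (ψ k w * ψ k z) := by
    rw [Finset.sum_comm]
    refine Finset.sum_congr rfl fun k _ => ?_
    rw [Finset.sum_mul]
    exact Finset.sum_congr rfl fun y _ => by ring
  have hmain : |∑ k : B, (∑ y ∈ S, ψ k y ^ 2) * (ψ k w * ψ k z)| ≤ 1 := by
    calc |∑ k : B, (∑ y ∈ S, ψ k y ^ 2) * (ψ k w * ψ k z)|
        ≤ ∑ k : B, |(∑ y ∈ S, ψ k y ^ 2) * (ψ k w * ψ k z)| := Finset.abs_sum_le_sum_abs _ _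
      _ ≤ ∑ k : B, (ψ k w ^ 2 + ψ k z ^ 2) / 2 := by
          refine Finset.sum_le_sum fun k _ => ?_
          rw [abs_mul, abs_of_nonneg (ha0 k)]
          refine (mul_le_of_le_one_left (abs_nonneg _) (ha1 k)).trans ?_
          rw [abs_le]
          constructor <;> nlinarith [sq_nonneg (ψ k w + ψ k z), sq_nonneg (ψ k w - ψ k z)]
      _ = 1 := by
          rw [← Finset.sum_div, Finset.sum_add_distrib, hcol, hcol]
          norm_num
  have hdelta : 0 ≤ ∑ y ∈ S, (if y = z ∧ z = w then (1 : ℝ) else 0) ∧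
      ∑ y ∈ S, (if y = z ∧ z = w then (1 : ℝ) else 0) ≤ 1 := by
    by_cases hzw : z = w
    · simp only [hzw, and_true, Finset.sum_ite_eq']
      split_ifs <;> norm_num
    · simp [hzw]
  rw [Finset.sum_sub_distrib, hsum]
  obtain ⟨h1, h2⟩ := abs_le.mp hmain
  rw [abs_le]
  constructor <;> linarith [hdelta.1, hdelta.2]
end

section
/- Define u := H̃_L − Σ_{y=x−ℓ}^{x−1} h_y, where h_y = p_y²/2 + ω_y² q_y²/2 + g τ_y q_y⁴/4 + g₀ (q_{y+1} − q_y)²/2. Then the full Liouville operator satisfies the identity 𝓛u = j_{x−1} + f, where j_{x−1} = −g₀ p_x (q_x − q_{x−1}) and f = −g₀ (q_{x−ℓ} − q_{x−ℓ−1}) ∂_{p_{x−ℓ}} u − g₀ (q_{x+ℓ} − q_{x+ℓ+1}) ∂_{p_{x+ℓ}} u. -/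
/-!
Write `a = x - ℓ`.  The gradient of `u` is supported on `B`, and on `B` the force `-∂_q H` is
`-𝓗_B q` plus the two couplings of `B` to the outside, at `x - ℓ` and `x + ℓ`.  These couplings
account exactly for `f`, so it remains to differentiate `u` along the vector field of `H_B`.
That field conserves every mode energy `e_k`, because `𝓗_B` is symmetric and `ψ_k` is an
eigenvector (`modeForce_eq`).  Along it, the energy `∑_{a ≤ y < x} h_y` changes only
through the bond `{x - 1, x}`: the local energy currents telescope and no current enters at the
left end of `B` (`localEnergy_telescope`).
-/

open Finset

/-- The unit vector of `ℝ^{2L} = (ℝ^L) × (ℝ^L)` in the direction of the position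
coordinate `q_y`. -/
noncomputable def eQ (L : ℕ) (y : ℕ) : (Fin L → ℝ) × (Fin L → ℝ) :=
  if h : y < L then (Pi.single ⟨y, h⟩ 1, 0) else 0

/-- The unit vector of `ℝ^{2L}` in the direction of the momentum coordinate `p_y`. -/
noncomputable def eP (L : ℕ) (y : ℕ) : (Fin L → ℝ) × (Fin L → ℝ) :=
  if h : y < L then (0, Pi.single ⟨y, h⟩ 1) else 0

/-- The partial derivative `∂_{q_y} u`. -/
noncomputable def dQ {L : ℕ} (u : (Fin L → ℝ) × (Fin L → ℝ) → ℝ) (y : ℕ)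
    (z : (Fin L → ℝ) × (Fin L → ℝ)) : ℝ :=
  fderiv ℝ u z (eQ L y)

/-- The partial derivative `∂_{p_y} u`. -/
noncomputable def dP {L : ℕ} (u : (Fin L → ℝ) × (Fin L → ℝ) → ℝ) (y : ℕ)
    (z : (Fin L → ℝ) × (Fin L → ℝ)) : ℝ :=
  fderiv ℝ u z (eP L y)

/-- The local energy
`h_y = p_y²/2 + ω_y² q_y²/2 + g τ_y q_y⁴/4 + g₀ (q_{y+1} − q_y)²/2`. -/
noncomputable def hLoc {L : ℕ} (g g₀ : ℝ) (ω τ : ℕ → ℝ) (y : ℕ)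
    (z : (Fin L → ℝ) × (Fin L → ℝ)) : ℝ :=
  (cval z.2 y) ^ 2 / 2 + (ω y) ^ 2 * (cval z.1 y) ^ 2 / 2
    + g * τ y * (cval z.1 y) ^ 4 / 4
    + g₀ * (cval z.1 (y + 1) - cval z.1 y) ^ 2 / 2

/-- The Liouville operator `𝓛u = p·∇_q u − ∇_q H·∇_p u`. -/
noncomputable def liouville (L : ℕ) (g g₀ : ℝ) (ω τ : ℕ → ℝ)
    (u : (Fin L → ℝ) × (Fin L → ℝ) → ℝ)
    (z : (Fin L → ℝ) × (Fin L → ℝ)) : ℝ :=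
  (∑ y ∈ Finset.range L, cval z.2 y * dQ u y z)
    - ∑ y ∈ Finset.range L, dQ (chainH L g g₀ ω τ) y z * dP u y z

/-- The one-particle Anderson Hamiltonian `𝓗_B = V_B − g₀ Δ_B` restricted to
`B = {x−ℓ,…,x+ℓ}`, with Neumann boundary conditions on `B`. -/
noncomputable def andersonB (g₀ : ℝ) (ω : ℕ → ℝ) (x ℓ : ℕ) (y z : ℕ) : ℝ :=
  (if y = z then (ω y) ^ 2 else 0)
    - g₀ * ((if y + 1 = z ∨ z + 1 = y then (1 : ℝ) else 0)
        - (if y = z then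
            ((if y < x + ℓ then (1 : ℝ) else 0) + (if x - ℓ < y then 1 else 0))
          else 0))

/-- The mode energy `e_k = (1/2)(⟨p_B, ψ_k⟩² + ν_k² ⟨q_B, ψ_k⟩²)`. -/
noncomputable def modeEnergy {L : ℕ} (x ℓ : ℕ) (ψk : ℕ → ℝ) (ν2k : ℝ)
    (z : (Fin L → ℝ) × (Fin L → ℝ)) : ℝ :=
  (1 / 2) * ((∑ y ∈ Finset.Icc (x - ℓ) (x + ℓ), cval z.2 y * ψk y) ^ 2
    + ν2k * (∑ y ∈ Finset.Icc (x - ℓ) (x + ℓ), cval z.1 y * ψk y) ^ 2)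

/-- The coordinate `q_y` as a continuous linear functional on phase space, `0` out of range. -/
noncomputable def coordQ (L y : ℕ) : (Fin L → ℝ) × (Fin L → ℝ) →L[ℝ] ℝ :=
  if h : y < L then
    (ContinuousLinearMap.proj (R := ℝ) (φ := fun _ : Fin L => ℝ) ⟨y, h⟩).comp
      (ContinuousLinearMap.fst ℝ (Fin L → ℝ) (Fin L → ℝ))
  else 0

/-- The coordinate `p_y` as a continuous linear functional on phase space, `0` out of range. -/
noncomputable def coordP (L y : ℕ) : (Fin L → ℝ) × (Fin L → ℝ) →L[ℝ] ℝ :=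
  if h : y < L then
    (ContinuousLinearMap.proj (R := ℝ) (φ := fun _ : Fin L => ℝ) ⟨y, h⟩).comp
      (ContinuousLinearMap.snd ℝ (Fin L → ℝ) (Fin L → ℝ))
  else 0

lemma coordQ_apply {L : ℕ} (y : ℕ) (z : (Fin L → ℝ) × (Fin L → ℝ)) :
    coordQ L y z = cval z.1 y := by
  unfold coordQ cval; split_ifs <;> simp

lemma coordP_apply {L : ℕ} (y : ℕ) (z : (Fin L → ℝ) × (Fin L → ℝ)) :
    coordP L y z = cval z.2 y := by
  unfold coordP cval; split_ifs <;> simp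

lemma coordQ_eQ {L y : ℕ} (hy : y < L) (y' : ℕ) :
    coordQ L y' (eQ L y) = if y' = y then 1 else 0 := by
  rw [coordQ_apply]
  unfold cval eQ
  by_cases h : y' < L <;> simp [h, hy, Pi.single_apply]
  omega

lemma coordQ_eP {L : ℕ} (y y' : ℕ) : coordQ L y' (eP L y) = 0 := by
  rw [coordQ_apply]
  unfold cval eP
  split_ifs <;> simp

lemma coordP_eQ {L : ℕ} (y y' : ℕ) : coordP L y' (eQ L y) = 0 := by
  rw [coordP_apply]
  unfold cval eQ
  split_ifs <;> simp

lemma coordP_eP {L y : ℕ} (hy : y < L) (y' : ℕ) :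
    coordP L y' (eP L y) = if y' = y then 1 else 0 := by
  rw [coordP_apply]
  unfold cval eP
  by_cases h : y' < L <;> simp [h, hy, Pi.single_apply]
  omega

lemma hasFDerivAt_cvalQ {L : ℕ} (y : ℕ) (z : (Fin L → ℝ) × (Fin L → ℝ)) :
    HasFDerivAt (fun w : (Fin L → ℝ) × (Fin L → ℝ) => cval w.1 y) (coordQ L y) z := by
  simp_rw [← coordQ_apply]
  exact (coordQ L y).hasFDerivAt

lemma hasFDerivAt_cvalP {L : ℕ} (y : ℕ) (z : (Fin L → ℝ) × (Fin L → ℝ)) :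
    HasFDerivAt (fun w : (Fin L → ℝ) × (Fin L → ℝ) => cval w.2 y) (coordP L y) z := by
  simp_rw [← coordP_apply]
  exact (coordP L y).hasFDerivAt

lemma hasFDerivAt_onSite {L : ℕ} (g : ℝ) (ω τ : ℕ → ℝ) (y : ℕ)
    (z : (Fin L → ℝ) × (Fin L → ℝ)) :
    HasFDerivAt (fun w : (Fin L → ℝ) × (Fin L → ℝ) =>
        (cval w.2 y) ^ 2 / 2 + (ω y) ^ 2 * (cval w.1 y) ^ 2 / 2
          + g * τ y * (cval w.1 y) ^ 4 / 4)
      (cval z.2 y • coordP L y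
        + ((ω y) ^ 2 * cval z.1 y + g * τ y * (cval z.1 y) ^ 3) • coordQ L y) z := by
  have hq := hasFDerivAt_cvalQ y z
  have hp := hasFDerivAt_cvalP y z
  refine (((((hp.pow 2).mul_const (1 / 2)).add ((hq.pow 2).const_mul ((ω y) ^ 2 / 2))).add
    ((hq.pow 4).const_mul (g * τ y / 4))).congr_fderiv ?_).congr_of_eventuallyEq
      (Filter.Eventually.of_forall fun w => ?_)
  · refine ContinuousLinearMap.ext fun w => ?_
    simp
    ring
  · simp
    ring

lemma hasFDerivAt_bond {L : ℕ} (g₀ : ℝ) (y : ℕ) (z : (Fin L → ℝ) × (Fin L → ℝ)) :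
    HasFDerivAt (fun w : (Fin L → ℝ) × (Fin L → ℝ) =>
        g₀ * (cval w.1 (y + 1) - cval w.1 y) ^ 2 / 2)
      ((g₀ * (cval z.1 (y + 1) - cval z.1 y)) • (coordQ L (y + 1) - coordQ L y)) z := by
  refine (((((hasFDerivAt_cvalQ (y + 1) z).sub (hasFDerivAt_cvalQ y z)).pow 2).const_mul
    (g₀ / 2)).congr_fderiv ?_).congr_of_eventuallyEq (Filter.Eventually.of_forall fun w => ?_)
  · refine ContinuousLinearMap.ext fun w => ?_
    simp
    ring
  · simp
    ring

lemma hasFDerivAt_modeEnergy {L : ℕ} (x ℓ : ℕ) (φ : ℕ → ℝ) (ν : ℝ)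
    (z : (Fin L → ℝ) × (Fin L → ℝ)) :
    HasFDerivAt (modeEnergy x ℓ φ ν)
      ((∑ y ∈ Icc (x - ℓ) (x + ℓ), cval z.2 y * φ y) •
          (∑ y ∈ Icc (x - ℓ) (x + ℓ), φ y • coordP L y)
        + (ν * ∑ y ∈ Icc (x - ℓ) (x + ℓ), cval z.1 y * φ y) •
          (∑ y ∈ Icc (x - ℓ) (x + ℓ), φ y • coordQ L y)) z := by
  have hp := HasFDerivAt.fun_sum (u := Icc (x - ℓ) (x + ℓ))
    fun y _ => (hasFDerivAt_cvalP y z).mul_const (φ y)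
  have hq := HasFDerivAt.fun_sum (u := Icc (x - ℓ) (x + ℓ))
    fun y _ => (hasFDerivAt_cvalQ y z).mul_const (φ y)
  unfold modeEnergy
  refine ((((hp.pow 2).add ((hq.pow 2).const_mul ν)).const_mul (1 / 2))).congr_fderiv ?_
  refine ContinuousLinearMap.ext fun w => ?_
  simp
  ring

/-- The partial derivative `∂_{q_{y+1}} H` at a site `y + 1` having both neighbours. -/
lemma dQ_chainH {L : ℕ} (g g₀ : ℝ) (ω τ : ℕ → ℝ) (z : (Fin L → ℝ) × (Fin L → ℝ))
    {y : ℕ} (hy : y + 2 < L) :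
    dQ (chainH L g g₀ ω τ) (y + 1) z
      = (ω (y + 1)) ^ 2 * cval z.1 (y + 1) + g * τ (y + 1) * (cval z.1 (y + 1)) ^ 3
        + g₀ * (cval z.1 (y + 1) - cval z.1 y)
        + g₀ * (cval z.1 (y + 1) - cval z.1 (y + 2)) := by
  have hH : HasFDerivAt (chainH L g g₀ ω τ) _ z :=
    (HasFDerivAt.fun_sum (u := range L) fun y _ => hasFDerivAt_onSite g ω τ y z).add
      (HasFDerivAt.fun_sum (u := range (L - 1)) fun y _ => hasFDerivAt_bond g₀ y z)
  unfold dQ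
  rw [hH.fderiv]
  have h1 : y + 1 < L := by omega
  have h2 : y + 1 < L - 1 := by omega
  have h3 : y < L - 1 := by omega
  simp only [add_apply, _root_.sum_apply,
    smul_apply, sub_apply, coordP_eQ, coordQ_eQ h1,
    smul_eq_mul, mul_sub, sum_sub_distrib, add_left_inj, mul_ite, mul_one, mul_zero, zero_add,
    sum_ite_eq', mem_range, h1, h2, h3, if_true]
  ring

/-- The action of `𝓗_B`: the discrete Neumann Laplacian sees only neighbours inside `B`. -/
lemma sum_andersonB (g₀ : ℝ) (ω : ℕ → ℝ) (x ℓ : ℕ) (q : ℕ → ℝ) {y : ℕ}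
    (hy : y + 1 ∈ Icc (x - ℓ) (x + ℓ)) :
    ∑ z ∈ Icc (x - ℓ) (x + ℓ), andersonB g₀ ω x ℓ (y + 1) z * q z
      = (ω (y + 1)) ^ 2 * q (y + 1)
        + g₀ * (if y + 1 < x + ℓ then q (y + 1) - q (y + 2) else 0)
        + g₀ * (if x - ℓ < y + 1 then q (y + 1) - q y else 0) := by
  have key : ∀ z, andersonB g₀ ω x ℓ (y + 1) z * q z
      = (if y + 1 = z then ((ω (y + 1)) ^ 2 + g₀ * ((if y + 1 < x + ℓ then (1 : ℝ) else 0)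
            + (if x - ℓ < y + 1 then 1 else 0))) * q z else 0)
        - (if y + 2 = z then g₀ * q z else 0) - (if y = z then g₀ * q z else 0) := by
    intro z
    unfold andersonB
    rcases eq_or_ne (y + 1) z with h | h
    · subst h; simp; left; ring
    · rcases eq_or_ne (y + 2) z with h' | h'
      · subst h'; simp
      · rcases eq_or_ne y z with h'' | h''
        · subst h''; simp
        · simp [h, h', h'', h''.symm]
  simp_rw [key, sum_sub_distrib, sum_ite_eq, hy, if_true]
  rw [mem_Icc] at hy
  have m1 : y + 2 ∈ Icc (x - ℓ) (x + ℓ) ↔ y + 1 < x + ℓ := by rw [mem_Icc]; omega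
  have m2 : y ∈ Icc (x - ℓ) (x + ℓ) ↔ x - ℓ < y + 1 := by rw [mem_Icc]; omega
  simp only [m1, m2]
  split_ifs <;> ring

lemma andersonB_symm (g₀ : ℝ) (ω : ℕ → ℝ) (x ℓ y z : ℕ) :
    andersonB g₀ ω x ℓ y z = andersonB g₀ ω x ℓ z y := by
  unfold andersonB
  rcases eq_or_ne y z with h | h
  · subst h; rfl
  · simp [h, h.symm, or_comm]

/-- If the force on `B` is `P = -𝓗_B q`, then `⟨P, φ⟩ = -ν ⟨q, φ⟩` for an eigenvector `φ` with
eigenvalue `ν`; this makes the time derivative of the mode energy of `φ` vanish. -/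
lemma modeForce_eq (g₀ : ℝ) (ω : ℕ → ℝ) (x ℓ : ℕ) (φ : ℕ → ℝ) (ν : ℝ)
    (hφ : ∀ y ∈ Icc (x - ℓ) (x + ℓ),
      ∑ z ∈ Icc (x - ℓ) (x + ℓ), andersonB g₀ ω x ℓ y z * φ z = ν * φ y)
    (q P : ℕ → ℝ)
    (hP : ∀ y ∈ Icc (x - ℓ) (x + ℓ),
      P y = -∑ z ∈ Icc (x - ℓ) (x + ℓ), andersonB g₀ ω x ℓ y z * q z) :
    ∑ y ∈ Icc (x - ℓ) (x + ℓ), φ y * P y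
      = -(ν * ∑ y ∈ Icc (x - ℓ) (x + ℓ), q y * φ y) := by
  calc ∑ y ∈ Icc (x - ℓ) (x + ℓ), φ y * P y
      = -∑ y ∈ Icc (x - ℓ) (x + ℓ), ∑ z ∈ Icc (x - ℓ) (x + ℓ),
          φ y * (andersonB g₀ ω x ℓ y z * q z) := by
        rw [← sum_neg_distrib]
        refine sum_congr rfl fun y hy => ?_
        rw [hP y hy, mul_neg, mul_sum]
    _ = -∑ z ∈ Icc (x - ℓ) (x + ℓ), q z *
          ∑ y ∈ Icc (x - ℓ) (x + ℓ), andersonB g₀ ω x ℓ z y * φ y := by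
        rw [sum_comm]
        simp_rw [mul_sum]
        congr 1
        refine sum_congr rfl fun z _ => sum_congr rfl fun y _ => ?_
        rw [andersonB_symm g₀ ω x ℓ y z]
        ring
    _ = _ := by
        rw [mul_sum]
        congr 1
        refine sum_congr rfl fun z hz => ?_
        rw [hφ z hz]
        ring

/-- Along the flow of `H_B` (velocities `p`, forces `P`) the energy of the sites `a, …, x - 1`
changes only by the power transmitted through the bond `{x - 1, x}`. -/
lemma localEnergy_telescope (g₀ : ℝ) (ω : ℕ → ℝ) (a x : ℕ) (hax : a < x) (q p P : ℕ → ℝ)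
    (hP : ∀ y ∈ Ico a x, P y = -((ω y) ^ 2 * q y + g₀ * (q y - q (y + 1))
      + g₀ * (if a < y then q y - q (y - 1) else 0))) :
    ∑ y ∈ Ico a x, (p y * P y + (ω y) ^ 2 * q y * p y
        + g₀ * (q (y + 1) - q y) * (p (y + 1) - p y))
      = g₀ * p x * (q x - q (x - 1)) := by
  -- `G y` is the power through the bond `{y - 1, y}`, switched off at the left end of `B`.
  let G : ℕ → ℝ := fun y => if a < y then g₀ * p y * (q y - q (y - 1)) else 0
  have h : ∀ y ∈ Ico a x, (p y * P y + (ω y) ^ 2 * q y * p y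
        + g₀ * (q (y + 1) - q y) * (p (y + 1) - p y)) = G (y + 1) - G y := by
    intro y hy
    rw [hP y hy]
    have : a < y + 1 := by rw [mem_Ico] at hy; omega
    simp only [G, this, if_true, Nat.add_sub_cancel]
    split_ifs <;> ring
  rw [sum_congr rfl h, sum_Ico_sub _ hax.le]
  simp [G, hax]

/-- with `B = {x−ℓ,…,x+ℓ}`, `τ ≡ 0` on `B`, and `(ψ_k)_{k∈B}` an
orthonormal basis of eigenvectors of `𝓗_B` with eigenvalues `ν_k²`, set
`H̃_L = Σ_{y∈B, y<x} Σ_{k∈B} ψ_k(y)² e_k` and `u = H̃_L − Σ_{y=x−ℓ}^{x−1} h_y`.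
Then `𝓛u = j_{x−1} + f`, where `j_{x−1} = −g₀ p_x (q_x − q_{x−1})` and
`f = −g₀ (q_{x−ℓ} − q_{x−ℓ−1}) ∂_{p_{x−ℓ}} u − g₀ (q_{x+ℓ} − q_{x+ℓ+1}) ∂_{p_{x+ℓ}} u`. -/
theorem liouville_poisson_identity (L : ℕ) (g g₀ : ℝ) (hg : 0 ≤ g) (hg₀ : 0 < g₀)
    (ω τ : ℕ → ℝ) (hω : ∀ y, 0 < ω y) (hτ01 : ∀ y, τ y = 0 ∨ τ y = 1)
    (x ℓ : ℕ) (hℓ : 1 ≤ ℓ) (hx : ℓ + 1 ≤ x) (hxL : x + ℓ + 2 ≤ L)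
    (hτB : ∀ y ∈ Finset.Icc (x - ℓ) (x + ℓ), τ y = 0)
    (ψ : ℕ → ℕ → ℝ) (ν2 : ℕ → ℝ)
    (horth : ∀ k ∈ Finset.Icc (x - ℓ) (x + ℓ), ∀ k' ∈ Finset.Icc (x - ℓ) (x + ℓ),
      ∑ y ∈ Finset.Icc (x - ℓ) (x + ℓ), ψ k y * ψ k' y = if k = k' then 1 else 0)
    (heig : ∀ k ∈ Finset.Icc (x - ℓ) (x + ℓ), ∀ y ∈ Finset.Icc (x - ℓ) (x + ℓ),
      ∑ z ∈ Finset.Icc (x - ℓ) (x + ℓ), andersonB g₀ ω x ℓ y z * ψ k z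
        = ν2 k * ψ k y) :
    ∀ z : (Fin L → ℝ) × (Fin L → ℝ),
      liouville L g g₀ ω τ
        (fun w => (∑ y ∈ Finset.Ico (x - ℓ) x, ∑ k ∈ Finset.Icc (x - ℓ) (x + ℓ),
              (ψ k y) ^ 2 * modeEnergy x ℓ (ψ k) (ν2 k) w)
          - ∑ y ∈ Finset.Ico (x - ℓ) x, hLoc g g₀ ω τ y w) z
      = -g₀ * cval z.2 x * (cval z.1 x - cval z.1 (x - 1))
        + (-g₀ * (cval z.1 (x - ℓ) - cval z.1 (x - ℓ - 1)) *
              dP (fun w => (∑ y ∈ Finset.Ico (x - ℓ) x,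
                    ∑ k ∈ Finset.Icc (x - ℓ) (x + ℓ),
                      (ψ k y) ^ 2 * modeEnergy x ℓ (ψ k) (ν2 k) w)
                  - ∑ y ∈ Finset.Ico (x - ℓ) x, hLoc g g₀ ω τ y w) (x - ℓ) z
            - g₀ * (cval z.1 (x + ℓ) - cval z.1 (x + ℓ + 1)) *
                dP (fun w => (∑ y ∈ Finset.Ico (x - ℓ) x,
                      ∑ k ∈ Finset.Icc (x - ℓ) (x + ℓ),
                        (ψ k y) ^ 2 * modeEnergy x ℓ (ψ k) (ν2 k) w)
                    - ∑ y ∈ Finset.Ico (x - ℓ) x, hLoc g g₀ ω τ y w) (x + ℓ) z) := by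
  intro z
  set u : (Fin L → ℝ) × (Fin L → ℝ) → ℝ := fun w =>
    (∑ y ∈ Finset.Ico (x - ℓ) x, ∑ k ∈ Finset.Icc (x - ℓ) (x + ℓ),
        (ψ k y) ^ 2 * modeEnergy x ℓ (ψ k) (ν2 k) w)
      - ∑ y ∈ Finset.Ico (x - ℓ) x, hLoc g g₀ ω τ y w with hu
  have hu' : HasFDerivAt u _ z :=
    (HasFDerivAt.fun_sum (u := Ico (x - ℓ) x) fun y _ =>
      HasFDerivAt.fun_sum (u := Icc (x - ℓ) (x + ℓ)) fun k _ =>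
        (hasFDerivAt_modeEnergy x ℓ (ψ k) (ν2 k) z).const_mul ((ψ k y) ^ 2)).sub
    (HasFDerivAt.fun_sum (u := Ico (x - ℓ) x) fun y _ =>
      (hasFDerivAt_onSite g ω τ y z).add (hasFDerivAt_bond g₀ y z))
  -- The Hamiltonian vector field of the full chain with the two forces across `∂B` removed.
  let W : (Fin L → ℝ) × (Fin L → ℝ) :=
    (∑ y ∈ range L, cval z.2 y • eQ L y)
      - (∑ y ∈ range L, dQ (chainH L g g₀ ω τ) y z • eP L y)
      + (g₀ * (cval z.1 (x - ℓ) - cval z.1 (x - ℓ - 1))) • eP L (x - ℓ)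
      + (g₀ * (cval z.1 (x + ℓ) - cval z.1 (x + ℓ + 1))) • eP L (x + ℓ)
  suffices hW : fderiv ℝ u z W = -g₀ * cval z.2 x * (cval z.1 x - cval z.1 (x - 1)) by
    rw [← hW]
    simp only [W, map_add, map_sub, map_sum, map_smul, smul_eq_mul, liouville, dP, dQ]
    ring
  have WQ : ∀ y, y < L → coordQ L y W = cval z.2 y := by
    intro y hy
    simp only [W, map_add, map_sub, map_sum, map_smul, smul_eq_mul, coordQ_eP, mul_zero,
      sum_const_zero, sub_zero, add_zero]
    rw [sum_eq_single y]
    · rw [coordQ_eQ hy, if_pos rfl, mul_one]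
    · intro y' hy' hne
      rw [coordQ_eQ (mem_range.1 hy'), if_neg hne.symm, mul_zero]
    · intro h; exact absurd (mem_range.2 hy) h
  have WP : ∀ y ∈ Icc (x - ℓ) (x + ℓ), coordP L y W
      = -∑ y' ∈ Icc (x - ℓ) (x + ℓ), andersonB g₀ ω x ℓ y y' * cval z.1 y' := by
    intro y hy
    have hyB := mem_Icc.1 hy
    have hyL : y < L := by omega
    have hsum : ∑ y' ∈ range L, dQ (chainH L g g₀ ω τ) y' z * coordP L y (eP L y')
        = dQ (chainH L g g₀ ω τ) y z := by
      rw [sum_eq_single y]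
      · rw [coordP_eP hyL, if_pos rfl, mul_one]
      · intro y' hy' hne
        rw [coordP_eP (mem_range.1 hy'), if_neg hne.symm, mul_zero]
      · intro h; exact absurd (mem_range.2 hyL) h
    simp only [W, map_add, map_sub, map_sum, map_smul, smul_eq_mul, coordP_eQ, mul_zero,
      sum_const_zero, zero_sub, hsum]
    rw [coordP_eP (by omega : x - ℓ < L), coordP_eP (by omega : x + ℓ < L)]
    obtain ⟨m, rfl⟩ : ∃ m, y = m + 1 := ⟨y - 1, by omega⟩
    rw [dQ_chainH g g₀ ω τ z (by omega), sum_andersonB g₀ ω x ℓ _ hy, hτB _ hy]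
    have hl : m + 1 = x - ℓ ∨ x - ℓ < m + 1 := by omega
    have hr : m + 1 = x + ℓ ∨ m + 1 < x + ℓ := by omega
    rcases hl with hl | hl <;> rcases hr with hr | hr
    · omega
    · rw [if_pos hl, if_neg hr.ne, if_pos hr, if_neg hl.not_gt, ← hl, Nat.add_sub_cancel]
      ring
    · rw [if_neg hl.ne', if_pos hr, if_neg hr.not_lt, if_pos hl, ← hr]
      ring
    · rw [if_neg hl.ne', if_neg hr.ne, if_pos hr, if_pos hl]
      ring
  rw [hu'.fderiv]
  simp only [add_apply, _root_.sum_apply,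
    smul_apply, sub_apply, smul_eq_mul]
  have hmode : ∀ k ∈ Icc (x - ℓ) (x + ℓ),
      (∑ y ∈ Icc (x - ℓ) (x + ℓ), cval z.2 y * ψ k y) *
          (∑ y ∈ Icc (x - ℓ) (x + ℓ), ψ k y * coordP L y W)
        + (ν2 k * ∑ y ∈ Icc (x - ℓ) (x + ℓ), cval z.1 y * ψ k y) *
          (∑ y ∈ Icc (x - ℓ) (x + ℓ), ψ k y * coordQ L y W) = 0 := by
    intro k hk
    rw [modeForce_eq g₀ ω x ℓ (ψ k) (ν2 k) (heig k hk) (fun y => cval z.1 y)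
      (fun y => coordP L y W) WP]
    have : ∑ y ∈ Icc (x - ℓ) (x + ℓ), ψ k y * coordQ L y W
        = ∑ y ∈ Icc (x - ℓ) (x + ℓ), cval z.2 y * ψ k y :=
      sum_congr rfl fun y hy => by
        rw [WQ y (by have := mem_Icc.1 hy; omega), mul_comm]
    rw [this]
    ring
  rw [sum_eq_zero fun y _ => sum_eq_zero fun k hk => by rw [hmode k hk, mul_zero], zero_sub]
  have htel := localEnergy_telescope g₀ ω (x - ℓ) x (by omega) (fun y => cval z.1 y)
    (fun y => cval z.2 y) (fun y => coordP L y W) (by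
      intro y hy
      have hyI := mem_Ico.1 hy
      have hyB : y ∈ Icc (x - ℓ) (x + ℓ) := by rw [mem_Icc]; omega
      rw [WP y hyB]
      obtain ⟨m, rfl⟩ : ∃ m, y = m + 1 := ⟨y - 1, by omega⟩
      rw [sum_andersonB g₀ ω x ℓ _ hyB, if_pos (by omega : m + 1 < x + ℓ), Nat.add_sub_cancel])
  have : -g₀ * cval z.2 x * (cval z.1 x - cval z.1 (x - 1))
      = -(g₀ * cval z.2 x * (cval z.1 x - cval z.1 (x - 1))) := by ring
  rw [this, ← htel]
  congr 1
  refine sum_congr rfl fun y hy => ?_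
  have hyI := mem_Ico.1 hy
  rw [WQ y (by omega), WQ (y + 1) (by omega), hτB y (by rw [mem_Icc]; omega)]
  ring
end

section
/- Define N_L := Σ_{y∈B, y<x} n_y and Ñ_L := Σ_{y∈B, y<x} Σ_{k∈B} ψ_k(y)² n_k, and set u := N_L − Ñ_L. Then i[H, u] = j_{x−1} + i[H_{∂B}, u], where j_{x−1} = iJ( c_x† c_{x−1} − c_{x−1}† c_x ) and H_{∂B} = Σ_{y ∈ {x−ℓ−1, x+ℓ}} ( J (c_y† c_{y+1} + c_{y+1}† c_y) + g τ_y n_y n_{y+1} ). -/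
/-!
The Jordan–Wigner operators satisfy the canonical anticommutation relations (`jwA_mul_jwA`,
`jwA_mul_jwA_conjTranspose`), hence `[c_a† c_b, c_d] = -δ_{ad} c_b` and
`[c_a† c_b, c_d†] = δ_{bd} c_a†`.  Split `H` into the terms inside `B`, the two boundary bonds
`H_{∂B}`, and the terms supported off `B`.

* The terms off `B` are built from bilinears `c_a† c_b` with `a, b ∉ B`, which commute with `u`
  (`lie_bilin_poissonU`, `lie_bondOp_poissonU`).
* Since `τ` vanishes inside `B`, the block Hamiltonian is the second quantization of the
  one-particle matrix (`secondQuant_hopKernel`).  An eigenvector `ψ_k` gives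
  `[H_B, c_{ψ_k}] = -ν_k c_{ψ_k}`, so `H_B` commutes with each `n_k`
  (`lie_secondQuant_modeNum`) and therefore with `Ñ_L`.
* In `[H_B, N_L]` the two ends of a bond contribute opposite currents, so only the bond
  `{x-1, x}`, which straddles the edge of `N_L`, survives (`sum_lie_hopOp_sum_numOp`); it
  yields `j_{x-1}`.
-/

open Matrix Finset

/-- The Jordan–Wigner annihilation operator `c_x = Z^{⊗x} ⊗ σ ⊗ 1^{⊗(L−1−x)}` on
`(ℂ²)^{⊗L}` (sites relabelled `0,…,L−1`), realized as a matrix indexed by spin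
configurations `Fin L → Fin 2`; here `Z = diag(1,−1)` and `σ` is the 2×2 matrix whose
only nonzero entry is a `1` in position `(1,2)`.  For `x ≥ L` we set `c_x = 0`. -/
noncomputable def jwA (L : ℕ) (x : ℕ) : Matrix (Fin L → Fin 2) (Fin L → Fin 2) ℂ :=
  Matrix.of fun s s' =>
    if hx : x < L then
      (if s ⟨x, hx⟩ = 0 ∧ s' ⟨x, hx⟩ = 1 ∧ ∀ y : Fin L, (y : ℕ) ≠ x → s y = s' y then
        ∏ y ∈ Finset.univ.filter fun y : Fin L => (y : ℕ) < x,
          (if s y = 1 then (-1 : ℂ) else 1)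
      else 0)
    else 0

/-- The number operator `n_x = c_x† c_x`. -/
noncomputable def numOp (L : ℕ) (x : ℕ) : Matrix (Fin L → Fin 2) (Fin L → Fin 2) ℂ :=
  (jwA L x)ᴴ * jwA L x

/-- The fermionic chain Hamiltonian
`H = Σ_{y=0}^{L−2} ( J (c_y† c_{y+1} + c_{y+1}† c_y) + g τ_y n_y n_{y+1} )
      + Σ_{y=0}^{L−1} ω_y n_y`. -/
noncomputable def fermionH (L : ℕ) (J g : ℝ) (ω τ : ℕ → ℝ) :
    Matrix (Fin L → Fin 2) (Fin L → Fin 2) ℂ :=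
  (∑ y ∈ Finset.range (L - 1),
      ((J : ℂ) • ((jwA L y)ᴴ * jwA L (y + 1) + (jwA L (y + 1))ᴴ * jwA L y)
        + ((g * τ y : ℝ) : ℂ) • (numOp L y * numOp L (y + 1))))
    + ∑ y ∈ Finset.range L, ((ω y : ℝ) : ℂ) • numOp L y

/-- The eigenmode creation/annihilation combination `c_ψ = Σ_{y∈B} ψ(y) c_y` and the
associated mode number operator `n_ψ = c_ψ† c_ψ`. -/
noncomputable def modeNum (L : ℕ) (B : Finset ℕ) (ψ : ℕ → ℝ) :
    Matrix (Fin L → Fin 2) (Fin L → Fin 2) ℂ :=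
  (∑ y ∈ B, ((ψ y : ℝ) : ℂ) • jwA L y)ᴴ * (∑ y ∈ B, ((ψ y : ℝ) : ℂ) • jwA L y)

/-! ### Canonical anticommutation relations -/

/-- The Jordan–Wigner sign `∏_{y < x} Z_y` evaluated on the configuration `s`. -/
noncomputable def jwSign (L x : ℕ) (s : Fin L → Fin 2) : ℂ :=
  ∏ y ∈ Finset.univ.filter fun y : Fin L => (y : ℕ) < x, (if s y = 1 then (-1 : ℂ) else 1)

/-- Both ladder operators at site `x`, as one family: `b = 0` gives `c_x` and `b = 1` gives
`c_x†`.  The row `s` is nonzero only if `s x = b`, and its single entry sits in the column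
obtained by flipping the spin at `x`. -/
noncomputable def jwLadder (L : ℕ) (x : Fin L) (b : Fin 2) :
    Matrix (Fin L → Fin 2) (Fin L → Fin 2) ℂ :=
  Matrix.of fun s s' =>
    if s x = b ∧ s' = Function.update s x (1 - b) then jwSign L x s else 0

lemma jwSign_mul_self (L x : ℕ) (s : Fin L → Fin 2) : jwSign L x s * jwSign L x s = 1 := by
  unfold jwSign
  rw [← Finset.prod_mul_distrib]
  refine Finset.prod_eq_one fun y _ => ?_
  split_ifs <;> norm_num

lemma star_jwSign (L x : ℕ) (s : Fin L → Fin 2) : star (jwSign L x s) = jwSign L x s := by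
  unfold jwSign
  rw [star_prod]
  refine Finset.prod_congr rfl fun y _ => ?_
  split_ifs <;> simp

lemma jwSign_update_of_le (L x : ℕ) (s : Fin L → Fin 2) (y : Fin L) (h : x ≤ y) (b : Fin 2) :
    jwSign L x (Function.update s y b) = jwSign L x s := by
  unfold jwSign
  refine Finset.prod_congr rfl fun z hz => ?_
  have hzx := (Finset.mem_filter.1 hz).2
  have : z ≠ y := by rintro rfl; omega
  rw [Function.update_of_ne this]

lemma jwSign_update_of_lt (L x : ℕ) (s : Fin L → Fin 2) (y : Fin L) (h : (y : ℕ) < x) :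
    jwSign L x (Function.update s y (1 - s y)) = - jwSign L x s := by
  unfold jwSign
  have hy : y ∈ Finset.univ.filter fun y : Fin L => (y : ℕ) < x := by simp [h]
  rw [← Finset.mul_prod_erase _ _ hy, ← Finset.mul_prod_erase _ _ hy, ← neg_mul]
  congr 1
  · rw [Function.update_self]
    generalize s y = a
    fin_cases a <;> simp
  · refine Finset.prod_congr rfl fun z hz => ?_
    rw [Function.update_of_ne (Finset.ne_of_mem_erase hz)]

lemma jwA_eq_ladder (L : ℕ) (x : Fin L) : jwA L x = jwLadder L x 0 := by
  ext s s'
  simp only [jwA, jwLadder, Matrix.of_apply, x.2, dite_true, jwSign]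
  congr 1
  apply propext
  constructor
  · rintro ⟨h0, h1, h⟩
    refine ⟨h0, funext fun z => ?_⟩
    by_cases hz : z = x
    · subst hz; simpa using h1
    · rw [Function.update_of_ne hz, h z (fun hh => hz (Fin.ext hh))]
  · rintro ⟨h0, rfl⟩
    refine ⟨h0, by simp, fun y hy => ?_⟩
    rw [Function.update_of_ne (fun hh => hy (by rw [hh]))]

lemma jwA_conjTranspose_eq_ladder (L : ℕ) (x : Fin L) : (jwA L x)ᴴ = jwLadder L x 1 := by
  rw [jwA_eq_ladder]
  ext s s'
  simp only [Matrix.conjTranspose_apply, jwLadder, Matrix.of_apply]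
  by_cases h : s x = 1 ∧ s' = Function.update s x (1 - 1)
  · obtain ⟨h1, rfl⟩ := h
    have hs : s = Function.update (Function.update s x (1 - 1)) x (1 - 0) := by
      simp [← h1]
    rw [if_pos ⟨by simp, hs⟩, if_pos ⟨h1, rfl⟩, star_jwSign, jwSign_update_of_le _ _ _ _ le_rfl]
  · rw [if_neg h, if_neg, star_zero]
    rintro ⟨h0, rfl⟩
    exact h ⟨by simp, by simp [← h0]⟩

lemma jwLadder_mul_apply (L : ℕ) (x : Fin L) (b : Fin 2)
    (M : Matrix (Fin L → Fin 2) (Fin L → Fin 2) ℂ) (s t : Fin L → Fin 2) :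
    (jwLadder L x b * M) s t
      = if s x = b then jwSign L x s * M (Function.update s x (1 - s x)) t else 0 := by
  rw [Matrix.mul_apply, Finset.sum_eq_single (Function.update s x (1 - b))]
  · by_cases h : s x = b
    · subst h; simp [jwLadder]
    · simp [jwLadder, h]
  · intro s' _ hs'
    simp [jwLadder, hs']
  · simp

/-- Distinct sites anticommute: the Jordan–Wigner string of the right-hand site picks up exactly
one sign when the spin at the left-hand site is flipped. -/
lemma jwLadder_anticomm_of_lt (L : ℕ) (x y : Fin L) (h : x < y) (a b : Fin 2) :
    jwLadder L x a * jwLadder L y b = - (jwLadder L y b * jwLadder L x a) := by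
  ext s t
  have hne : x ≠ y := ne_of_lt h
  rw [Matrix.neg_apply, jwLadder_mul_apply, jwLadder_mul_apply]
  simp only [jwLadder, Matrix.of_apply, Function.update_of_ne hne, Function.update_of_ne hne.symm]
  by_cases hx : s x = a <;> by_cases hy : s y = b <;> simp only [hx, hy, if_true, if_false,
    true_and, false_and, mul_zero, neg_zero]
  subst hx hy
  rw [jwSign_update_of_lt _ _ _ _ h, jwSign_update_of_le _ _ _ _ (le_of_lt h),
    Function.update_comm hne]
  split_ifs <;> ring

lemma jwLadder_anticomm (L : ℕ) (x y : Fin L) (h : x ≠ y) (a b : Fin 2) :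
    jwLadder L x a * jwLadder L y b = - (jwLadder L y b * jwLadder L x a) := by
  rcases lt_or_gt_of_ne h with h | h
  · exact jwLadder_anticomm_of_lt L x y h a b
  · rw [jwLadder_anticomm_of_lt L y x h b a, neg_neg]

lemma jwLadder_sq (L : ℕ) (x : Fin L) (b : Fin 2) : jwLadder L x b * jwLadder L x b = 0 := by
  ext s t
  rw [jwLadder_mul_apply]
  split_ifs with h
  · subst h
    have : ∀ a : Fin 2, 1 - a ≠ a := by decide
    simp [jwLadder, this]
  · rfl

lemma jwLadder_add (L : ℕ) (x : Fin L) :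
    jwLadder L x 0 * jwLadder L x 1 + jwLadder L x 1 * jwLadder L x 0 = 1 := by
  ext s t
  rw [Matrix.add_apply, jwLadder_mul_apply, jwLadder_mul_apply, Matrix.one_apply]
  have h2 : ∀ a : Fin 2, a = 0 ∨ a = 1 := by decide
  have key := jwSign_mul_self L x s
  rcases h2 (s x) with h | h
  · have hs : Function.update s x 0 = s := by rw [← h]; simp
    simp [jwLadder, h, hs, jwSign_update_of_le, key, eq_comm]
  · have hs : Function.update s x 1 = s := by rw [← h]; simp
    simp [jwLadder, h, hs, jwSign_update_of_le, key, eq_comm]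

lemma jwA_mul_jwA (L x y : ℕ) (hx : x < L) (hy : y < L) :
    jwA L x * jwA L y = - (jwA L y * jwA L x) := by
  have ex := jwA_eq_ladder L ⟨x, hx⟩
  have ey := jwA_eq_ladder L ⟨y, hy⟩
  simp only at ex ey
  by_cases h : x = y
  · subst h
    rw [ex, jwLadder_sq, neg_zero]
  · rw [ex, ey]
    exact jwLadder_anticomm L _ _ (by simpa using h) _ _

lemma jwA_mul_jwA_conjTranspose (L x y : ℕ) (hx : x < L) (hy : y < L) :
    jwA L x * (jwA L y)ᴴ = (if x = y then 1 else 0) - (jwA L y)ᴴ * jwA L x := by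
  have ex := jwA_eq_ladder L ⟨x, hx⟩
  have ey := jwA_conjTranspose_eq_ladder L ⟨y, hy⟩
  simp only at ex ey
  rw [ex, ey]
  by_cases h : x = y
  · subst h
    rw [if_pos rfl, eq_sub_iff_add_eq]
    exact jwLadder_add L _
  · rw [if_neg h, zero_sub]
    exact jwLadder_anticomm L _ _ (by simpa using h) _ _

/-! ### Linearity of the ring commutator

The rules for `LieRing` exist in Mathlib, but rewriting with them does not see through the
bracket `Ring.instBracket` found on matrices, so they are restated for that bracket. -/

section Comm

variable {R : Type*} [Ring R]

lemma comm_add_lie (A B C : R) : ⁅A + B, C⁆ = ⁅A, C⁆ + ⁅B, C⁆ := by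
  simp only [Ring.lie_def]; noncomm_ring

lemma comm_lie_sub (A B C : R) : ⁅A, B - C⁆ = ⁅A, B⁆ - ⁅A, C⁆ := by
  simp only [Ring.lie_def]; noncomm_ring

lemma comm_lie_skew (A B : R) : -⁅B, A⁆ = ⁅A, B⁆ := by
  simp only [Ring.lie_def]; noncomm_ring

lemma comm_sum_lie (S : Finset ℕ) (f : ℕ → R) (A : R) : ⁅∑ y ∈ S, f y, A⁆ = ∑ y ∈ S, ⁅f y, A⁆ := by
  simp only [Ring.lie_def, Finset.sum_mul, Finset.mul_sum, Finset.sum_sub_distrib]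

lemma comm_lie_sum (S : Finset ℕ) (f : ℕ → R) (A : R) : ⁅A, ∑ y ∈ S, f y⁆ = ∑ y ∈ S, ⁅A, f y⁆ := by
  simp only [Ring.lie_def, Finset.sum_mul, Finset.mul_sum, Finset.sum_sub_distrib]

lemma comm_smul_lie [Algebra ℂ R] (t : ℂ) (A B : R) : ⁅t • A, B⁆ = t • ⁅A, B⁆ := by
  simp only [Ring.lie_def, smul_mul_assoc, mul_smul_comm, smul_sub]

lemma comm_lie_smul [Algebra ℂ R] (t : ℂ) (A B : R) : ⁅A, t • B⁆ = t • ⁅A, B⁆ := by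
  simp only [Ring.lie_def, smul_mul_assoc, mul_smul_comm, smul_sub]

/-- `⁅A, ·⁆` is a derivation. -/
lemma lie_mul_leibniz (A B C : R) : ⁅A, B * C⁆ = ⁅A, B⁆ * C + B * ⁅A, C⁆ := by
  simp only [Ring.lie_def]; noncomm_ring

end Comm

/-! ### Commutators of bilinears -/

lemma lie_bilin_jwA (L a b d : ℕ) (ha : a < L) (hb : b < L) (hd : d < L) :
    ⁅(jwA L a)ᴴ * jwA L b, jwA L d⁆ = if d = a then -jwA L b else 0 := by
  rw [Ring.lie_def, mul_assoc, jwA_mul_jwA L b d hb hd, ← mul_assoc (jwA L d),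
    jwA_mul_jwA_conjTranspose L d a hd ha]
  split_ifs <;> noncomm_ring

lemma lie_bilin_jwA_conjTranspose (L a b d : ℕ) (ha : a < L) (hb : b < L) (hd : d < L) :
    ⁅(jwA L a)ᴴ * jwA L b, (jwA L d)ᴴ⁆ = if b = d then (jwA L a)ᴴ else 0 := by
  have h : (jwA L d)ᴴ * (jwA L a)ᴴ = - ((jwA L a)ᴴ * (jwA L d)ᴴ) := by
    rw [← Matrix.conjTranspose_mul, ← Matrix.conjTranspose_mul, jwA_mul_jwA L a d ha hd,
      Matrix.conjTranspose_neg]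
  rw [Ring.lie_def, mul_assoc, jwA_mul_jwA_conjTranspose L b d hb hd, ← mul_assoc, h]
  split_ifs <;> noncomm_ring

/-- The kinetic term `c_y† c_{y+1} + c_{y+1}† c_y` of the bond `{y, y+1}`. -/
noncomputable def hopOp (L y : ℕ) : Matrix (Fin L → Fin 2) (Fin L → Fin 2) ℂ :=
  (jwA L y)ᴴ * jwA L (y + 1) + (jwA L (y + 1))ᴴ * jwA L y

/-- The unnormalised current `[c_y† c_{y+1} + c_{y+1}† c_y, n_y]` through the bond `{y, y+1}`. -/
noncomputable def currOp (L y : ℕ) : Matrix (Fin L → Fin 2) (Fin L → Fin 2) ℂ :=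
  (jwA L (y + 1))ᴴ * jwA L y - (jwA L y)ᴴ * jwA L (y + 1)

lemma lie_numOp_numOp (L y z : ℕ) (hy : y < L) (hz : z < L) :
    ⁅numOp L y, numOp L z⁆ = 0 := by
  unfold numOp
  rw [lie_mul_leibniz, lie_bilin_jwA L y y z hy hy hz, lie_bilin_jwA_conjTranspose L y y z hy hy hz]
  by_cases h : y = z
  · subst h; simp
  · simp [h, Ne.symm h]

lemma lie_hopOp_numOp (L y z : ℕ) (hy : y + 1 < L) (hz : z < L) :
    ⁅hopOp L y, numOp L z⁆
      = (if y = z then currOp L y else 0) - (if y + 1 = z then currOp L y else 0) := by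
  have hy' : y < L := by omega
  unfold numOp hopOp currOp
  rw [comm_add_lie, lie_mul_leibniz, lie_mul_leibniz, lie_bilin_jwA L y (y + 1) z hy' hy hz,
    lie_bilin_jwA L (y + 1) y z hy hy' hz,
    lie_bilin_jwA_conjTranspose L y (y + 1) z hy' hy hz,
    lie_bilin_jwA_conjTranspose L (y + 1) y z hy hy' hz]
  by_cases h : y = z
  · subst h; simp; abel
  · by_cases h' : y + 1 = z
    · subst h'; simp; abel
    · simp [h, h', Ne.symm h, Ne.symm h']

/-- In `[T_y, N_L]` the contributions of the two ends of a bond cancel unless exactly one of them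
lies to the left of `x`; among the bonds of `B` this leaves only `{x-1, x}`. -/
lemma sum_lie_hopOp_sum_numOp (L x ℓ : ℕ) (hℓ : 1 ≤ ℓ) (hx : ℓ + 1 ≤ x) (hxL : x + ℓ + 2 ≤ L) :
    ∑ y ∈ Finset.Ico (x - ℓ) (x + ℓ), ⁅hopOp L y, ∑ z ∈ Finset.Ico (x - ℓ) x, numOp L z⁆
      = currOp L (x - 1) := by
  rw [Finset.sum_eq_single (x - 1)]
  · rw [comm_lie_sum, Finset.sum_congr rfl fun z hz => lie_hopOp_numOp L (x - 1) z (by omega)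
      (by have := Finset.mem_Ico.1 hz; omega), Finset.sum_sub_distrib, Finset.sum_ite_eq,
      Finset.sum_ite_eq, if_pos (Finset.mem_Ico.2 (by omega)),
      if_neg (by rw [Finset.mem_Ico]; omega), sub_zero]
  · intro y hy hne
    have hy' := Finset.mem_Ico.1 hy
    rw [comm_lie_sum, Finset.sum_congr rfl fun z hz => lie_hopOp_numOp L y z (by omega)
      (by have := Finset.mem_Ico.1 hz; omega), Finset.sum_sub_distrib, Finset.sum_ite_eq,
      Finset.sum_ite_eq]
    have : y ∈ Finset.Ico (x - ℓ) x ↔ y + 1 ∈ Finset.Ico (x - ℓ) x := by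
      simp only [Finset.mem_Ico]; omega
    simp only [this, sub_self]
  · intro h
    exact absurd (Finset.mem_Ico.2 (by omega)) h

/-! ### Mode number operators are conserved by the block Hamiltonian -/

/-- The second quantization `∑_{a,b} h_{ab} c_a† c_b` of a one-particle kernel on `B`. -/
noncomputable def secondQuant (L : ℕ) (B : Finset ℕ) (h : ℕ → ℕ → ℝ) :
    Matrix (Fin L → Fin 2) (Fin L → Fin 2) ℂ :=
  ∑ a ∈ B, ∑ b ∈ B, ((h a b : ℝ) : ℂ) • ((jwA L a)ᴴ * jwA L b)

/-- If `ψ` is an eigenvector of the symmetric kernel `h`, then `[dΓ(h), c_ψ] = -ν c_ψ` and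
`[dΓ(h), c_ψ†] = ν c_ψ†`, so the two contributions to `[dΓ(h), c_ψ† c_ψ]` cancel. -/
lemma lie_secondQuant_modeNum (L : ℕ) (B : Finset ℕ) (hB : ∀ a ∈ B, a < L) (h : ℕ → ℕ → ℝ)
    (hsymm : ∀ a b, h a b = h b a) (ψ : ℕ → ℝ) (ν : ℝ)
    (heig : ∀ y ∈ B, ∑ z ∈ B, h y z * ψ z = ν * ψ y) :
    ⁅secondQuant L B h, modeNum L B ψ⁆ = 0 := by
  have e1 : ⁅secondQuant L B h, ∑ y ∈ B, ((ψ y : ℝ) : ℂ) • jwA L y⁆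
      = -((ν : ℂ) • ∑ y ∈ B, ((ψ y : ℝ) : ℂ) • jwA L y) := by
    have : ∀ d ∈ B, ⁅secondQuant L B h, jwA L d⁆ = ∑ b ∈ B, -((h d b : ℝ) : ℂ) • jwA L b := by
      intro d hd
      simp only [secondQuant, comm_sum_lie, comm_smul_lie]
      rw [Finset.sum_comm]
      refine Finset.sum_congr rfl fun b hb => ?_
      rw [Finset.sum_congr rfl fun a ha => by
        rw [lie_bilin_jwA L a b d (hB a ha) (hB b hb) (hB d hd), smul_ite, smul_zero]]
      rw [Finset.sum_ite_eq, if_pos hd, smul_neg, neg_smul]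
    rw [comm_lie_sum, Finset.sum_congr rfl fun d hd => by rw [comm_lie_smul, this d hd, Finset.smul_sum],
      Finset.sum_comm, Finset.smul_sum, ← Finset.sum_neg_distrib]
    refine Finset.sum_congr rfl fun b hb => ?_
    simp only [smul_smul, ← Finset.sum_smul]
    rw [← neg_smul]
    congr 1
    have := congrArg (fun r : ℝ => (r : ℂ)) (heig b hb)
    push_cast at this
    rw [← this, ← Finset.sum_neg_distrib]
    refine Finset.sum_congr rfl fun d _ => ?_
    rw [hsymm d b]; ring
  have hK : (secondQuant L B h)ᴴ = secondQuant L B h := by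
    simp only [secondQuant, Matrix.conjTranspose_sum, Matrix.conjTranspose_smul,
      Matrix.conjTranspose_mul, Matrix.conjTranspose_conjTranspose]
    rw [Finset.sum_comm]
    refine Finset.sum_congr rfl fun a _ => Finset.sum_congr rfl fun b _ => ?_
    rw [hsymm b a]; simp
  -- The creation-operator relation is the adjoint of `e1`, since `dΓ(h)` is Hermitian.
  have e2 : ⁅secondQuant L B h, (∑ y ∈ B, ((ψ y : ℝ) : ℂ) • jwA L y)ᴴ⁆
      = (ν : ℂ) • (∑ y ∈ B, ((ψ y : ℝ) : ℂ) • jwA L y)ᴴ := by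
    have := congrArg Matrix.conjTranspose e1
    rw [Ring.lie_def, Matrix.conjTranspose_sub, Matrix.conjTranspose_mul,
      Matrix.conjTranspose_mul, hK, Matrix.conjTranspose_neg, Matrix.conjTranspose_smul,
      Complex.star_def, Complex.conj_ofReal] at this
    rw [Ring.lie_def, ← neg_sub, this, neg_neg]
  rw [modeNum, lie_mul_leibniz, e1, e2]
  simp

/-- The one-particle kernel: potential `ω` on the diagonal, hopping `J` between neighbours. -/
noncomputable def hopKernel (J : ℝ) (ω : ℕ → ℝ) (y z : ℕ) : ℝ :=
  if y = z then ω y else if y + 1 = z ∨ z + 1 = y then J else 0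

lemma hopKernel_symm (J : ℝ) (ω : ℕ → ℝ) (y z : ℕ) : hopKernel J ω y z = hopKernel J ω z y := by
  unfold hopKernel
  by_cases h : y = z
  · subst h; rfl
  · simp only [h, Ne.symm h, if_false, or_comm]

/-- The free Hamiltonian of the block is the second quantization of the one-particle kernel. -/
lemma secondQuant_hopKernel (L : ℕ) (J : ℝ) (ω : ℕ → ℝ) (p q : ℕ) :
    secondQuant L (Finset.Icc p q) (hopKernel J ω)
      = ∑ y ∈ Finset.Ico p q, (J : ℂ) • hopOp L y
        + ∑ y ∈ Finset.Icc p q, ((ω y : ℝ) : ℂ) • numOp L y := by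
  have hsplit : ∀ a b : ℕ, ((hopKernel J ω a b : ℝ) : ℂ) • ((jwA L a)ᴴ * jwA L b)
      = (if a + 1 = b then (J : ℂ) • ((jwA L a)ᴴ * jwA L b) else 0)
        + (if b + 1 = a then (J : ℂ) • ((jwA L a)ᴴ * jwA L b) else 0)
        + (if a = b then ((ω a : ℝ) : ℂ) • ((jwA L a)ᴴ * jwA L b) else 0) := by
    intro a b
    unfold hopKernel
    by_cases h1 : a = b
    · subst h1; simp
    · by_cases h2 : a + 1 = b
      · subst h2; simp [show ¬ a + 1 + 1 = a by omega]
      · by_cases h3 : b + 1 = a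
        · subst h3; simp [show ¬ b + 1 + 1 = b by omega]
        · simp [h1, h2, h3]
  have hI : Finset.Ico p q = (Finset.Icc p q).filter (fun a => a + 1 ∈ Finset.Icc p q) := by
    ext a; simp only [Finset.mem_Ico, Finset.mem_filter, Finset.mem_Icc]; omega
  simp only [secondQuant, hsplit, Finset.sum_add_distrib, hopOp, smul_add]
  congr 1
  · congr 1
    · rw [hI, Finset.sum_filter]
      exact Finset.sum_congr rfl fun a _ => by rw [Finset.sum_ite_eq]
    · rw [Finset.sum_comm, hI, Finset.sum_filter]
      exact Finset.sum_congr rfl fun a _ => by rw [Finset.sum_ite_eq]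
  · refine Finset.sum_congr rfl fun a ha => ?_
    rw [Finset.sum_ite_eq, if_pos ha, numOp]

/-! ### Locality -/

/-- A bilinear supported off `B` commutes with every ladder operator in `B`, hence with
`c_ψ† c_ψ`. -/
lemma lie_bilin_modeNum_of_notMem (L : ℕ) (B : Finset ℕ) (hB : ∀ a ∈ B, a < L) (ψ : ℕ → ℝ)
    (a b : ℕ) (ha : a < L) (hb : b < L) (haB : a ∉ B) (hbB : b ∉ B) :
    ⁅(jwA L a)ᴴ * jwA L b, modeNum L B ψ⁆ = 0 := by
  have e1 : ⁅(jwA L a)ᴴ * jwA L b, ∑ y ∈ B, ((ψ y : ℝ) : ℂ) • jwA L y⁆ = 0 := by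
    rw [comm_lie_sum]
    refine Finset.sum_eq_zero fun d hd => ?_
    rw [comm_lie_smul, lie_bilin_jwA L a b d ha hb (hB d hd), if_neg (by rintro rfl; exact haB hd),
      smul_zero]
  have e2 : ⁅(jwA L a)ᴴ * jwA L b, (∑ y ∈ B, ((ψ y : ℝ) : ℂ) • jwA L y)ᴴ⁆ = 0 := by
    rw [Matrix.conjTranspose_sum, comm_lie_sum]
    refine Finset.sum_eq_zero fun d hd => ?_
    rw [Matrix.conjTranspose_smul, comm_lie_smul, lie_bilin_jwA_conjTranspose L a b d ha hb (hB d hd),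
      if_neg (by rintro rfl; exact hbB hd), smul_zero]
  rw [modeNum, lie_mul_leibniz, e1, e2, zero_mul, mul_zero, add_zero]

lemma lie_bilin_numOp_of_ne (L a b d : ℕ) (ha : a < L) (hb : b < L) (hd : d < L)
    (had : a ≠ d) (hbd : b ≠ d) : ⁅(jwA L a)ᴴ * jwA L b, numOp L d⁆ = 0 := by
  rw [numOp, lie_mul_leibniz, lie_bilin_jwA L a b d ha hb hd, if_neg had.symm,
    lie_bilin_jwA_conjTranspose L a b d ha hb hd, if_neg hbd, zero_mul, mul_zero, add_zero]

/-- The observable `u = N_L - Ñ_L`. -/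
noncomputable def poissonU (L x ℓ : ℕ) (ψ : ℕ → ℕ → ℝ) :
    Matrix (Fin L → Fin 2) (Fin L → Fin 2) ℂ :=
  (∑ y ∈ Finset.Ico (x - ℓ) x, numOp L y)
    - ∑ y ∈ Finset.Ico (x - ℓ) x, ∑ k ∈ Finset.Icc (x - ℓ) (x + ℓ),
        (((ψ k y) ^ 2 : ℝ) : ℂ) • modeNum L (Finset.Icc (x - ℓ) (x + ℓ)) (ψ k)

lemma lie_bilin_poissonU (L x ℓ : ℕ) (hxL : x + ℓ + 2 ≤ L) (ψ : ℕ → ℕ → ℝ) (a b : ℕ)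
    (ha : a < L) (hb : b < L) (haB : a ∉ Finset.Icc (x - ℓ) (x + ℓ))
    (hbB : b ∉ Finset.Icc (x - ℓ) (x + ℓ)) :
    ⁅(jwA L a)ᴴ * jwA L b, poissonU L x ℓ ψ⁆ = 0 := by
  have hB : ∀ d ∈ Finset.Icc (x - ℓ) (x + ℓ), d < L := fun d hd => by
    have := Finset.mem_Icc.1 hd; omega
  have hsub : ∀ d ∈ Finset.Ico (x - ℓ) x, d ∈ Finset.Icc (x - ℓ) (x + ℓ) := fun d hd => by
    have := Finset.mem_Ico.1 hd; exact Finset.mem_Icc.2 (by omega)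
  rw [poissonU, comm_lie_sub, comm_lie_sum, comm_lie_sum, Finset.sum_eq_zero, Finset.sum_eq_zero, sub_zero]
  · intro d _
    rw [comm_lie_sum]
    refine Finset.sum_eq_zero fun k _ => ?_
    rw [comm_lie_smul, lie_bilin_modeNum_of_notMem L _ hB (ψ k) a b ha hb haB hbB, smul_zero]
  · intro d hd
    have hd' := hsub d hd
    exact lie_bilin_numOp_of_ne L a b d ha hb (hB d hd') (by rintro rfl; exact haB hd')
      (by rintro rfl; exact hbB hd')

/-- The full bond term of the Hamiltonian at `{y, y+1}`. -/
noncomputable def bondOp (L : ℕ) (J g : ℝ) (τ : ℕ → ℝ) (y : ℕ) :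
    Matrix (Fin L → Fin 2) (Fin L → Fin 2) ℂ :=
  (J : ℂ) • ((jwA L y)ᴴ * jwA L (y + 1) + (jwA L (y + 1))ᴴ * jwA L y)
    + ((g * τ y : ℝ) : ℂ) • (numOp L y * numOp L (y + 1))

lemma lie_bondOp_poissonU (L x ℓ : ℕ) (J g : ℝ) (τ : ℕ → ℝ) (hxL : x + ℓ + 2 ≤ L)
    (ψ : ℕ → ℕ → ℝ) (y : ℕ) (hy : y + 1 < L) (h0 : y ∉ Finset.Icc (x - ℓ) (x + ℓ))
    (h1 : y + 1 ∉ Finset.Icc (x - ℓ) (x + ℓ)) :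
    ⁅bondOp L J g τ y, poissonU L x ℓ ψ⁆ = 0 := by
  have hy' : y < L := by omega
  have hn : ⁅numOp L y * numOp L (y + 1), poissonU L x ℓ ψ⁆ = 0 := by
    rw [← comm_lie_skew, lie_mul_leibniz, ← comm_lie_skew, ← comm_lie_skew (poissonU L x ℓ ψ) (numOp L (y + 1)),
      numOp, numOp, lie_bilin_poissonU L x ℓ hxL ψ _ _ hy' hy' h0 h0,
      lie_bilin_poissonU L x ℓ hxL ψ _ _ hy hy h1 h1]
    simp
  rw [bondOp, comm_add_lie, comm_smul_lie, comm_smul_lie, comm_add_lie, hn,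
    lie_bilin_poissonU L x ℓ hxL ψ _ _ hy' hy h0 h1,
    lie_bilin_poissonU L x ℓ hxL ψ _ _ hy hy' h1 h0]
  simp

/-- Inside the block the Hamiltonian is free: it conserves the mode numbers, so only `N_L`
contributes, and it contributes the current at `{x-1, x}`. -/
lemma lie_block_poissonU (L : ℕ) (J : ℝ) (ω : ℕ → ℝ) (x ℓ : ℕ) (hℓ : 1 ≤ ℓ) (hx : ℓ + 1 ≤ x)
    (hxL : x + ℓ + 2 ≤ L) (ψ : ℕ → ℕ → ℝ) (ν : ℕ → ℝ)
    (heig : ∀ k ∈ Finset.Icc (x - ℓ) (x + ℓ), ∀ y ∈ Finset.Icc (x - ℓ) (x + ℓ),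
      ∑ z ∈ Finset.Icc (x - ℓ) (x + ℓ), hopKernel J ω y z * ψ k z = ν k * ψ k y) :
    ⁅secondQuant L (Finset.Icc (x - ℓ) (x + ℓ)) (hopKernel J ω), poissonU L x ℓ ψ⁆
      = (J : ℂ) • currOp L (x - 1) := by
  have hB : ∀ d ∈ Finset.Icc (x - ℓ) (x + ℓ), d < L := fun d hd => by
    have := Finset.mem_Icc.1 hd; omega
  rw [poissonU, comm_lie_sub]
  have hmode : ⁅secondQuant L (Finset.Icc (x - ℓ) (x + ℓ)) (hopKernel J ω),
      ∑ y ∈ Finset.Ico (x - ℓ) x, ∑ k ∈ Finset.Icc (x - ℓ) (x + ℓ),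
        (((ψ k y) ^ 2 : ℝ) : ℂ) • modeNum L (Finset.Icc (x - ℓ) (x + ℓ)) (ψ k)⁆ = 0 := by
    rw [comm_lie_sum]
    refine Finset.sum_eq_zero fun y _ => ?_
    rw [comm_lie_sum]
    refine Finset.sum_eq_zero fun k hk => ?_
    rw [comm_lie_smul, lie_secondQuant_modeNum L _ hB _ (hopKernel_symm J ω) (ψ k) (ν k) (heig k hk),
      smul_zero]
  have hpot : ⁅∑ y ∈ Finset.Icc (x - ℓ) (x + ℓ), ((ω y : ℝ) : ℂ) • numOp L y,
      ∑ z ∈ Finset.Ico (x - ℓ) x, numOp L z⁆ = 0 := by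
    rw [comm_sum_lie]
    refine Finset.sum_eq_zero fun y hy => ?_
    rw [comm_smul_lie, comm_lie_sum, Finset.sum_eq_zero, smul_zero]
    intro z hz
    exact lie_numOp_numOp L y z (hB y hy) (by have := Finset.mem_Ico.1 hz; omega)
  rw [hmode, sub_zero, secondQuant_hopKernel, comm_add_lie, hpot, add_zero, ← Finset.smul_sum,
    comm_smul_lie, comm_sum_lie, sum_lie_hopOp_sum_numOp L x ℓ hℓ hx hxL]

/-- Only the block bonds, the two boundary bonds and the block potential fail to commute
with `u`. -/
lemma lie_fermionH_poissonU (L : ℕ) (J g : ℝ) (ω τ : ℕ → ℝ) (x ℓ : ℕ) (hℓ : 1 ≤ ℓ)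
    (hx : ℓ + 1 ≤ x) (hxL : x + ℓ + 2 ≤ L)
    (hτB : ∀ y ∈ Finset.Icc (x - ℓ) (x + ℓ - 1), τ y = 0) (ψ : ℕ → ℕ → ℝ) :
    ⁅fermionH L J g ω τ, poissonU L x ℓ ψ⁆
      = ⁅secondQuant L (Finset.Icc (x - ℓ) (x + ℓ)) (hopKernel J ω), poissonU L x ℓ ψ⁆
        + ⁅∑ y ∈ ({x - ℓ - 1, x + ℓ} : Finset ℕ), bondOp L J g τ y, poissonU L x ℓ ψ⁆ := by
  have hdef : fermionH L J g ω τ = ∑ y ∈ Finset.range (L - 1), bondOp L J g τ y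
      + ∑ y ∈ Finset.range L, ((ω y : ℝ) : ℂ) • numOp L y := rfl
  have hdisj : Disjoint (Finset.Ico (x - ℓ) (x + ℓ)) ({x - ℓ - 1, x + ℓ} : Finset ℕ) := by
    rw [Finset.disjoint_left]
    intro y hy
    simp only [Finset.mem_Ico, Finset.mem_insert, Finset.mem_singleton] at hy ⊢
    omega
  have hbonds : ∑ y ∈ Finset.range (L - 1), ⁅bondOp L J g τ y, poissonU L x ℓ ψ⁆
      = ∑ y ∈ Finset.Ico (x - ℓ) (x + ℓ), ⁅bondOp L J g τ y, poissonU L x ℓ ψ⁆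
        + ∑ y ∈ ({x - ℓ - 1, x + ℓ} : Finset ℕ), ⁅bondOp L J g τ y, poissonU L x ℓ ψ⁆ := by
    rw [← Finset.sum_union hdisj]
    symm
    apply Finset.sum_subset
    · intro y hy
      simp only [Finset.mem_union, Finset.mem_Ico, Finset.mem_insert, Finset.mem_singleton,
        Finset.mem_range] at hy ⊢
      omega
    · intro y hy hy'
      simp only [Finset.mem_union, Finset.mem_Ico, Finset.mem_insert, Finset.mem_singleton,
        Finset.mem_range] at hy hy'
      exact lie_bondOp_poissonU L x ℓ J g τ hxL ψ y (by omega)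
        (by rw [Finset.mem_Icc]; omega) (by rw [Finset.mem_Icc]; omega)
  have hpot : ∑ y ∈ Finset.range L, ⁅((ω y : ℝ) : ℂ) • numOp L y, poissonU L x ℓ ψ⁆
      = ∑ y ∈ Finset.Icc (x - ℓ) (x + ℓ), ⁅((ω y : ℝ) : ℂ) • numOp L y, poissonU L x ℓ ψ⁆ := by
    symm
    apply Finset.sum_subset
    · intro y hy
      simp only [Finset.mem_Icc, Finset.mem_range] at hy ⊢
      omega
    · intro y hy hy'
      have hyL := Finset.mem_range.1 hy
      rw [comm_smul_lie, numOp, lie_bilin_poissonU L x ℓ hxL ψ y y hyL hyL hy' hy', smul_zero]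
  have hfree : ∀ y ∈ Finset.Ico (x - ℓ) (x + ℓ), bondOp L J g τ y = (J : ℂ) • hopOp L y := by
    intro y hy
    have hy' := Finset.mem_Ico.1 hy
    rw [bondOp, hτB y (Finset.mem_Icc.2 (by omega)), hopOp]
    simp
  rw [hdef, comm_add_lie, comm_sum_lie, comm_sum_lie, hbonds, hpot, secondQuant_hopKernel, comm_add_lie, comm_sum_lie,
    comm_sum_lie, comm_sum_lie, Finset.sum_congr rfl fun y hy => by rw [hfree y hy]]
  abel

/-- with `B = {x−ℓ,…,x+ℓ}`, `τ ≡ 0` on the bonds of `B`, and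
`(ψ_k)_{k∈B}` an orthonormal basis of eigenvectors of the restricted one-particle
Hamiltonian `𝓗̃_B`, define `N_L = Σ_{y∈B, y<x} n_y`,
`Ñ_L = Σ_{y∈B, y<x} Σ_{k∈B} ψ_k(y)² n_k` and `u = N_L − Ñ_L`.  Then
`i[H, u] = j_{x−1} + i[H_{∂B}, u]`, where `j_{x−1} = iJ(c_x† c_{x−1} − c_{x−1}† c_x)`
and `H_{∂B} = Σ_{y∈{x−ℓ−1, x+ℓ}} ( J (c_y† c_{y+1} + c_{y+1}† c_y) + g τ_y n_y n_{y+1})`. -/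
theorem fermion_poisson_identity (L : ℕ) (J g : ℝ) (hJ : 0 < J) (hg : 0 ≤ g)
    (ω τ : ℕ → ℝ) (hτ01 : ∀ y, τ y = 0 ∨ τ y = 1)
    (x ℓ : ℕ) (hℓ : 1 ≤ ℓ) (hx : ℓ + 1 ≤ x) (hxL : x + ℓ + 2 ≤ L)
    (hτB : ∀ y ∈ Finset.Icc (x - ℓ) (x + ℓ - 1), τ y = 0)
    (ψ : ℕ → ℕ → ℝ) (ν : ℕ → ℝ)
    (horth : ∀ k ∈ Finset.Icc (x - ℓ) (x + ℓ), ∀ k' ∈ Finset.Icc (x - ℓ) (x + ℓ),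
      ∑ y ∈ Finset.Icc (x - ℓ) (x + ℓ), ψ k y * ψ k' y = if k = k' then 1 else 0)
    (heig : ∀ k ∈ Finset.Icc (x - ℓ) (x + ℓ), ∀ y ∈ Finset.Icc (x - ℓ) (x + ℓ),
      ∑ z ∈ Finset.Icc (x - ℓ) (x + ℓ),
          (if y = z then ω y else if y + 1 = z ∨ z + 1 = y then J else 0) * ψ k z
        = ν k * ψ k y) :
    Complex.I •
        (fermionH L J g ω τ *
            ((∑ y ∈ Finset.Ico (x - ℓ) x, numOp L y)
              - ∑ y ∈ Finset.Ico (x - ℓ) x, ∑ k ∈ Finset.Icc (x - ℓ) (x + ℓ),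
                  (((ψ k y) ^ 2 : ℝ) : ℂ) • modeNum L (Finset.Icc (x - ℓ) (x + ℓ)) (ψ k))
          - ((∑ y ∈ Finset.Ico (x - ℓ) x, numOp L y)
              - ∑ y ∈ Finset.Ico (x - ℓ) x, ∑ k ∈ Finset.Icc (x - ℓ) (x + ℓ),
                  (((ψ k y) ^ 2 : ℝ) : ℂ) • modeNum L (Finset.Icc (x - ℓ) (x + ℓ)) (ψ k)) *
            fermionH L J g ω τ)
      = Complex.I • ((J : ℂ) • ((jwA L x)ᴴ * jwA L (x - 1) - (jwA L (x - 1))ᴴ * jwA L x))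
        + Complex.I •
            ((∑ y ∈ ({x - ℓ - 1, x + ℓ} : Finset ℕ),
                  ((J : ℂ) • ((jwA L y)ᴴ * jwA L (y + 1) + (jwA L (y + 1))ᴴ * jwA L y)
                    + ((g * τ y : ℝ) : ℂ) • (numOp L y * numOp L (y + 1)))) *
                ((∑ y ∈ Finset.Ico (x - ℓ) x, numOp L y)
                  - ∑ y ∈ Finset.Ico (x - ℓ) x, ∑ k ∈ Finset.Icc (x - ℓ) (x + ℓ),
                      (((ψ k y) ^ 2 : ℝ) : ℂ) •
                        modeNum L (Finset.Icc (x - ℓ) (x + ℓ)) (ψ k))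
              - ((∑ y ∈ Finset.Ico (x - ℓ) x, numOp L y)
                  - ∑ y ∈ Finset.Ico (x - ℓ) x, ∑ k ∈ Finset.Icc (x - ℓ) (x + ℓ),
                      (((ψ k y) ^ 2 : ℝ) : ℂ) •
                        modeNum L (Finset.Icc (x - ℓ) (x + ℓ)) (ψ k)) *
                (∑ y ∈ ({x - ℓ - 1, x + ℓ} : Finset ℕ),
                  ((J : ℂ) • ((jwA L y)ᴴ * jwA L (y + 1) + (jwA L (y + 1))ᴴ * jwA L y)
                    + ((g * τ y : ℝ) : ℂ) • (numOp L y * numOp L (y + 1))))) := by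
  have h := lie_fermionH_poissonU L J g ω τ x ℓ hℓ hx hxL hτB ψ
  rw [lie_block_poissonU L J ω x ℓ hℓ hx hxL ψ ν heig, Ring.lie_def, Ring.lie_def, currOp,
    Nat.sub_add_cancel (by omega : 1 ≤ x)] at h
  have h' := congrArg (fun M => Complex.I • M) h
  simp only [smul_add] at h'
  simpa only [poissonU, bondOp, smul_add] using h'
end
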